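/- Under Assumptions A1, A2 and A3, for every compact set A ⊂ ℝ^d, almost surely sup_{x∈A} |q_n(x) − f(x)| → 0 as n → ∞; that is, the policy densities produced by the algorithm converge to the target density uniformly on compact sets, almost surely. -/

import Mathlib

open MeasureTheory Filter Metric
open scoped Topology ENNReal NNReal

noncomputable def kb {d : ℕ} (K : EuclideanSpace ℝ (Fin d) → ℝ) (b : ℝ)
    (x : EuclideanSpace ℝ (Fin d)) : ℝ :=
  (b ^ d)⁻¹ * K (b⁻¹ • x)

def natFilt {Ω : Type*} {d : ℕ} (X : ℕ → Ω → EuclideanSpace ℝ (Fin d)) (n : ℕ) :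
    MeasurableSpace Ω :=
  ⨆ i ∈ Finset.Icc 1 n, MeasurableSpace.comap (X i) inferInstance

/-!
The estimate `g n x` is a discounted average of the importance weights `(f / q) ^ η` of the sampled
points against the kernel at `x`. Truncated at a suitable level, the weights obey a Freedman-type
inequality with relative error, and along finite nets this gives, uniformly on compact sets, that
the average is close to the discounted average of the smoothed conditional means, which are the
densities `f ^ η * q ^ (1 - η)`. From then on a single trajectory is studied.

The power `1 - η < 1` of `q` makes small values grow faster than they are forgotten, so the policy
escapes from `0` on a ball, the mass of the estimate stays away from `0`, and the policy dominates a
multiple of `q₀` large enough that the truncation is inactive. A local bound `v ≤ q` improves to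
`a ^ η * v ^ (1 - η) ≤ q` for `a < f`, up to the normalizing mass; the mass is asymptotically at
most `1` by Hölder's inequality, and since `a` is the fixed point of the iteration, the lower limit
of `q` is at least `f`. Fatou's lemma then bounds the mass from below by `1` in the limit, and the
same iteration, started from a local bound of the average, gives the upper limit.
-/

/-! ### Stochastic-approximation averages -/

/-- The factor by which the recursion `u (n + 1) = (1 - γ (n + 1)) * u n` discounts the value at
time `m` when it is observed at time `n`; it is `1` for `n ≤ m`. -/
def decay (γ : ℕ → ℝ) (m n : ℕ) : ℝ :=
  ∏ k ∈ Finset.Ioc m n, (1 - γ k)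

/-- The solution of `u (n + 1) = (1 - γ (n + 1)) * u n + γ (n + 1) * ξ n` with `u m = 0`. The input
`ξ n` is indexed by the time just before the update, as the policy of the algorithm is. -/
def expAvg (γ : ℕ → ℝ) (m : ℕ) (ξ : ℕ → ℝ) (n : ℕ) : ℝ :=
  ∑ k ∈ Finset.Ico m n, decay γ (k + 1) n * γ (k + 1) * ξ k

section ExpAvg

variable {γ ξ ζ u : ℕ → ℝ} {m n N : ℕ} {C : ℝ}

@[simp]
lemma decay_self : decay γ m m = 1 := by
  simp [decay]

lemma decay_succ (h : m ≤ n) : decay γ m (n + 1) = (1 - γ (n + 1)) * decay γ m n := by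
  rw [decay, ← Finset.insert_Ioc_right_eq_Ioc_add_one h, Finset.prod_insert (by simp), decay]

lemma decay_mul_decay (hmN : m ≤ N) (hNn : N ≤ n) :
    decay γ m N * decay γ N n = decay γ m n :=
  Finset.prod_Ioc_consecutive _ hmN hNn

lemma decay_pos (hγ : ∀ n, m ≤ n → γ n < 1) (n : ℕ) : 0 < decay γ m n :=
  Finset.prod_pos fun k hk => by linarith [hγ k (Finset.mem_Ioc.1 hk).1.le]

lemma decay_le_one (hγ0 : ∀ n, 0 ≤ γ n) (hγ1 : ∀ n, m ≤ n → γ n < 1) (n : ℕ) :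
    decay γ m n ≤ 1 :=
  Finset.prod_le_one (fun k hk => by linarith [hγ1 k (Finset.mem_Ioc.1 hk).1.le])
    fun k _ => by linarith [hγ0 k]

/-- `γ` itself decays at most as fast as the discount, because `γ n * (1 - γ (n + 1)) ≤ γ (n + 1)`
is the induction step. -/
lemma decay_le_div (hγ0 : ∀ n, 0 < γ n) (hγ1 : ∀ n, m ≤ n → γ n < 1)
    (hγ : ∀ n, m ≤ n → γ n * (1 - γ (n + 1)) ≤ γ (n + 1)) (hmn : m ≤ n) :
    decay γ m n ≤ γ n / γ m := by
  induction n, hmn using Nat.le_induction with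
  | base => rw [div_self (hγ0 m).ne', decay_self]
  | succ n hmn ih =>
    have h1 : 0 ≤ 1 - γ (n + 1) := by linarith [hγ1 (n + 1) (by omega)]
    calc decay γ m (n + 1) = (1 - γ (n + 1)) * decay γ m n := decay_succ hmn
      _ ≤ (1 - γ (n + 1)) * (γ n / γ m) := by gcongr
      _ = γ n * (1 - γ (n + 1)) / γ m := by ring
      _ ≤ γ (n + 1) / γ m := div_le_div_of_nonneg_right (hγ n hmn) (hγ0 m).le

@[simp]
lemma expAvg_self : expAvg γ m ξ m = 0 := by
  simp [expAvg]

lemma expAvg_of_le (h : n ≤ m) : expAvg γ m ξ n = 0 := by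
  simp [expAvg, h]

lemma expAvg_succ (h : m ≤ n) :
    expAvg γ m ξ (n + 1) = (1 - γ (n + 1)) * expAvg γ m ξ n + γ (n + 1) * ξ n := by
  rw [expAvg, Finset.sum_Ico_succ_top h, decay_self, one_mul, expAvg, Finset.mul_sum]
  congr 1
  refine Finset.sum_congr rfl fun k hk => ?_
  rw [decay_succ (Nat.succ_le_of_lt (Finset.mem_Ico.1 hk).2)]
  ring

lemma expAvg_sub (n : ℕ) :
    expAvg γ m (fun k => ξ k - ζ k) n = expAvg γ m ξ n - expAvg γ m ζ n := by
  simp only [expAvg, mul_sub, Finset.sum_sub_distrib]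

lemma expAvg_const (C : ℝ) (h : m ≤ n) :
    expAvg γ m (fun _ => C) n = C * (1 - decay γ m n) := by
  induction n, h using Nat.le_induction with
  | base => simp
  | succ n hn ih => rw [expAvg_succ hn, decay_succ hn, ih]; ring

lemma expAvg_mono (hγ0 : ∀ n, 0 ≤ γ n) (hγ1 : ∀ n, m ≤ n → γ n < 1)
    (h : ∀ k, m ≤ k → k < n → ξ k ≤ ζ k) : expAvg γ m ξ n ≤ expAvg γ m ζ n := by
  refine Finset.sum_le_sum fun k hk => ?_
  obtain ⟨hmk, hkn⟩ := Finset.mem_Ico.1 hk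
  have hd := decay_pos (m := k + 1) (fun i hi => hγ1 i (by omega)) n
  exact mul_le_mul_of_nonneg_left (h k hmk hkn) (mul_nonneg hd.le (hγ0 _))

lemma expAvg_nonneg (hγ0 : ∀ n, 0 ≤ γ n) (hγ1 : ∀ n, m ≤ n → γ n < 1)
    (h : ∀ k, m ≤ k → k < n → 0 ≤ ξ k) : 0 ≤ expAvg γ m ξ n := by
  simpa [expAvg] using expAvg_mono (ξ := fun _ => 0) hγ0 hγ1 h

lemma expAvg_le (hγ0 : ∀ n, 0 ≤ γ n) (hγ1 : ∀ n, m ≤ n → γ n < 1) (hC : 0 ≤ C)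
    (h : ∀ k, m ≤ k → k < n → ξ k ≤ C) : expAvg γ m ξ n ≤ C := by
  rcases le_total n m with hnm | hmn
  · rwa [expAvg_of_le hnm]
  · have hle := expAvg_mono (ζ := fun _ => C) hγ0 hγ1 h
    rw [expAvg_const C hmn] at hle
    nlinarith [decay_pos hγ1 n]

lemma abs_expAvg_sub_expAvg_le (hγ0 : ∀ n, 0 ≤ γ n) (hγ1 : ∀ n, m ≤ n → γ n < 1) (hC : 0 ≤ C)
    (h : ∀ k, m ≤ k → k < n → |ξ k - ζ k| ≤ C) :
    |expAvg γ m ξ n - expAvg γ m ζ n| ≤ C := by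
  rw [abs_sub_le_iff, ← expAvg_sub, ← expAvg_sub]
  exact ⟨expAvg_le hγ0 hγ1 hC fun k h1 h2 => (le_abs_self _).trans (h k h1 h2),
    expAvg_le hγ0 hγ1 hC fun k h1 h2 => by
      rw [← neg_sub]; exact (neg_le_abs _).trans (h k h1 h2)⟩

lemma le_add_decay_mul (hγ : ∀ n, m ≤ n → γ n < 1)
    (hu : ∀ n, m ≤ n → u (n + 1) ≤ (1 - γ (n + 1)) * u n + γ (n + 1) * C) (hmn : m ≤ n) :
    u n ≤ C + decay γ m n * (u m - C) := by
  induction n, hmn using Nat.le_induction with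
  | base => simp
  | succ n hmn ih =>
    have h1 : 0 ≤ 1 - γ (n + 1) := by linarith [hγ (n + 1) (by omega)]
    calc u (n + 1) ≤ (1 - γ (n + 1)) * u n + γ (n + 1) * C := hu n hmn
      _ ≤ (1 - γ (n + 1)) * (C + decay γ m n * (u m - C)) + γ (n + 1) * C := by gcongr
      _ = C + decay γ m (n + 1) * (u m - C) := by rw [decay_succ hmn]; ring

lemma add_decay_mul_le (hγ : ∀ n, m ≤ n → γ n < 1)
    (hu : ∀ n, m ≤ n → (1 - γ (n + 1)) * u n + γ (n + 1) * C ≤ u (n + 1)) (hmn : m ≤ n) :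
    C + decay γ m n * (u m - C) ≤ u n := by
  have h := le_add_decay_mul (u := fun n => -u n) (C := -C) hγ
    (fun n hn => by linarith [hu n hn]) hmn
  linarith

lemma decay_mul_le (hγ : ∀ n, m ≤ n → γ n < 1)
    (hu : ∀ n, m ≤ n → (1 - γ (n + 1)) * u n ≤ u (n + 1)) (hmn : m ≤ n) :
    decay γ m n * u m ≤ u n := by
  simpa using add_decay_mul_le (C := 0) hγ (by simpa using hu) hmn

lemma mul_one_sub_decay_le (hγ0 : ∀ n, 0 ≤ γ n) (hγ : ∀ n, m ≤ n → γ n < 1) (hζ : Antitone ζ)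
    (hum : 0 ≤ u m) (hu : ∀ n, m ≤ n → (1 - γ (n + 1)) * u n + γ (n + 1) * ζ n ≤ u (n + 1))
    (hmn : m ≤ n) : ζ n * (1 - decay γ m n) ≤ u n := by
  induction n, hmn using Nat.le_induction with
  | base => simpa using hum
  | succ n hmn ih =>
    have h1 : 0 ≤ 1 - γ (n + 1) := by linarith [hγ (n + 1) (by omega)]
    have h2 : 0 ≤ 1 - decay γ m (n + 1) := by linarith [decay_le_one hγ0 hγ (n + 1)]
    calc ζ (n + 1) * (1 - decay γ m (n + 1)) ≤ ζ n * (1 - decay γ m (n + 1)) := by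
          gcongr
          exact hζ n.le_succ
      _ = (1 - γ (n + 1)) * (ζ n * (1 - decay γ m n)) + γ (n + 1) * ζ n := by
          rw [decay_succ hmn]
          ring
      _ ≤ (1 - γ (n + 1)) * u n + γ (n + 1) * ζ n := by gcongr
      _ ≤ u (n + 1) := hu n hmn

lemma eq_decay_mul (hu : ∀ n, m ≤ n → u (n + 1) = (1 - γ (n + 1)) * u n) (hmn : m ≤ n) :
    u n = decay γ m n * u m := by
  induction n, hmn using Nat.le_induction with
  | base => simp
  | succ n hmn ih => rw [hu n hmn, ih, decay_succ hmn, mul_assoc]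

end ExpAvg

/-! ### Rescaled kernels -/

section Kernel

variable {d : ℕ} {K : EuclideanSpace ℝ (Fin d) → ℝ} {b : ℝ}

lemma kb_nonneg (hK : ∀ x, 0 ≤ K x) (hb : 0 ≤ b) (z : EuclideanSpace ℝ (Fin d)) :
    0 ≤ kb K b z :=
  mul_nonneg (inv_nonneg.2 (pow_nonneg hb d)) (hK _)

lemma kb_le {M : ℝ} (hK : ∀ x, K x ≤ M) (hb : 0 ≤ b) (z : EuclideanSpace ℝ (Fin d)) :
    kb K b z ≤ M / b ^ d := by
  rw [kb, div_eq_inv_mul]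
  exact mul_le_mul_of_nonneg_left (hK _) (inv_nonneg.2 (pow_nonneg hb d))

lemma continuous_kb (hK : Continuous K) (b : ℝ) : Continuous (kb K b) :=
  continuous_const.mul (hK.comp (continuous_const_smul _))

lemma abs_kb_sub_kb_le {L : ℝ≥0} (hK : LipschitzWith L K) (hb : 0 < b)
    (z z' : EuclideanSpace ℝ (Fin d)) :
    |kb K b z - kb K b z'| ≤ L / b ^ (d + 1) * ‖z - z'‖ := by
  have hdist : ‖b⁻¹ • z - b⁻¹ • z'‖ = b⁻¹ * ‖z - z'‖ := by
    rw [← smul_sub, norm_smul, Real.norm_of_nonneg (by positivity)]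
  calc |kb K b z - kb K b z'| = (b ^ d)⁻¹ * |K (b⁻¹ • z) - K (b⁻¹ • z')| := by
        rw [kb, kb, ← mul_sub, abs_mul, abs_of_pos (by positivity)]
    _ ≤ (b ^ d)⁻¹ * (L * (b⁻¹ * ‖z - z'‖)) := by
        rw [← hdist]
        gcongr
        exact hK.norm_sub_le _ _
    _ = L / b ^ (d + 1) * ‖z - z'‖ := by rw [pow_succ]; field_simp

lemma integrable_kb (hK : Integrable K) (hb : 0 < b) : Integrable (kb K b) :=
  (hK.comp_smul (inv_ne_zero hb.ne')).const_mul _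

lemma integral_kb (hb : 0 < b) : ∫ z, kb K b z = ∫ z, K z := by
  simp only [kb]
  rw [integral_const_mul, Measure.integral_comp_inv_smul_of_nonneg _ _ hb.le]
  simp only [finrank_euclideanSpace, Fintype.card_fin, smul_eq_mul]
  field_simp

lemma integral_kb_sub_right (hb : 0 < b) (x : EuclideanSpace ℝ (Fin d)) :
    ∫ y, kb K b (y - x) = ∫ z, K z := by
  rw [integral_sub_right_eq_self (kb K b) x, integral_kb hb]

lemma setIntegral_ball_kb_sub_left (hb : 0 < b) (x : EuclideanSpace ℝ (Fin d)) (r : ℝ) :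
    ∫ y in ball x r, kb K b (x - y) = ∫ z in ball 0 (r / b), K z := by
  have hmem (y) : b⁻¹ • (x - y) ∈ ball (0 : EuclideanSpace ℝ (Fin d)) (r / b) ↔ y ∈ ball x r := by
    rw [mem_ball_zero_iff, mem_ball, norm_smul, Real.norm_of_nonneg (by positivity),
      dist_eq_norm, norm_sub_rev, inv_mul_eq_div, div_lt_div_iff_of_pos_right hb]
  have hind : (ball x r).indicator (fun y => kb K b (x - y))
      = fun y => kb ((ball 0 (r / b)).indicator K) b (x - y) := by
    funext y
    by_cases hy : y ∈ ball x r
    · simp only [Set.indicator_of_mem hy, kb, Set.indicator_of_mem ((hmem y).2 hy)]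
    · simp only [Set.indicator_of_notMem hy, kb, Set.indicator_of_notMem (mt (hmem y).1 hy),
        mul_zero]
  rw [← integral_indicator measurableSet_ball, hind,
    integral_sub_left_eq_self (kb ((ball 0 (r / b)).indicator K) b) volume x, integral_kb hb,
    integral_indicator measurableSet_ball]

lemma eventually_le_setIntegral_ball_kb (hK : Integrable K) {r v : ℝ} (hr : 0 < r)
    (hv : v < ∫ z, K z) :
    ∀ᶠ b in 𝓝[>] 0, ∀ x, v ≤ ∫ y in ball x r, kb K b (x - y) := by
  have hball : Tendsto (fun t : ℝ => ∫ z in ball 0 t, K z) atTop (𝓝 (∫ z, K z)) := by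
    have h := tendsto_setIntegral_of_monotone
      (s := fun t : ℝ => ball (0 : EuclideanSpace ℝ (Fin d)) t) (fun t => measurableSet_ball)
      (fun s t hst => ball_subset_ball hst) hK.integrableOn
    have hunion : ⋃ t : ℝ, ball (0 : EuclideanSpace ℝ (Fin d)) t = Set.univ :=
      Set.eq_univ_of_forall fun z => Set.mem_iUnion.2 ⟨‖z‖ + 1, by simp⟩
    rwa [hunion, setIntegral_univ] at h
  have hdiv : Tendsto (fun b : ℝ => r / b) (𝓝[>] 0) atTop :=
    tendsto_inv_nhdsGT_zero.const_mul_atTop hr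
  filter_upwards [(hball.comp hdiv).eventually (lt_mem_nhds hv), self_mem_nhdsWithin]
    with b hbv hb x
  rw [setIntegral_ball_kb_sub_left hb]
  exact hbv.le

lemma kb_le_of_le_norm {p C δ : ℝ} (hK : ∀ x, 0 ≤ K x) (hp : 0 < p)
    (hKtail : ∀ x, (1 + ‖x‖ ^ ((d : ℝ) + p)) * K x ≤ C) (hb : 0 < b) (hδ : 0 < δ)
    {z : EuclideanSpace ℝ (Fin d)} (hz : δ ≤ ‖z‖) :
    kb K b z ≤ C * δ ^ (-((d : ℝ) + p)) * b ^ p := by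
  have hKz := hK (b⁻¹ • z)
  have hscaled : (b⁻¹ * δ) ^ ((d : ℝ) + p) * K (b⁻¹ • z) ≤ C := by
    refine le_trans ?_ (hKtail (b⁻¹ • z))
    have hle : (b⁻¹ * δ) ^ ((d : ℝ) + p) ≤ ‖b⁻¹ • z‖ ^ ((d : ℝ) + p) := by
      rw [norm_smul, Real.norm_of_nonneg (by positivity)]
      gcongr
    exact mul_le_mul_of_nonneg_right (by linarith) hKz
  rw [Real.mul_rpow (by positivity) hδ.le, Real.inv_rpow hb.le, Real.rpow_add hb,
    Real.rpow_natCast] at hscaled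
  rw [Real.rpow_neg hδ.le]
  have : 0 < δ ^ ((d : ℝ) + p) := by positivity
  have : 0 < b ^ p := by positivity
  calc kb K b z = ((b ^ d * b ^ p)⁻¹ * δ ^ ((d : ℝ) + p) * K (b⁻¹ • z))
          * (δ ^ ((d : ℝ) + p))⁻¹ * b ^ p := by
        rw [kb]; field_simp
    _ ≤ C * (δ ^ ((d : ℝ) + p))⁻¹ * b ^ p := by gcongr

lemma exists_ball_subset_closedBall_inter_ball {E : Type*} [NormedAddCommGroup E]
    [NormedSpace ℝ E] {x₀ x : E} {R s : ℝ} (hs : 0 < s) (hsR : s ≤ R) (hx : x ∈ closedBall x₀ R) :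
    ∃ z, ball z s ⊆ closedBall x₀ R ∩ ball x (2 * s) := by
  have hR : 0 < R := hs.trans_le hsR
  have hsR1 : s / R ≤ 1 := (div_le_one hR).2 hsR
  rw [mem_closedBall_iff_norm] at hx
  refine ⟨x + (s / R) • (x₀ - x), fun y hy => ?_⟩
  rw [mem_ball_iff_norm] at hy
  have hmul : s / R * R = s := div_mul_cancel₀ s hR.ne'
  have hzx : ‖x + (s / R) • (x₀ - x) - x‖ ≤ s := by
    rw [add_sub_cancel_left, norm_smul, Real.norm_of_nonneg (by positivity), norm_sub_rev]
    calc s / R * ‖x - x₀‖ ≤ s / R * R := by gcongr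
      _ = s := hmul
  have hzx₀ : ‖x + (s / R) • (x₀ - x) - x₀‖ ≤ R - s := by
    rw [show x + (s / R) • (x₀ - x) - x₀ = (1 - s / R) • (x - x₀) by module, norm_smul,
      Real.norm_of_nonneg (by linarith)]
    calc (1 - s / R) * ‖x - x₀‖ ≤ (1 - s / R) * R :=
          mul_le_mul_of_nonneg_left hx (by linarith)
      _ = R - s := by rw [sub_mul, one_mul, hmul]
  constructor
  · rw [mem_closedBall_iff_norm]
    linarith [norm_sub_le_norm_sub_add_norm_sub y (x + (s / R) • (x₀ - x)) x₀]
  · rw [mem_ball_iff_norm]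
    linarith [norm_sub_le_norm_sub_add_norm_sub y (x + (s / R) • (x₀ - x)) x]

lemma le_setIntegral_closedBall_kb {m s R : ℝ} {x₀ x : EuclideanSpace ℝ (Fin d)}
    (hK : ∀ x, 0 ≤ K x) (hKint : Integrable K) (hKm : ∀ z, ‖z‖ < 2 * s → m ≤ K z)
    (hb : 0 < b) (hs : 0 < s) (hsR : s * b ≤ R) (hx : x ∈ closedBall x₀ R) :
    m * s ^ d * volume.real (ball (0 : EuclideanSpace ℝ (Fin d)) 1)
      ≤ ∫ y in closedBall x₀ R, kb K b (x - y) := by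
  obtain ⟨z, hz⟩ := exists_ball_subset_closedBall_inter_ball (mul_pos hs hb) hsR hx
  have hint : Integrable fun y => kb K b (x - y) := (integrable_kb hKint hb).comp_sub_left x
  calc m * s ^ d * volume.real (ball (0 : EuclideanSpace ℝ (Fin d)) 1)
      = ∫ _ in ball z (s * b), (b ^ d)⁻¹ * m := by
        rw [setIntegral_const, measureReal_def, measureReal_def,
          Measure.addHaar_ball_of_pos _ z (mul_pos hs hb)]
        simp only [finrank_euclideanSpace, Fintype.card_fin, smul_eq_mul, ENNReal.toReal_mul]
        rw [ENNReal.toReal_ofReal (by positivity), mul_pow]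
        field_simp
    _ ≤ ∫ y in ball z (s * b), kb K b (x - y) := by
        refine setIntegral_mono_on (integrableOn_const (by finiteness)) hint.integrableOn
          measurableSet_ball fun y hy => ?_
        have hxy := mem_ball_iff_norm.1 (hz hy).2
        refine mul_le_mul_of_nonneg_left (hKm _ ?_) (by positivity)
        rw [norm_smul, Real.norm_of_nonneg (by positivity), inv_mul_lt_iff₀ hb, norm_sub_rev]
        linarith
    _ ≤ ∫ y in closedBall x₀ R, kb K b (x - y) :=
        setIntegral_mono_set hint.integrableOn
          (Eventually.of_forall fun y => kb_nonneg hK hb.le _)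
          (Eventually.of_forall fun _ hy => (hz hy).1)

lemma exists_forall_eventually_le_setIntegral_closedBall_kb (hK : ∀ x, 0 ≤ K x)
    (hKint : Integrable K) (hKcont : ContinuousAt K 0) (hK0 : 0 < K 0) :
    ∃ κ > 0, ∀ R > 0, ∀ᶠ b in 𝓝[>] 0, ∀ x₀ x, x ∈ closedBall x₀ R →
      κ ≤ ∫ y in closedBall x₀ R, kb K b (x - y) := by
  obtain ⟨r, hr, hKr⟩ := Metric.eventually_nhds_iff.1
    (hKcont.eventually (lt_mem_nhds (half_lt_self hK0)))
  have hvol : 0 < volume.real (ball (0 : EuclideanSpace ℝ (Fin d)) 1) :=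
    ENNReal.toReal_pos (measure_ball_pos _ _ one_pos).ne' measure_ball_lt_top.ne
  refine ⟨K 0 / 2 * (r / 2) ^ d * volume.real (ball (0 : EuclideanSpace ℝ (Fin d)) 1),
    by positivity, fun R hR => ?_⟩
  filter_upwards [self_mem_nhdsWithin,
    nhdsWithin_le_nhds (gt_mem_nhds (show 0 < R / (r / 2) by positivity))] with b hb hbR x₀ x hx
  refine le_setIntegral_closedBall_kb hK hKint (fun z hz => (hKr ?_).le) hb (half_pos hr)
    (by rw [lt_div_iff₀ (half_pos hr)] at hbR; linarith) hx
  rw [dist_zero_right]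
  linarith

end Kernel

/-! ### Conditional densities -/

/-- `p ω` is, for almost every `ω`, a probability density with respect to `ν` of the conditional
law of `Y` given `m`, tested against bounded continuous functions as in the description of the
algorithm. -/
structure HasCondDensity {Ω E : Type*} (m : MeasurableSpace Ω) {mΩ : MeasurableSpace Ω}
    [TopologicalSpace E] [MeasurableSpace E] (Y : Ω → E) (p : Ω → E → ℝ) (ν : Measure E)
    (μ : Measure Ω) : Prop where
  measurable : Measurable[m.prod inferInstance] (Function.uncurry p)
  ae_nonneg : ∀ᵐ ω ∂μ, ∀ y, 0 ≤ p ω y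
  ae_integral_eq_one : ∀ᵐ ω ∂μ, ∫ y, p ω y ∂ν = 1
  condExp_eq : ∀ φ : BoundedContinuousFunction E ℝ,
    μ[fun ω => φ (Y ω) | m] =ᵐ[μ] fun ω => ∫ y, φ y * p ω y ∂ν

namespace HasCondDensity

variable {Ω E : Type*} {m mΩ : MeasurableSpace Ω} [TopologicalSpace E] [MeasurableSpace E]
  {Y : Ω → E} {p : Ω → E → ℝ} {ν : Measure E} {μ : Measure Ω}

lemma measurable_uncurry (h : HasCondDensity m Y p ν μ) (hm : m ≤ mΩ) :
    Measurable (Function.uncurry p) :=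
  h.measurable.mono (sup_le_sup (MeasurableSpace.comap_mono hm) le_rfl) le_rfl

lemma integrable_uncurry [IsFiniteMeasure μ] [SFinite ν] (h : HasCondDensity m Y p ν μ)
    (hm : m ≤ mΩ) : Integrable (Function.uncurry p) (μ.prod ν) := by
  refine (integrable_prod_iff (h.measurable_uncurry hm).aestronglyMeasurable).2 ⟨?_, ?_⟩
  · filter_upwards [h.ae_integral_eq_one] with ω hω
    exact Integrable.of_integral_ne_zero (by simp [hω])
  · refine (integrable_const 1).congr ?_
    filter_upwards [h.ae_nonneg, h.ae_integral_eq_one] with ω hω hω1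
    simp only [Function.uncurry_apply_pair, Real.norm_of_nonneg (hω _), hω1]

lemma ae_nonneg_uncurry [SFinite ν] (h : HasCondDensity m Y p ν μ)
    (hm : m ≤ mΩ) : ∀ᵐ z ∂(μ.prod ν), 0 ≤ Function.uncurry p z := by
  rw [Measure.ae_prod_iff_ae_ae (measurableSet_le measurable_const (h.measurable_uncurry hm))]
  filter_upwards [h.ae_nonneg] with ω hω using .of_forall hω

lemma setIntegral_comp_eq [IsFiniteMeasure μ] [OpensMeasurableSpace E]
    (h : HasCondDensity m Y p ν μ) (hm : m ≤ mΩ) (hY : Measurable Y) {S : Set Ω}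
    (hS : MeasurableSet[m] S) (φ : BoundedContinuousFunction E ℝ) :
    ∫ ω in S, φ (Y ω) ∂μ = ∫ ω in S, ∫ y, φ y * p ω y ∂ν ∂μ := by
  have hint : Integrable (fun ω => φ (Y ω)) μ :=
    .of_bound (φ.continuous.measurable.comp hY).aestronglyMeasurable ‖φ‖
      (.of_forall fun ω => φ.norm_coe_le_norm _)
  rw [← setIntegral_condExp hm hint hS]
  exact setIntegral_congr_ae (hm S hS) ((h.condExp_eq φ).mono fun ω hω _ => hω)

/-- The measure on `Ω × E` with density `p`; on sets measurable for `m` and `Y` it is the law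
of `(ω, Y ω)`. -/
noncomputable def joint (p : Ω → E → ℝ) (ν : Measure E) (μ : Measure Ω) : Measure (Ω × E) :=
  (μ.prod ν).withDensity fun z => ENNReal.ofReal (Function.uncurry p z)

lemma isFiniteMeasure_joint [IsFiniteMeasure μ] [SFinite ν] (h : HasCondDensity m Y p ν μ)
    (hm : m ≤ mΩ) : IsFiniteMeasure (joint p ν μ) :=
  isFiniteMeasure_withDensity_ofReal (h.integrable_uncurry hm).2

lemma measure_inter_preimage_eq_joint [IsFiniteMeasure μ] [SFinite ν] [BorelSpace E]
    [HasOuterApproxClosed E] (h : HasCondDensity m Y p ν μ) (hm : m ≤ mΩ) (hY : Measurable Y)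
    {S : Set Ω} (hS : MeasurableSet[m] S) {C : Set E} (hC : MeasurableSet C) :
    μ (S ∩ Y ⁻¹' C) = joint p ν μ (S ×ˢ C) := by
  have hS' : MeasurableSet S := hm S hS
  have := h.isFiniteMeasure_joint hm
  have hlaw : (μ.restrict S).map Y = ((joint p ν μ).restrict (S ×ˢ Set.univ)).map Prod.snd := by
    refine ext_of_forall_integral_eq_of_IsFiniteMeasure fun φ => ?_
    have hφ : Measurable φ := φ.continuous.measurable
    rw [integral_map hY.aemeasurable hφ.aestronglyMeasurable,
      integral_map measurable_snd.aemeasurable hφ.aestronglyMeasurable,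
      h.setIntegral_comp_eq hm hY hS φ, joint,
      setIntegral_withDensity_eq_setIntegral_toReal_smul
        (h.measurable_uncurry hm).ennreal_ofReal (.of_forall fun _ => ENNReal.ofReal_lt_top)
        _ (hS'.prod .univ)]
    have hint : Integrable (fun z : Ω × E => φ z.2 * Function.uncurry p z) (μ.prod ν) :=
      (h.integrable_uncurry hm).bdd_mul (hφ.comp measurable_snd).aestronglyMeasurable
        (.of_forall fun z => φ.norm_coe_le_norm z.2)
    calc ∫ ω in S, ∫ y, φ y * p ω y ∂ν ∂μ
        = ∫ z in S ×ˢ Set.univ, φ z.2 * Function.uncurry p z ∂(μ.prod ν) := by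
          rw [setIntegral_prod _ hint.integrableOn]
          simp only [Measure.restrict_univ, Function.uncurry_apply_pair]
      _ = _ := by
          refine setIntegral_congr_ae (hS'.prod .univ) ?_
          filter_upwards [h.ae_nonneg_uncurry hm] with z hz _
          rw [ENNReal.toReal_ofReal hz, smul_eq_mul, mul_comm]
  calc μ (S ∩ Y ⁻¹' C) = (μ.restrict S).map Y C := by
        rw [Measure.map_apply hY hC, Measure.restrict_apply (hY hC), Set.inter_comm]
    _ = joint p ν μ (S ×ˢ C) := by
        rw [hlaw, Measure.map_apply measurable_snd hC, Measure.restrict_apply (measurable_snd hC)]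
        congr 1
        ext z
        simp only [Set.mem_inter_iff, Set.mem_preimage, Set.mem_prod, Set.mem_univ, and_true]
        exact and_comm

lemma lintegral_comp_eq [IsFiniteMeasure μ] [SFinite ν] [BorelSpace E] [HasOuterApproxClosed E]
    (h : HasCondDensity m Y p ν μ) (hm : m ≤ mΩ) (hY : Measurable Y) {u : Ω → E → ℝ≥0∞}
    (hu : Measurable[m.prod inferInstance] (Function.uncurry u)) :
    ∫⁻ ω, u ω (Y ω) ∂μ = ∫⁻ ω, ∫⁻ y, u ω y * ENNReal.ofReal (p ω y) ∂ν ∂μ := by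
  have hprod : m.prod inferInstance ≤ mΩ.prod (inferInstance : MeasurableSpace E) :=
    sup_le_sup (MeasurableSpace.comap_mono hm) le_rfl
  have hgraph : Measurable fun ω => (ω, Y ω) := measurable_id.prodMk hY
  have hlaw : (μ.map fun ω => (ω, Y ω)).trim hprod = (joint p ν μ).trim hprod := by
    refine Measure.ext_prod (mα := m) fun {S C} hS hC => ?_
    have hSC := MeasurableSet.prod hS hC
    rw [trim_measurableSet_eq hprod hSC, trim_measurableSet_eq hprod hSC,
      ← h.measure_inter_preimage_eq_joint hm hY hS hC,
      Measure.map_apply hgraph (hprod _ hSC)]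
    rfl
  have hp := (h.measurable_uncurry hm).ennreal_ofReal
  have hu' : Measurable (Function.uncurry u) := hu.mono hprod le_rfl
  calc ∫⁻ ω, u ω (Y ω) ∂μ = ∫⁻ z, Function.uncurry u z ∂(μ.map fun ω => (ω, Y ω)) :=
        (lintegral_map hu' hgraph).symm
    _ = ∫⁻ z, Function.uncurry u z ∂(joint p ν μ) := by
        rw [← lintegral_trim hprod hu, hlaw, lintegral_trim hprod hu]
    _ = ∫⁻ ω, ∫⁻ y, u ω y * ENNReal.ofReal (p ω y) ∂ν ∂μ := by
        rw [joint, lintegral_withDensity_eq_lintegral_mul _ hp hu', lintegral_prod _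
          (hp.mul hu').aemeasurable]
        simp only [Pi.mul_apply, Function.uncurry_apply_pair, mul_comm]

end HasCondDensity

lemma nonneg_of_forall_integral_bump_mul_nonneg {E : Type*} [MetricSpace E] [ProperSpace E]
    [MeasurableSpace E] [BorelSpace E] {ν : Measure E} [IsFiniteMeasureOnCompacts ν]
    [ν.IsOpenPosMeasure] {h : E → ℝ} (hc : Continuous h) {D : Set E} (hD : Dense D)
    (hh : ∀ c ∈ D, ∀ j : ℕ, 0 ≤ ∫ y, max 0 (1 / ((j : ℝ) + 1) - dist y c) * h y ∂ν) (y : E) :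
    0 ≤ h y := by
  by_contra! hneg
  obtain ⟨r, hr, hball⟩ := Metric.isOpen_iff.1 (isOpen_lt hc continuous_const) y hneg
  obtain ⟨c, hcD, hcy⟩ := hD.exists_dist_lt y (half_pos hr)
  obtain ⟨j, hj⟩ := exists_nat_one_div_lt (half_pos hr)
  set φ : E → ℝ := fun z => max 0 (1 / ((j : ℝ) + 1) - dist z c)
  have hφc : Continuous φ := by fun_prop
  have hφout : ∀ z ∉ ball y r, φ z = 0 := fun z hz => by
    rw [mem_ball, not_lt] at hz
    exact max_eq_left (by linarith [dist_triangle_right z y c])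
  have hsupp : HasCompactSupport fun z => -(φ z * h z) :=
    .intro (isCompact_closedBall y r) fun z hz => by
      simp [hφout z fun hz' => hz (ball_subset_closedBall hz')]
  have hle : 0 ≤ fun z => -(φ z * h z) := fun z => by
    by_cases hz : z ∈ ball y r
    · exact neg_nonneg.2 (mul_nonpos_of_nonneg_of_nonpos (le_max_left _ _) (hball hz).le)
    · simp [hφout z hz]
  have hcpos : -(φ c * h c) ≠ 0 := by
    have hcr : c ∈ ball y r := by rw [mem_ball, dist_comm]; linarith
    have hφcpos : 0 < φ c := lt_max_of_lt_right (by rw [dist_self, sub_zero]; positivity)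
    exact neg_ne_zero.2 (mul_neg_of_pos_of_neg hφcpos (hball hcr)).ne
  have hpos : 0 < ∫ z, -(φ z * h z) ∂ν :=
    (hφc.mul hc).neg.integral_pos_of_hasCompactSupport_nonneg_nonzero hsupp hle hcpos
  rw [integral_neg] at hpos
  linarith [hh c hcD j]

/-! ### Truncated weights -/

/-- The importance weight `v` truncated at level `t` and regularized by the power `η`. -/
noncomputable def truncPow (η t v : ℝ) : ℝ := min v t ^ η

/-- The density `f ^ η * q ^ (1 - η)` of the regularized importance weights under sampling
from `q`, truncated at level `t`. -/
noncomputable def temperedDensity {E : Type*} (η t : ℝ) (f q : E → ℝ) (y : E) : ℝ :=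
  truncPow η t (f y / q y) * q y

section TruncatedWeights

variable {η t v : ℝ}

lemma truncPow_nonneg (ht : 0 ≤ t) (hv : 0 ≤ v) : 0 ≤ truncPow η t v :=
  Real.rpow_nonneg (le_min hv ht) η

lemma truncPow_le_level (hη : 0 ≤ η) (ht : 0 ≤ t) (hv : 0 ≤ v) : truncPow η t v ≤ t ^ η :=
  Real.rpow_le_rpow (le_min hv ht) (min_le_right _ _) hη

lemma truncPow_le_rpow (hη : 0 ≤ η) (ht : 0 ≤ t) (hv : 0 ≤ v) : truncPow η t v ≤ v ^ η :=
  Real.rpow_le_rpow (le_min hv ht) (min_le_left _ _) hη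

lemma truncPow_of_le (hv : v ≤ t) : truncPow η t v = v ^ η := by
  rw [truncPow, min_eq_left hv]

lemma measurable_truncPow (η t : ℝ) : Measurable (truncPow η t) := by
  unfold truncPow; fun_prop

lemma div_rpow_mul_self (hη : η < 1) {a q : ℝ} (ha : 0 ≤ a) (hq : 0 ≤ q) :
    (a / q) ^ η * q = a ^ η * q ^ (1 - η) := by
  rcases hq.eq_or_lt with rfl | hq
  · rw [Real.zero_rpow (sub_pos.2 hη).ne', mul_zero, mul_zero]
  · rw [Real.div_rpow ha hq.le, Real.rpow_sub hq, Real.rpow_one]; ring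

variable {E : Type*} {f q : E → ℝ} {y : E}

lemma temperedDensity_nonneg (ht : 0 ≤ t) (hf : 0 ≤ f y) (hq : 0 ≤ q y) :
    0 ≤ temperedDensity η t f q y :=
  mul_nonneg (truncPow_nonneg ht (div_nonneg hf hq)) hq

lemma temperedDensity_le_level_mul (hη : 0 ≤ η) (ht : 0 ≤ t) (hf : 0 ≤ f y) (hq : 0 ≤ q y) :
    temperedDensity η t f q y ≤ t ^ η * q y :=
  mul_le_mul_of_nonneg_right (truncPow_le_level hη ht (div_nonneg hf hq)) hq

lemma temperedDensity_le_rpow_mul_rpow (hη : 0 ≤ η) (hη1 : η < 1) (ht : 0 ≤ t) (hf : 0 ≤ f y)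
    (hq : 0 ≤ q y) : temperedDensity η t f q y ≤ f y ^ η * q y ^ (1 - η) := by
  rw [← div_rpow_mul_self hη1 hf hq]
  exact mul_le_mul_of_nonneg_right (truncPow_le_rpow hη ht (div_nonneg hf hq)) hq

lemma temperedDensity_le_add (hη : 0 ≤ η) (hη1 : η < 1) (ht : 0 ≤ t) (hf : 0 ≤ f y)
    (hq : 0 ≤ q y) : temperedDensity η t f q y ≤ η * f y + (1 - η) * q y :=
  (temperedDensity_le_rpow_mul_rpow hη hη1 ht hf hq).trans <|
    Real.geom_mean_le_arith_mean2_weighted hη (sub_pos.2 hη1).le hf hq (by ring)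

lemma temperedDensity_eq_of_le (hη1 : η < 1) (hf : 0 ≤ f y) (hq : 0 ≤ q y)
    (h : f y / q y ≤ t) : temperedDensity η t f q y = f y ^ η * q y ^ (1 - η) := by
  rw [temperedDensity, truncPow_of_le h, div_rpow_mul_self hη1 hf hq]

variable [MeasurableSpace E]

lemma measurable_temperedDensity (η t : ℝ) (hf : Measurable f) (hq : Measurable q) :
    Measurable (temperedDensity η t f q) :=
  ((measurable_truncPow η t).comp (hf.div hq)).mul hq

variable {ν : Measure E}

lemma integrable_temperedDensity (hη : 0 ≤ η) (ht : 0 ≤ t) (hf : Measurable f)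
    (hf0 : ∀ y, 0 ≤ f y) (hq : Measurable q) (hq0 : ∀ y, 0 ≤ q y) (hqi : Integrable q ν) :
    Integrable (temperedDensity η t f q) ν := by
  refine (hqi.const_mul (t ^ η)).mono' (measurable_temperedDensity η t hf hq).aestronglyMeasurable
    (.of_forall fun y => ?_)
  rw [Real.norm_of_nonneg (temperedDensity_nonneg ht (hf0 y) (hq0 y))]
  exact temperedDensity_le_level_mul hη ht (hf0 y) (hq0 y)

lemma integral_temperedDensity_le_one (hη : 0 ≤ η) (hη1 : η < 1) (ht : 0 ≤ t)
    (hf0 : ∀ y, 0 ≤ f y) (hf1 : ∫ y, f y ∂ν = 1) (hq0 : ∀ y, 0 ≤ q y) (hq1 : ∫ y, q y ∂ν = 1) :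
    ∫ y, temperedDensity η t f q y ∂ν ≤ 1 := by
  have hfi : Integrable f ν := .of_integral_ne_zero (by simp [hf1])
  have hqi : Integrable q ν := .of_integral_ne_zero (by simp [hq1])
  calc ∫ y, temperedDensity η t f q y ∂ν ≤ ∫ y, (η * f y + (1 - η) * q y) ∂ν :=
        integral_mono_of_nonneg (.of_forall fun y => temperedDensity_nonneg ht (hf0 y) (hq0 y))
          ((hfi.const_mul _).add (hqi.const_mul _))
          (.of_forall fun y => temperedDensity_le_add hη hη1 ht (hf0 y) (hq0 y))
    _ = 1 := by
        rw [integral_add (hfi.const_mul _) (hqi.const_mul _), integral_const_mul,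
          integral_const_mul, hf1, hq1]
        ring

end TruncatedWeights

/-! ### Multiplicative deviation bounds -/

lemma exp_mul_le_one_add_mul {s ε z : ℝ} (hs : s = 1 ∨ s = -1) (hε : ε ≤ 1) (hz : 0 ≤ z)
    (hzε : z ≤ ε) : Real.exp (s * z) ≤ 1 + (s + ε) * z := by
  have habs : |s * z| ≤ 1 := by
    rcases hs with rfl | rfl <;> simp [abs_of_nonneg hz, hzε.trans hε]
  have hsq : (s * z) ^ 2 = z ^ 2 := by rcases hs with rfl | rfl <;> ring
  have htaylor := (abs_le.1 (Real.abs_exp_sub_one_sub_id_le habs)).2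
  nlinarith [mul_le_mul_of_nonneg_right hzε hz]

lemma integral_mul_exp_le_one {E : Type*} [MeasurableSpace E] {ν : Measure E} {p u : E → ℝ}
    (hp : ∀ y, 0 ≤ p y) (hp1 : ∫ y, p y ∂ν = 1) {B s ε θ : ℝ} (hu : Measurable u)
    (hu0 : ∀ y, 0 ≤ u y) (huB : ∀ y, u y ≤ B) (hs : s = 1 ∨ s = -1) (hε : ε ≤ 1) (hθ : 0 ≤ θ)
    (hθB : θ * B ≤ ε) :
    ∫⁻ y, ENNReal.ofReal (Real.exp (θ * (s * u y - (s + ε) * ∫ z, u z * p z ∂ν)))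
      * ENNReal.ofReal (p y) ∂ν ≤ 1 := by
  set J := ∫ z, u z * p z ∂ν
  have hpint : Integrable p ν := .of_integral_ne_zero (by simp [hp1])
  have huint : Integrable (fun y => u y * p y) ν :=
    hpint.bdd_mul hu.aestronglyMeasurable
      (.of_forall fun y => by rw [Real.norm_of_nonneg (hu0 y)]; exact huB y)
  set a := (s + ε) * θ
  have hpt : ∀ y, Real.exp (θ * (s * u y - (s + ε) * J)) * p y
      ≤ Real.exp (-(a * J)) * (p y + a * (u y * p y)) := fun y => by
    have hexp := exp_mul_le_one_add_mul (z := θ * u y) hs hε (mul_nonneg hθ (hu0 y))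
      ((mul_le_mul_of_nonneg_left (huB y) hθ).trans hθB)
    calc Real.exp (θ * (s * u y - (s + ε) * J)) * p y
        = Real.exp (-(a * J)) * (Real.exp (s * (θ * u y)) * p y) := by
          rw [← mul_assoc, ← Real.exp_add]; congr 2; ring
      _ ≤ Real.exp (-(a * J)) * ((1 + (s + ε) * (θ * u y)) * p y) := by
          gcongr; exact hp y
      _ = Real.exp (-(a * J)) * (p y + a * (u y * p y)) := by ring
  have hint : Integrable (fun y => Real.exp (-(a * J)) * (p y + a * (u y * p y))) ν :=
    (hpint.add (huint.const_mul _)).const_mul _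
  calc _ = ∫⁻ y, ENNReal.ofReal (Real.exp (θ * (s * u y - (s + ε) * J)) * p y) ∂ν := by
        simp only [ENNReal.ofReal_mul (Real.exp_pos _).le]
    _ ≤ ∫⁻ y, ENNReal.ofReal (Real.exp (-(a * J)) * (p y + a * (u y * p y))) ∂ν :=
        lintegral_mono fun y => ENNReal.ofReal_le_ofReal (hpt y)
    _ = ENNReal.ofReal (∫ y, Real.exp (-(a * J)) * (p y + a * (u y * p y)) ∂ν) :=
        (ofReal_integral_eq_lintegral_ofReal hint (.of_forall fun y =>
          (mul_nonneg (Real.exp_pos _).le (hp y)).trans (hpt y))).symm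
    _ = ENNReal.ofReal (Real.exp (-(a * J)) * (1 + a * J)) := by
        rw [integral_const_mul, integral_add hpint (huint.const_mul _), integral_const_mul, hp1]
    _ ≤ 1 := by
        rw [← ENNReal.ofReal_one]
        refine ENNReal.ofReal_le_ofReal ?_
        calc Real.exp (-(a * J)) * (1 + a * J) ≤ Real.exp (-(a * J)) * Real.exp (a * J) := by
              gcongr; linarith [Real.add_one_le_exp (a * J)]
          _ = 1 := by rw [← Real.exp_add, neg_add_cancel, Real.exp_zero]

lemma measurable_integral_mul {Ω E : Type*} {_ : MeasurableSpace Ω} [MeasurableSpace E]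
    {ν : Measure E} [SFinite ν] {u p : Ω → E → ℝ} (hu : Measurable (Function.uncurry u))
    (hp : Measurable (Function.uncurry p)) : Measurable fun ω => ∫ y, u ω y * p ω y ∂ν :=
  ((hu.mul hp).stronglyMeasurable.integral_prod_right' (ν := ν)).measurable

lemma HasCondDensity.lintegral_mul_exp_le {Ω E : Type*} {m mΩ : MeasurableSpace Ω}
    [TopologicalSpace E] [MeasurableSpace E] [BorelSpace E] [HasOuterApproxClosed E]
    {Y : Ω → E} {p : Ω → E → ℝ} {ν : Measure E} {μ : Measure Ω} [IsFiniteMeasure μ] [SFinite ν]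
    (h : HasCondDensity m Y p ν μ) (hm : m ≤ mΩ) (hY : Measurable Y) {u : Ω → E → ℝ}
    (hu : Measurable[m.prod inferInstance] (Function.uncurry u)) {B s ε θ : ℝ}
    (huB : ∀ᵐ ω ∂μ, ∀ y, 0 ≤ u ω y ∧ u ω y ≤ B) {Z : Ω → ℝ≥0∞} (hZ : Measurable[m] Z)
    (hs : s = 1 ∨ s = -1) (hε : ε ≤ 1) (hθ : 0 ≤ θ) (hθB : θ * B ≤ ε) :
    ∫⁻ ω, Z ω * ENNReal.ofReal (Real.exp (θ * (s * u ω (Y ω)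
      - (s + ε) * ∫ y, u ω y * p ω y ∂ν))) ∂μ ≤ ∫⁻ ω, Z ω ∂μ := by
  have hmeas : Measurable[m.prod inferInstance] (Function.uncurry fun (ω : Ω) (y : E) =>
      Z ω * ENNReal.ofReal (Real.exp (θ * (s * u ω y - (s + ε) * ∫ z, u ω z * p ω z ∂ν)))) := by
    have hJ : Measurable[m.prod inferInstance] fun z : Ω × E => ∫ y, u z.1 y * p z.1 y ∂ν :=
      (measurable_integral_mul hu h.measurable).comp (@measurable_fst Ω E m _)
    have hexp := ((hu.const_mul s).sub (hJ.const_mul (s + ε))).const_mul θ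
    exact (hZ.comp (@measurable_fst Ω E m _)).mul
      (Real.measurable_exp.comp hexp).ennreal_ofReal
  rw [h.lintegral_comp_eq hm hY hmeas]
  refine lintegral_mono_ae ?_
  filter_upwards [h.ae_nonneg, h.ae_integral_eq_one, huB] with ω hp hp1 huB
  have huω : Measurable (u ω) := Measurable.of_uncurry_left (m := m) hu
  have hpω : Measurable (p ω) := Measurable.of_uncurry_left (m := m) h.measurable
  simp only [mul_assoc]
  rw [lintegral_const_mul _ (by fun_prop)]
  exact mul_le_of_le_one_right' (integral_mul_exp_le_one hp hp1 huω (fun y => (huB y).1)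
    (fun y => (huB y).2) hs hε hθ hθB)

section ExponentialAverages

variable {Ω E : Type*} {mΩ : MeasurableSpace Ω} [MeasurableSpace E] {ℱ : Filtration ℕ mΩ}
  {Y : ℕ → Ω → E} {p u : ℕ → Ω → E → ℝ} {ν : Measure E} {μ : Measure Ω} {γ B : ℕ → ℝ} {m : ℕ}

lemma measurable_expAvg {ξ : ℕ → Ω → ℝ} (hξ : ∀ k, m ≤ k → Measurable[ℱ (k + 1)] (ξ k))
    (n : ℕ) : Measurable[ℱ n] fun ω => expAvg γ m (fun k => ξ k ω) n := by
  refine Finset.measurable_fun_sum _ fun k hk => ?_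
  obtain ⟨hmk, hkn⟩ := Finset.mem_Ico.1 hk
  exact ((hξ k hmk).mono (ℱ.mono hkn) le_rfl).const_mul _

lemma measurable_expAvg_comp (hY : ∀ k, m ≤ k → Measurable[ℱ (k + 1)] (Y (k + 1)))
    (hu : ∀ k, m ≤ k → Measurable[(ℱ k).prod inferInstance] (Function.uncurry (u k))) (n : ℕ) :
    Measurable[ℱ n] fun ω => expAvg γ m (fun k => u k ω (Y (k + 1) ω)) n :=
  measurable_expAvg (fun k hk => (hu k hk).comp <|
    (measurable_id'' (ℱ.mono k.le_succ)).prodMk (hY k hk)) n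

lemma measurable_expAvg_integral_mul [SFinite ν]
    (hu : ∀ k, m ≤ k → Measurable[(ℱ k).prod inferInstance] (Function.uncurry (u k)))
    (hp : ∀ k, m ≤ k → Measurable[(ℱ k).prod inferInstance] (Function.uncurry (p k))) (n : ℕ) :
    Measurable[ℱ n] fun ω => expAvg γ m (fun k => ∫ y, u k ω y * p k ω y ∂ν) n :=
  measurable_expAvg (fun k hk =>
    (measurable_integral_mul (hu k hk) (hp k hk)).mono (ℱ.mono k.le_succ) le_rfl) n

variable [TopologicalSpace E] [BorelSpace E] [HasOuterApproxClosed E] [IsProbabilityMeasure μ]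
  [SFinite ν]

-- The exponential supermartingale of Freedman's inequality; the admissible `θ` shrinks along the
-- recursion at the same rate `1 - γ` as the average itself.
lemma lintegral_exp_expAvg_le_one
    (hY : ∀ k, m ≤ k → Measurable[ℱ (k + 1)] (Y (k + 1)))
    (hp : ∀ k, m ≤ k → HasCondDensity (ℱ k) (Y (k + 1)) (p k) ν μ)
    (hu : ∀ k, m ≤ k → Measurable[(ℱ k).prod inferInstance] (Function.uncurry (u k)))
    (huB : ∀ k, m ≤ k → ∀ᵐ ω ∂μ, ∀ y, 0 ≤ u k ω y ∧ u k ω y ≤ B (k + 1))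
    (hγ0 : ∀ n, 0 ≤ γ n) (hγ1 : ∀ n, m ≤ n → γ n ≤ 1)
    (hγB : ∀ n, m ≤ n → (1 - γ (n + 1)) * (γ n * B n) ≤ γ (n + 1) * B (n + 1))
    {s ε : ℝ} (hs : s = 1 ∨ s = -1) (hε : ε ≤ 1) {n : ℕ} (hn : m ≤ n) {θ : ℝ} (hθ : 0 ≤ θ)
    (hθB : θ * (γ n * B n) ≤ ε) :
    ∫⁻ ω, ENNReal.ofReal (Real.exp (θ * (s * expAvg γ m (fun k => u k ω (Y (k + 1) ω)) n
      - (s + ε) * expAvg γ m (fun k => ∫ y, u k ω y * p k ω y ∂ν) n))) ∂μ ≤ 1 := by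
  induction n, hn using Nat.le_induction generalizing θ with
  | base => simp only [expAvg_self, mul_zero, sub_zero, Real.exp_zero, ENNReal.ofReal_one,
      lintegral_const, measure_univ, mul_one, le_refl]
  | succ n hn ih =>
    have hγn : 0 ≤ 1 - γ (n + 1) := sub_nonneg.2 (hγ1 _ (by omega))
    set S : Ω → ℝ := fun ω => expAvg γ m (fun k => u k ω (Y (k + 1) ω)) n
    set T : Ω → ℝ := fun ω => expAvg γ m (fun k => ∫ y, u k ω y * p k ω y ∂ν) n
    set Z : Ω → ℝ≥0∞ := fun ω => ENNReal.ofReal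
      (Real.exp (θ * (1 - γ (n + 1)) * (s * S ω - (s + ε) * T ω)))
    have hZ : Measurable[ℱ n] Z := by
      have hS : Measurable[ℱ n] S := measurable_expAvg_comp hY hu n
      have hT : Measurable[ℱ n] T :=
        measurable_expAvg_integral_mul hu (fun k hk => (hp k hk).measurable) n
      exact (Real.measurable_exp.comp
        (((hS.const_mul s).sub (hT.const_mul (s + ε))).const_mul _)).ennreal_ofReal
    calc _ = ∫⁻ ω, Z ω * ENNReal.ofReal (Real.exp (θ * γ (n + 1) * (s * u n ω (Y (n + 1) ω)
            - (s + ε) * ∫ y, u n ω y * p n ω y ∂ν))) ∂μ := by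
          refine lintegral_congr fun ω => ?_
          rw [expAvg_succ hn, expAvg_succ hn, ← ENNReal.ofReal_mul (Real.exp_pos _).le,
            ← Real.exp_add]
          congr 2
          ring
      _ ≤ ∫⁻ ω, Z ω ∂μ :=
          (hp n hn).lintegral_mul_exp_le (ℱ.le n) ((hY n hn).mono (ℱ.le _) le_rfl) (hu n hn)
            (huB n hn) hZ hs hε (mul_nonneg hθ (hγ0 _)) (by rwa [mul_assoc])
      _ ≤ 1 := by
          refine ih (mul_nonneg hθ hγn) ?_
          rw [mul_assoc]
          exact (mul_le_mul_of_nonneg_left (hγB n hn) hθ).trans hθB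

lemma measure_lt_expAvg_sub_expAvg_le
    (hY : ∀ k, m ≤ k → Measurable[ℱ (k + 1)] (Y (k + 1)))
    (hp : ∀ k, m ≤ k → HasCondDensity (ℱ k) (Y (k + 1)) (p k) ν μ)
    (hu : ∀ k, m ≤ k → Measurable[(ℱ k).prod inferInstance] (Function.uncurry (u k)))
    (huB : ∀ k, m ≤ k → ∀ᵐ ω ∂μ, ∀ y, 0 ≤ u k ω y ∧ u k ω y ≤ B (k + 1))
    (hγ0 : ∀ n, 0 < γ n) (hγ1 : ∀ n, m ≤ n → γ n ≤ 1) (hB : ∀ n, 0 < B n)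
    (hγB : ∀ n, m ≤ n → (1 - γ (n + 1)) * (γ n * B n) ≤ γ (n + 1) * B (n + 1))
    {s ε : ℝ} (hs : s = 1 ∨ s = -1) (hε0 : 0 ≤ ε) (hε : ε ≤ 1) {n : ℕ} (hn : m ≤ n) (τ : ℝ) :
    μ {ω | τ < s * expAvg γ m (fun k => u k ω (Y (k + 1) ω)) n
      - (s + ε) * expAvg γ m (fun k => ∫ y, u k ω y * p k ω y ∂ν) n}
      ≤ ENNReal.ofReal (Real.exp (-(ε / (γ n * B n) * τ))) := by
  have hγBn : 0 < γ n * B n := mul_pos (hγ0 n) (hB n)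
  set θ := ε / (γ n * B n)
  have hθ : 0 ≤ θ := div_nonneg hε0 hγBn.le
  set D : Ω → ℝ := fun ω => s * expAvg γ m (fun k => u k ω (Y (k + 1) ω)) n
      - (s + ε) * expAvg γ m (fun k => ∫ y, u k ω y * p k ω y ∂ν) n
  have hexp : ∫⁻ ω, ENNReal.ofReal (Real.exp (θ * D ω)) ∂μ ≤ 1 :=
    lintegral_exp_expAvg_le_one hY hp hu huB (fun n => (hγ0 n).le) hγ1 hγB hs hε hn hθ
      (div_mul_cancel₀ _ hγBn.ne').le
  have hD : Measurable D :=
    ((((measurable_expAvg_comp hY hu n).const_mul s).sub ((measurable_expAvg_integral_mul hu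
      (fun k hk => (hp k hk).measurable) n).const_mul (s + ε)))).mono (ℱ.le n) le_rfl
  have hmarkov := mul_meas_ge_le_lintegral (μ := μ)
    (Real.measurable_exp.comp (hD.const_mul θ)).ennreal_ofReal
    (ENNReal.ofReal (Real.exp (θ * τ)))
  calc μ {ω | τ < D ω}
      ≤ μ {ω | ENNReal.ofReal (Real.exp (θ * τ)) ≤ ENNReal.ofReal (Real.exp (θ * D ω))} :=
        measure_mono fun ω (hω : τ < D ω) => by
          change ENNReal.ofReal _ ≤ ENNReal.ofReal _
          gcongr
    _ ≤ ENNReal.ofReal (Real.exp (-(θ * τ))) := by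
        rw [Real.exp_neg, ENNReal.ofReal_inv_of_pos (Real.exp_pos _), ← one_div,
          ENNReal.le_div_iff_mul_le (.inl (ENNReal.ofReal_pos.2 (Real.exp_pos _)).ne')
            (.inl ENNReal.ofReal_ne_top), mul_comm]
        exact hmarkov.trans hexp

end ExponentialAverages

/-! ### Parameters of the algorithm -/

/-- The target `f`, the safe density `q₀`, the kernel `K` and the step sizes `γ`, bandwidths `b`
and mixture weights `lam` of the algorithm with exponent `η`, together with constants witnessing the
assumptions on them. From the burn-in time `n₀` on, all the sequences are small. -/
structure MidasParams (d : ℕ) where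
  η : ℝ
  f : EuclideanSpace ℝ (Fin d) → ℝ
  q₀ : EuclideanSpace ℝ (Fin d) → ℝ
  K : EuclideanSpace ℝ (Fin d) → ℝ
  γ : ℕ → ℝ
  b : ℕ → ℝ
  lam : ℕ → ℝ
  n₀ : ℕ
  c : ℝ
  F : ℝ
  Q : ℝ
  Km : ℝ
  L : ℝ≥0
  rK : ℝ
  CK : ℝ
  Cγ : ℝ
  η_pos : 0 < η
  η_lt_one : η < 1
  f_nonneg : ∀ x, 0 ≤ f x
  f_le : ∀ x, f x ≤ F
  continuous_f : Continuous f
  integral_f : ∫ x, f x = 1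
  q₀_nonneg : ∀ x, 0 ≤ q₀ x
  q₀_le : ∀ x, q₀ x ≤ Q
  continuous_q₀ : Continuous q₀
  integral_q₀ : ∫ x, q₀ x = 1
  c_pos : 0 < c
  c_mul_f_le : ∀ x, c * f x ≤ q₀ x
  K_nonneg : ∀ x, 0 ≤ K x
  K_le : ∀ x, K x ≤ Km
  K_zero_pos : 0 < K 0
  lipschitz_K : LipschitzWith L K
  integral_K : ∫ x, K x = 1
  rK_pos : 0 < rK
  K_tail : ∀ x, (1 + ‖x‖ ^ ((d : ℝ) + rK)) * K x ≤ CK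
  γ_pos : ∀ n, 0 < γ n
  b_pos : ∀ n, 0 < b n
  lam_pos : ∀ n, 0 < lam n
  antitone_b : Antitone b
  tendsto_b : Tendsto b atTop (𝓝 0)
  antitone_lam : Antitone lam
  tendsto_lam : Tendsto lam atTop (𝓝 0)
  inv_le_γ : ∀ n : ℕ, 1 ≤ n → (n : ℝ)⁻¹ ≤ Cγ * γ n
  tendsto_rate : Tendsto (fun n : ℕ => γ n * Real.log n / (lam n * b n ^ d)) atTop (𝓝 0)
  n₀_pos : 0 < n₀
  γ_le_half : ∀ n, n₀ ≤ n → γ n ≤ 1 / 2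
  lam_le_half : ∀ n, n₀ ≤ n → lam n ≤ 1 / 2
  b_le_one : ∀ n, n₀ ≤ n → b n ≤ 1
  γ_mul_le : ∀ n, n₀ ≤ n → γ n * (1 - γ (n + 1)) ≤ γ (n + 1)

namespace MidasParams

variable {d : ℕ} (P : MidasParams d) {m n k : ℕ} {e : ℝ}

lemma one_sub_η_pos : 0 < 1 - P.η :=
  sub_pos.2 P.η_lt_one

lemma γ_nonneg (n : ℕ) : 0 ≤ P.γ n :=
  (P.γ_pos n).le

lemma γ_lt_one (n : ℕ) (hn : P.n₀ ≤ n) : P.γ n < 1 := by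
  linarith [P.γ_le_half n hn]

lemma F_nonneg : 0 ≤ P.F :=
  (P.f_nonneg 0).trans (P.f_le 0)

lemma Q_nonneg : 0 ≤ P.Q :=
  (P.q₀_nonneg 0).trans (P.q₀_le 0)

lemma Km_pos : 0 < P.Km :=
  P.K_zero_pos.trans_le (P.K_le 0)

lemma Cγ_pos : 0 < P.Cγ :=
  pos_of_mul_pos_left (one_pos.trans_le (by simpa using P.inv_le_γ 1 le_rfl)) (P.γ_nonneg 1)

lemma CK_pos : 0 < P.CK :=
  (mul_pos (by positivity) P.K_zero_pos).trans_le (P.K_tail 0)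

lemma integrable_K : Integrable P.K :=
  integrable_of_integral_eq_one P.integral_K

lemma lam_rpow_pos (n : ℕ) : 0 < P.lam n ^ (1 - P.η) :=
  Real.rpow_pos_of_pos (P.lam_pos n) _

lemma lam_le_lam_rpow {s : ℝ} (hs : s ≤ 1) (hn : P.n₀ ≤ n) : P.lam n ≤ P.lam n ^ s := by
  conv_lhs => rw [← Real.rpow_one (P.lam n)]
  exact Real.rpow_le_rpow_of_exponent_ge (P.lam_pos n) (by linarith [P.lam_le_half n hn]) hs

lemma tendsto_γ_div : Tendsto (fun n => P.γ n / (P.lam n * P.b n ^ d)) atTop (𝓝 0) := by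
  have hpos n : 0 < P.lam n * P.b n ^ d := mul_pos (P.lam_pos n) (pow_pos (P.b_pos n) d)
  refine squeeze_zero' (.of_forall fun n => div_nonneg (P.γ_nonneg n) (hpos n).le) ?_
    P.tendsto_rate
  have hlog := (Real.tendsto_log_atTop.comp tendsto_natCast_atTop_atTop).eventually_ge_atTop 1
  filter_upwards [hlog] with n hn
  have := hpos n
  gcongr
  exact le_mul_of_one_le_right (P.γ_nonneg n) hn

lemma eventually_one_div_le : ∀ᶠ n : ℕ in atTop, 1 / (P.lam n * P.b n ^ d) ≤ P.Cγ * n := by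
  filter_upwards [P.tendsto_γ_div.eventually_le_const one_pos, eventually_ge_atTop 1]
    with n hrate hn
  have hpos : 0 < P.lam n * P.b n ^ d := mul_pos (P.lam_pos n) (pow_pos (P.b_pos n) d)
  have hγ := P.inv_le_γ n hn
  have := P.Cγ_pos
  rw [inv_eq_one_div, div_le_iff₀ (by exact_mod_cast hn)] at hγ
  rw [div_le_one hpos] at hrate
  rw [div_le_iff₀ hpos]
  calc 1 ≤ P.Cγ * P.γ n * n := hγ
    _ ≤ P.Cγ * (P.lam n * P.b n ^ d) * n := by gcongr
    _ = P.Cγ * n * (P.lam n * P.b n ^ d) := by ring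

lemma tendsto_decay_div_lam :
    Tendsto (fun n => decay P.γ P.n₀ n / P.lam n) atTop (𝓝 0) := by
  have hlim := P.tendsto_γ_div.div_const (P.γ P.n₀)
  rw [zero_div] at hlim
  refine squeeze_zero' (.of_forall fun n =>
    div_nonneg (decay_pos P.γ_lt_one n).le (P.lam_pos n).le) ?_ hlim
  filter_upwards [eventually_ge_atTop P.n₀] with n hn
  have hlam := P.lam_pos n
  have hb := P.b_pos n
  have hγ := P.γ_pos n
  have hγ₀ := P.γ_pos P.n₀
  calc decay P.γ P.n₀ n / P.lam n ≤ P.γ n / P.γ P.n₀ / P.lam n := by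
        gcongr
        exact decay_le_div P.γ_pos P.γ_lt_one P.γ_mul_le hn
    _ = P.γ n / (P.lam n * 1) / P.γ P.n₀ := by field_simp
    _ ≤ P.γ n / (P.lam n * P.b n ^ d) / P.γ P.n₀ := by
        gcongr
        exact pow_le_one₀ hb.le (P.b_le_one n hn)

lemma eventually_mul_decay_le_mul_lam (D : ℝ) (he : 0 < e) :
    ∀ᶠ n in atTop, D * decay P.γ P.n₀ n ≤ e * P.lam n := by
  have h := P.tendsto_decay_div_lam.const_mul D
  rw [mul_zero] at h
  filter_upwards [h.eventually_le_const he] with n hn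
  rwa [← mul_div_assoc, div_le_iff₀ (P.lam_pos n)] at hn

lemma eventually_mul_decay_le_mul_lam_rpow (D : ℝ) (he : 0 < e) :
    ∀ᶠ n in atTop, D * decay P.γ P.n₀ n ≤ e * P.lam n ^ (1 - P.η) := by
  filter_upwards [P.eventually_mul_decay_le_mul_lam D he, eventually_ge_atTop P.n₀] with n h hn
  exact h.trans (mul_le_mul_of_nonneg_left
    (P.lam_le_lam_rpow (by linarith [P.η_pos]) hn) he.le)

lemma eventually_mul_decay_le (D : ℝ) (he : 0 < e) :
    ∀ᶠ n in atTop, D * decay P.γ P.n₀ n ≤ e := by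
  filter_upwards [P.eventually_mul_decay_le_mul_lam D he, eventually_ge_atTop P.n₀] with n h hn
  exact h.trans (mul_le_of_le_one_right he.le (by linarith [P.lam_le_half n hn]))

/-- The level at which the importance weights are truncated at time `n`. It is chosen so that the
truncation is inactive as soon as the policy is at least `lam n / 2 * q₀`. -/
noncomputable def level (n : ℕ) : ℝ := 2 / P.c / P.lam n

/-- A uniform bound for truncated weights multiplied by a test kernel up to time `n`. -/
noncomputable def weightBound (n : ℕ) : ℝ :=
  P.level n ^ P.η * ((P.Km + 1) / P.b n ^ d)

/-- A Lipschitz constant, in the point `x`, for truncated weights multiplied by the smoothing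
kernel at `x` up to time `n`. -/
noncomputable def lipBound (n : ℕ) : ℝ :=
  P.level n ^ P.η * (P.L / P.b n ^ (d + 1))

/-- The smoothing kernel at `x` used in the update from time `k` to time `k + 1`. -/
noncomputable def kernelAt (x : EuclideanSpace ℝ (Fin d)) (k : ℕ)
    (y : EuclideanSpace ℝ (Fin d)) : ℝ :=
  kb P.K (P.b (k + 1)) (x - y)

/-- The kernels against which the fluctuations of the weights are controlled: the constant `1`, for
the total mass, and the smoothing kernels, for the values of the estimate. -/
structure IsTestKernel (κ : ℕ → EuclideanSpace ℝ (Fin d) → ℝ) : Prop where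
  measurable : ∀ k, Measurable (κ k)
  nonneg : ∀ k y, 0 ≤ κ k y
  le : ∀ k, P.n₀ ≤ k → ∀ y, κ k y ≤ (P.Km + 1) / P.b (k + 1) ^ d

lemma level_pos (n : ℕ) : 0 < P.level n :=
  div_pos (div_pos two_pos P.c_pos) (P.lam_pos n)

lemma monotone_level : Monotone P.level := fun m n h => by
  have hc := P.c_pos
  exact div_le_div_of_nonneg_left (by positivity) (P.lam_pos n) (P.antitone_lam h)

lemma weightBound_pos (n : ℕ) : 0 < P.weightBound n := by
  have := P.level_pos n
  have := P.Km_pos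
  have := P.b_pos n
  unfold weightBound
  positivity

lemma monotone_weightBound : Monotone P.weightBound := fun m n h => by
  have := P.level_pos m
  have := P.level_pos n
  have := P.Km_pos
  have := P.b_pos m
  have := P.b_pos n
  have := P.η_pos.le
  unfold weightBound
  gcongr
  · exact P.monotone_level h
  · exact P.antitone_b h

lemma lipBound_nonneg (n : ℕ) : 0 ≤ P.lipBound n := by
  have := P.level_pos n
  have := P.b_pos n
  unfold lipBound
  positivity

lemma level_rpow (n : ℕ) : P.level n ^ P.η = (2 / P.c) ^ P.η / P.lam n ^ P.η :=
  Real.div_rpow (div_pos two_pos P.c_pos).le (P.lam_pos n).le _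

lemma lam_rpow_div_weightBound (n : ℕ) :
    P.lam n ^ (1 - P.η) / P.weightBound n
      = P.lam n * P.b n ^ d / ((2 / P.c) ^ P.η * (P.Km + 1)) := by
  have := P.Km_pos
  have := P.b_pos n
  have := Real.rpow_pos_of_pos (P.lam_pos n) P.η
  have := Real.rpow_pos_of_pos (div_pos two_pos P.c_pos) P.η
  rw [weightBound, level_rpow, Real.rpow_sub (P.lam_pos n), Real.rpow_one]
  field_simp

lemma eventually_exp_le (p : ℕ) (he : 0 < e) : ∀ᶠ n : ℕ in atTop,
    Real.exp (-(e * P.lam n ^ (1 - P.η) / (P.γ n * P.weightBound n))) ≤ ((n : ℝ) ^ p)⁻¹ := by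
  have hKm := P.Km_pos
  have hc := Real.rpow_pos_of_pos (div_pos two_pos P.c_pos) P.η
  set D := (2 / P.c) ^ P.η * (P.Km + 1)
  have : 0 < D := by positivity
  filter_upwards [P.tendsto_rate.eventually_le_const (show 0 < e / D / (p + 1) by positivity),
    eventually_ge_atTop 1] with n hrate hn
  have hγ := P.γ_pos n
  have hlb : 0 < P.lam n * P.b n ^ d := mul_pos (P.lam_pos n) (pow_pos (P.b_pos n) d)
  have hn0 : (0 : ℝ) < n := by exact_mod_cast hn
  have hlog : 0 ≤ Real.log n := Real.log_nonneg (by exact_mod_cast hn)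
  have hexponent : e * P.lam n ^ (1 - P.η) / (P.γ n * P.weightBound n)
      = e / D * (P.lam n * P.b n ^ d) / P.γ n := by
    rw [mul_comm (P.γ n), ← div_div, mul_div_assoc, lam_rpow_div_weightBound]
    ring
  have hle : p * Real.log n ≤ e / D * (P.lam n * P.b n ^ d) / P.γ n := by
    rw [div_le_div_iff₀ hlb (by positivity)] at hrate
    rw [le_div_iff₀ hγ]
    nlinarith [mul_nonneg hγ.le hlog]
  rw [hexponent, ← Real.exp_log (pow_pos hn0 p), Real.log_pow, ← Real.exp_neg]
  exact Real.exp_le_exp.2 (neg_le_neg hle)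

lemma eventually_lipBound_mul_le (he : 0 < e) :
    ∀ᶠ n : ℕ in atTop, P.lipBound n * (d / (n : ℝ) ^ 5) ≤ e * P.lam n ^ (1 - P.η) := by
  rcases Nat.eq_zero_or_pos d with rfl | hd
  · exact .of_forall fun n => by simpa using mul_nonneg he.le (P.lam_rpow_pos n).le
  have hc := Real.rpow_pos_of_pos (div_pos two_pos P.c_pos) P.η
  set D := (2 / P.c) ^ P.η * P.L * P.Cγ ^ 2 * d
  have hlim : Tendsto (fun n : ℕ => D / (n : ℝ) ^ 3) atTop (𝓝 0) :=
    Tendsto.div_atTop tendsto_const_nhds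
      ((tendsto_pow_atTop (by norm_num)).comp tendsto_natCast_atTop_atTop)
  filter_upwards [P.eventually_one_div_le, eventually_ge_atTop P.n₀, eventually_ge_atTop 1,
    hlim.eventually_le_const he] with n hlb hn hn1 hsmall
  have hlam := P.lam_pos n
  have hb := P.b_pos n
  have : (0 : ℝ) < n := by exact_mod_cast hn1
  have hpow : P.b n ^ (2 * d) ≤ P.b n ^ (d + 1) :=
    pow_le_pow_of_le_one hb.le (P.b_le_one n hn) (by omega)
  have hlip : P.lipBound n ≤ (2 / P.c) ^ P.η * P.L * (P.Cγ * n) ^ 2 * P.lam n :=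
    calc P.lipBound n ≤ (2 / P.c) ^ P.η / P.lam n * (P.L / P.b n ^ (2 * d)) := by
          rw [lipBound, level_rpow]
          gcongr
          exact P.lam_le_lam_rpow P.η_lt_one.le hn
      _ = (2 / P.c) ^ P.η * P.L * (1 / (P.lam n * P.b n ^ d)) ^ 2 * P.lam n := by
          field_simp
          ring
      _ ≤ (2 / P.c) ^ P.η * P.L * (P.Cγ * n) ^ 2 * P.lam n := by gcongr
  calc P.lipBound n * (d / (n : ℝ) ^ 5)
      ≤ (2 / P.c) ^ P.η * P.L * (P.Cγ * n) ^ 2 * P.lam n * (d / (n : ℝ) ^ 5) := by gcongr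
    _ = D / (n : ℝ) ^ 3 * P.lam n := by
        simp only [D]
        field_simp
    _ ≤ e * P.lam n ^ (1 - P.η) :=
        mul_le_mul hsmall (P.lam_le_lam_rpow (by linarith [P.η_pos]) hn) hlam.le he.le

lemma div_le_level (n : ℕ) {v : ℝ} {y : EuclideanSpace ℝ (Fin d)}
    (hv : P.lam n / 2 * P.q₀ y ≤ v) : P.f y / v ≤ P.level n := by
  have hlam := P.lam_pos n
  have hc := P.c_pos
  have hfv : P.lam n / 2 * (P.c * P.f y) ≤ v := hv.trans' (by gcongr; exact P.c_mul_f_le y)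
  rcases (P.f_nonneg y).eq_or_lt with hf | hf
  · rw [← hf, zero_div]
    exact (P.level_pos n).le
  · rw [div_le_iff₀ (hfv.trans_lt' (by positivity))]
    calc P.f y = P.level n * (P.lam n / 2 * (P.c * P.f y)) := by
          rw [level]
          field_simp
      _ ≤ P.level n * v := mul_le_mul_of_nonneg_left hfv (P.level_pos n).le

lemma isTestKernel_one : P.IsTestKernel fun _ _ => 1 where
  measurable _ := measurable_const
  nonneg _ _ := zero_le_one
  le k hk _ := by
    have hb := P.b_pos (k + 1)
    rw [le_div_iff₀ (by positivity)]
    linarith [pow_le_one₀ (n := d) hb.le (P.b_le_one (k + 1) (by omega)), P.Km_pos]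

lemma continuous_kernelAt (x : EuclideanSpace ℝ (Fin d)) (k : ℕ) :
    Continuous (P.kernelAt x k) :=
  (continuous_kb P.lipschitz_K.continuous _).comp (by fun_prop)

lemma kernelAt_nonneg (x y : EuclideanSpace ℝ (Fin d)) (k : ℕ) : 0 ≤ P.kernelAt x k y :=
  kb_nonneg P.K_nonneg (P.b_pos _).le _

lemma integrable_kernelAt (x : EuclideanSpace ℝ (Fin d)) (k : ℕ) : Integrable (P.kernelAt x k) :=
  (integrable_kb P.integrable_K (P.b_pos _)).comp_sub_left x

lemma integral_kernelAt (x : EuclideanSpace ℝ (Fin d)) (k : ℕ) : ∫ y, P.kernelAt x k y = 1 :=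
  (integral_sub_left_eq_self _ _ x).trans ((integral_kb (P.b_pos _)).trans P.integral_K)

lemma isTestKernel_kernelAt (x : EuclideanSpace ℝ (Fin d)) : P.IsTestKernel (P.kernelAt x) where
  measurable k := (P.continuous_kernelAt x k).measurable
  nonneg k y := P.kernelAt_nonneg x y k
  le k _ y := by
    have hb := P.b_pos (k + 1)
    refine (kb_le P.K_le hb.le _).trans ?_
    gcongr
    linarith

variable {P} in
lemma IsTestKernel.truncPow_mul_le {κ : ℕ → EuclideanSpace ℝ (Fin d) → ℝ} (hκ : P.IsTestKernel κ)
    (hk : P.n₀ ≤ k) {v : ℝ} (hv : 0 ≤ v) (y : EuclideanSpace ℝ (Fin d)) :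
    truncPow P.η (P.level k) v * κ k y ≤ P.weightBound (k + 1) := by
  have hlevel := P.level_pos k
  have := P.η_pos.le
  exact mul_le_mul ((truncPow_le_level this hlevel.le hv).trans
    (Real.rpow_le_rpow hlevel.le (P.monotone_level k.le_succ) this)) (hκ.le k hk y)
    (hκ.nonneg k y) (Real.rpow_nonneg (P.level_pos _).le _)

lemma abs_mul_kernelAt_sub_kernelAt_le {x x' : EuclideanSpace ℝ (Fin d)} (hk : k < n) {a : ℝ}
    (ha : 0 ≤ a) (hlevel : a ≤ P.level k ^ P.η) (y : EuclideanSpace ℝ (Fin d)) :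
    |a * P.kernelAt x k y - a * P.kernelAt x' k y| ≤ P.lipBound n * ‖x - x'‖ := by
  have hb := P.b_pos n
  have hlevel₀ := (P.level_pos k).le
  rw [← mul_sub, abs_mul, abs_of_nonneg ha, lipBound, mul_assoc]
  have hkb := abs_kb_sub_kb_le P.lipschitz_K (P.b_pos (k + 1)) (x - y) (x' - y)
  rw [sub_sub_sub_cancel_right] at hkb
  refine mul_le_mul (hlevel.trans (Real.rpow_le_rpow hlevel₀ (P.monotone_level hk.le)
    P.η_pos.le)) (hkb.trans ?_) (abs_nonneg _) (Real.rpow_nonneg (P.level_pos n).le _)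
  gcongr
  exact P.antitone_b hk

end MidasParams

/-! ### Trajectories -/

/-- A trajectory of the algorithm: sampled points `X`, unnormalized estimates `g` and policies `q`
linked by the update rules. -/
structure MidasPath {d : ℕ} (P : MidasParams d) where
  X : ℕ → EuclideanSpace ℝ (Fin d)
  g : ℕ → EuclideanSpace ℝ (Fin d) → ℝ
  q : ℕ → EuclideanSpace ℝ (Fin d) → ℝ
  g_zero : ∀ x, g 0 x = 0
  g_succ : ∀ n x, g (n + 1) x = (1 - P.γ (n + 1)) * g n x + P.γ (n + 1) *
    ((P.f (X (n + 1)) / q n (X (n + 1))) ^ P.η * P.kernelAt x n (X (n + 1)))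
  q_succ : ∀ n x, q (n + 1) x =
    (1 - P.lam (n + 1)) * (g (n + 1) x / ∫ y, g (n + 1) y) + P.lam (n + 1) * P.q₀ x

namespace MidasPath

variable {d : ℕ} {P : MidasParams d} (p : MidasPath P) {m n k : ℕ}
  {κ : ℕ → EuclideanSpace ℝ (Fin d) → ℝ} {x : EuclideanSpace ℝ (Fin d)}

/-- The importance weight of the point sampled at time `n + 1`. -/
noncomputable def weight (n : ℕ) : ℝ := P.f (p.X (n + 1)) / p.q n (p.X (n + 1))

/-- The total mass by which the estimate is normalized. -/
noncomputable def mass (n : ℕ) : ℝ := ∫ x, p.g n x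

/-- The normalized estimate of the target. -/
noncomputable def estimate (n : ℕ) (x : EuclideanSpace ℝ (Fin d)) : ℝ := p.g n x / p.mass n

/-- The average, started at the burn-in time, of the truncated tempered weights multiplied by a test
kernel. -/
noncomputable def noisyAvg (κ : ℕ → EuclideanSpace ℝ (Fin d) → ℝ) (n : ℕ) : ℝ :=
  expAvg P.γ P.n₀ (fun k => truncPow P.η (P.level k) (p.weight k) * κ k (p.X (k + 1))) n

/-- The tempered density of the points sampled at time `n + 1`: their conditional density times the
tempered weight. -/
noncomputable abbrev tempered (n : ℕ) : EuclideanSpace ℝ (Fin d) → ℝ :=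
  temperedDensity P.η (P.level n) P.f (p.q n)

/-- The average in which each term of `noisyAvg` is replaced by its conditional expectation given
the past. -/
noncomputable def meanAvg (κ : ℕ → EuclideanSpace ℝ (Fin d) → ℝ) (n : ℕ) : ℝ :=
  expAvg P.γ P.n₀ (fun k => ∫ y, p.tempered k y * κ k y) n

lemma g_succ_eq (n : ℕ) : p.g (n + 1) = fun x => (1 - P.γ (n + 1)) * p.g n x +
    P.γ (n + 1) * (p.weight n ^ P.η * P.kernelAt x n (p.X (n + 1))) :=
  funext (p.g_succ n)

lemma q_eq (hn : 1 ≤ n) (x : EuclideanSpace ℝ (Fin d)) :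
    p.q n x = (1 - P.lam n) * p.estimate n x + P.lam n * P.q₀ x := by
  obtain ⟨m, rfl⟩ := Nat.exists_eq_add_of_le' hn
  exact p.q_succ m x

lemma continuous_g (n : ℕ) : Continuous (p.g n) := by
  induction n with
  | zero => simpa only [funext p.g_zero] using continuous_const
  | succ n ih =>
    have := continuous_kb P.lipschitz_K.continuous (P.b (n + 1))
    rw [g_succ_eq]
    unfold MidasParams.kernelAt
    fun_prop

lemma integrable_g (n : ℕ) : Integrable (p.g n) := by
  induction n with
  | zero =>
    rw [funext p.g_zero]
    exact integrable_zero _ _ _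
  | succ n ih =>
    rw [g_succ_eq]
    exact (ih.const_mul _).add
      ((((integrable_kb P.integrable_K (P.b_pos _)).comp_sub_right _).const_mul _).const_mul _)

lemma mass_succ (n : ℕ) : p.mass (n + 1)
    = (1 - P.γ (n + 1)) * p.mass n + P.γ (n + 1) * p.weight n ^ P.η := by
  have hk : Integrable fun x => P.kernelAt x n (p.X (n + 1)) :=
    (integrable_kb P.integrable_K (P.b_pos _)).comp_sub_right _
  have hk1 : ∫ x, P.kernelAt x n (p.X (n + 1)) = 1 :=
    (integral_kb_sub_right (P.b_pos _) _).trans P.integral_K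
  rw [mass, g_succ_eq, integral_add ((p.integrable_g n).const_mul _)
    ((hk.const_mul _).const_mul _), integral_const_mul, integral_const_mul, integral_const_mul,
    hk1, mul_one, mass]

lemma continuous_estimate (n : ℕ) : Continuous (p.estimate n) :=
  (p.continuous_g n).div_const _

lemma continuous_q (hn : 1 ≤ n) : Continuous (p.q n) := by
  have := p.continuous_estimate n
  have := P.continuous_q₀
  rw [funext (p.q_eq hn)]
  fun_prop

/-- The policies are probability densities, apart from the arbitrary initial one, which is only
required to integrate to one. -/
structure IsDensity : Prop where
  q_nonneg : ∀ n, 1 ≤ n → ∀ x, 0 ≤ p.q n x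
  integral_q : ∀ n, ∫ x, p.q n x = 1

/-- The noisy average of the test kernel `κ` is close to the mean one at time `n`, up to the
relative error `ε` and an absolute error small compared to `lam n ^ (1 - η)`. -/
def ConcentratesAt (κ : ℕ → EuclideanSpace ℝ (Fin d) → ℝ) (ε : ℝ) (n : ℕ) : Prop :=
  |p.noisyAvg κ n - p.meanAvg κ n| ≤ ε * (p.meanAvg κ n + P.lam n ^ (1 - P.η))

variable {p} (h : p.IsDensity)

namespace IsDensity

include h

lemma integrable_q (n : ℕ) : Integrable (p.q n) :=
  integrable_of_integral_eq_one (h.integral_q n)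

lemma q_nonneg' (hn : P.n₀ ≤ n) (x : EuclideanSpace ℝ (Fin d)) : 0 ≤ p.q n x :=
  h.q_nonneg n (P.n₀_pos.trans_le hn) x

lemma weight_nonneg (hn : P.n₀ ≤ n) : 0 ≤ p.weight n :=
  div_nonneg (P.f_nonneg _) (h.q_nonneg' hn _)

lemma tempered_nonneg (hn : P.n₀ ≤ n) (y : EuclideanSpace ℝ (Fin d)) :
    0 ≤ p.tempered n y :=
  temperedDensity_nonneg (P.level_pos n).le (P.f_nonneg y) (h.q_nonneg' hn y)

lemma integrable_tempered (hn : P.n₀ ≤ n) :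
    Integrable (p.tempered n) :=
  integrable_temperedDensity P.η_pos.le (P.level_pos n).le P.continuous_f.measurable P.f_nonneg
    (p.continuous_q (P.n₀_pos.trans_le hn)).measurable (h.q_nonneg' hn) (h.integrable_q n)

lemma integrable_tempered_mul (hκ : P.IsTestKernel κ) (hn : P.n₀ ≤ n) :
    Integrable fun y => p.tempered n y * κ n y :=
  (h.integrable_tempered hn).mul_bdd (hκ.measurable n).aestronglyMeasurable
    (.of_forall fun y => (Real.norm_of_nonneg (hκ.nonneg n y)).trans_le (hκ.le n hn y))

lemma integral_tempered_le_one (hn : P.n₀ ≤ n) :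
    ∫ y, p.tempered n y ≤ 1 :=
  integral_temperedDensity_le_one P.η_pos.le P.η_lt_one (P.level_pos n).le P.f_nonneg
    P.integral_f (h.q_nonneg' hn) (h.integral_q n)

lemma noisyAvg_nonneg (hκ : P.IsTestKernel κ) (n : ℕ) : 0 ≤ p.noisyAvg κ n :=
  expAvg_nonneg P.γ_nonneg P.γ_lt_one fun k hk _ =>
    mul_nonneg (truncPow_nonneg (P.level_pos k).le (h.weight_nonneg hk)) (hκ.nonneg k _)

lemma meanAvg_nonneg (hκ : P.IsTestKernel κ) (n : ℕ) : 0 ≤ p.meanAvg κ n :=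
  expAvg_nonneg P.γ_nonneg P.γ_lt_one fun k hk _ =>
    integral_nonneg fun y => mul_nonneg (h.tempered_nonneg hk y) (hκ.nonneg k y)

lemma meanAvg_one_le_one (n : ℕ) : p.meanAvg (fun _ _ => 1) n ≤ 1 :=
  expAvg_le P.γ_nonneg P.γ_lt_one zero_le_one fun k hk _ => by
    simpa only [mul_one] using h.integral_tempered_le_one hk

lemma abs_noisyAvg_kernelAt_sub_le (n : ℕ) (x x' : EuclideanSpace ℝ (Fin d)) :
    |p.noisyAvg (P.kernelAt x) n - p.noisyAvg (P.kernelAt x') n| ≤ P.lipBound n * ‖x - x'‖ :=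
  abs_expAvg_sub_expAvg_le P.γ_nonneg P.γ_lt_one
    (mul_nonneg (P.lipBound_nonneg n) (norm_nonneg _)) fun k hk hkn =>
    P.abs_mul_kernelAt_sub_kernelAt_le hkn
      (truncPow_nonneg (P.level_pos k).le (h.weight_nonneg hk))
      (truncPow_le_level P.η_pos.le (P.level_pos k).le (h.weight_nonneg hk)) _

lemma abs_meanAvg_kernelAt_sub_le (n : ℕ) (x x' : EuclideanSpace ℝ (Fin d)) :
    |p.meanAvg (P.kernelAt x) n - p.meanAvg (P.kernelAt x') n| ≤ P.lipBound n * ‖x - x'‖ := by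
  refine abs_expAvg_sub_expAvg_le P.γ_nonneg P.γ_lt_one
    (mul_nonneg (P.lipBound_nonneg n) (norm_nonneg _)) fun k hk hkn => ?_
  have hq := h.q_nonneg' hk
  rw [← integral_sub (h.integrable_tempered_mul (P.isTestKernel_kernelAt x) hk)
    (h.integrable_tempered_mul (P.isTestKernel_kernelAt x') hk), ← Real.norm_eq_abs]
  calc _ ≤ ∫ y, P.lipBound n * ‖x - x'‖ * p.q k y := by
        refine norm_integral_le_of_norm_le ((h.integrable_q k).const_mul _)
          (.of_forall fun y => ?_)
        rw [tempered, temperedDensity, mul_right_comm, mul_right_comm _ _ (P.kernelAt x' k y),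
          ← sub_mul, Real.norm_eq_abs, abs_mul, abs_of_nonneg (hq y)]
        have hratio : 0 ≤ P.f y / p.q k y := div_nonneg (P.f_nonneg y) (hq y)
        exact mul_le_mul_of_nonneg_right (P.abs_mul_kernelAt_sub_kernelAt_le hkn
          (truncPow_nonneg (P.level_pos k).le hratio)
          (truncPow_le_level P.η_pos.le (P.level_pos k).le hratio) y) (hq y)
    _ = P.lipBound n * ‖x - x'‖ := by rw [integral_const_mul, h.integral_q, mul_one]

lemma concentratesAt_mono (hκ : P.IsTestKernel κ) {ε ε' : ℝ} (hε : ε ≤ ε')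
    (hconc : p.ConcentratesAt κ ε n) : p.ConcentratesAt κ ε' n :=
  hconc.trans (mul_le_mul_of_nonneg_right hε
    (add_nonneg (h.meanAvg_nonneg hκ n) (P.lam_rpow_pos n).le))

lemma concentratesAt_of_close {ε : ℝ} (hε : 0 ≤ ε) (hε1 : ε ≤ 1)
    {x' : EuclideanSpace ℝ (Fin d)} (hconc : p.ConcentratesAt (P.kernelAt x') ε n)
    (hx : P.lipBound n * ‖x - x'‖ ≤ ε * P.lam n ^ (1 - P.η)) :
    p.ConcentratesAt (P.kernelAt x) (4 * ε) n := by
  have hT := h.meanAvg_nonneg (P.isTestKernel_kernelAt x) n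
  obtain ⟨hT₁, hT₂⟩ := abs_le.1 (h.abs_meanAvg_kernelAt_sub_le n x x')
  obtain ⟨hS₁, hS₂⟩ := abs_le.1 (h.abs_noisyAvg_kernelAt_sub_le n x x')
  obtain ⟨hc₁, hc₂⟩ := abs_le.1 hconc
  have : ε * p.meanAvg (P.kernelAt x') n
      ≤ ε * p.meanAvg (P.kernelAt x) n + ε * P.lam n ^ (1 - P.η) := by
    have hℓ : 0 ≤ P.lipBound n * ‖x - x'‖ := mul_nonneg (P.lipBound_nonneg n) (norm_nonneg _)
    nlinarith [mul_le_mul_of_nonneg_left hT₁ hε, mul_le_mul_of_nonneg_right hε1 hℓ]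
  rw [ConcentratesAt, abs_le]
  have := mul_nonneg hε hT
  constructor <;> linarith

end IsDensity

end MidasPath

/-! ### Finite nets -/

lemma exists_finset_forall_norm_sub_le (d N R : ℕ) (hN : 0 < N) :
    ∃ G : Finset (EuclideanSpace ℝ (Fin d)), G.card ≤ (2 * (N * R) + 1) ^ d ∧
      ∀ x : EuclideanSpace ℝ (Fin d), ‖x‖ ≤ R → ∃ y ∈ G, ‖x - y‖ ≤ d / N := by
  classical
  have hN' : (0 : ℝ) < N := by exact_mod_cast hN
  let lattice : Finset (Fin d → ℤ) := Fintype.piFinset fun _ => Finset.Icc (-(N * R : ℤ)) (N * R)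
  let point : (Fin d → ℤ) → EuclideanSpace ℝ (Fin d) :=
    fun z => WithLp.toLp 2 fun i => (z i : ℝ) / N
  refine ⟨lattice.image point, Finset.card_image_le.trans_eq ?_, fun x hx => ?_⟩
  · simp only [lattice, Fintype.card_piFinset, Finset.prod_const, Finset.card_univ,
      Fintype.card_fin, Int.card_Icc]
    congr 1
    omega
  have hcoord i : |(N : ℝ) * x i| ≤ N * R := by
    rw [abs_mul, abs_of_pos hN']
    gcongr
    exact (PiLp.norm_apply_le x i).trans hx
  refine ⟨point fun i => ⌊(N : ℝ) * x i⌋, Finset.mem_image_of_mem _ ?_, ?_⟩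
  · simp only [lattice, Fintype.mem_piFinset, Finset.mem_Icc]
    refine fun i => ⟨Int.le_floor.2 ?_, ?_⟩
    · exact_mod_cast (abs_le.1 (hcoord i)).1
    · exact_mod_cast (Int.floor_le _).trans (abs_le.1 (hcoord i)).2
  calc _ ≤ ∑ i, ‖(x - point fun i => ⌊(N : ℝ) * x i⌋) i‖ := by
        rw [EuclideanSpace.norm_eq]
        exact Real.sqrt_le_iff.2 ⟨by positivity,
          Finset.sum_sq_le_sq_sum_of_nonneg fun i _ => norm_nonneg _⟩
    _ ≤ ∑ _i : Fin d, 1 / (N : ℝ) := Finset.sum_le_sum fun i _ => by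
        have hfract : (x - point fun i => ⌊(N : ℝ) * x i⌋) i = Int.fract ((N : ℝ) * x i) / N := by
          simp only [PiLp.sub_apply, point, Int.fract]
          field_simp
        rw [hfract, Real.norm_of_nonneg (div_nonneg (Int.fract_nonneg _) hN'.le)]
        gcongr
        exact (Int.fract_lt_one _).le
    _ = d / N := by simp [div_eq_mul_inv]

/-! ### The random algorithm -/

lemma measurable_uncurry_of_continuous {Ω E : Type*} {_ : MeasurableSpace Ω}
    [TopologicalSpace E] [TopologicalSpace.MetrizableSpace E] [SecondCountableTopology E]
    [MeasurableSpace E] [OpensMeasurableSpace E] {u : Ω → E → ℝ} (hc : ∀ ω, Continuous (u ω))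
    (hm : ∀ y, Measurable fun ω => u ω y) : Measurable (Function.uncurry u) :=
  (measurable_uncurry_of_continuous_of_measurable hc hm).comp measurable_swap

/-- The algorithm as a random trajectory: given the points sampled up to time `n`, the next one is
drawn from the policy `q n`. -/
structure MidasAlgorithm {Ω : Type*} [MeasurableSpace Ω] (μ : Measure Ω) {d : ℕ}
    (P : MidasParams d) where
  path : Ω → MidasPath P
  measurable_X : ∀ n, Measurable fun ω => (path ω).X n
  measurable_q : ∀ n x, Measurable[natFilt (fun n ω => (path ω).X n) n] fun ω => (path ω).q n x
  condExp_eq : ∀ (n : ℕ) (φ : BoundedContinuousFunction (EuclideanSpace ℝ (Fin d)) ℝ),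
    μ[fun ω => φ ((path ω).X (n + 1)) | natFilt (fun n ω => (path ω).X n) n]
      =ᵐ[μ] fun ω => ∫ y, φ y * (path ω).q n y

namespace MidasAlgorithm

variable {Ω : Type*} [mΩ : MeasurableSpace Ω] {μ : Measure Ω} {d : ℕ} {P : MidasParams d}
  (M : MidasAlgorithm μ P) {n : ℕ} {κ : ℕ → EuclideanSpace ℝ (Fin d) → ℝ}

/-- The natural filtration of the sampled points. -/
def history : Filtration ℕ mΩ where
  seq := natFilt fun n ω => (M.path ω).X n
  mono' _ _ hmn := biSup_mono fun _ hi => Finset.Icc_subset_Icc_right hmn hi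
  le' _ := iSup₂_le fun i _ => (M.measurable_X i).comap_le

lemma measurable_X_history (n : ℕ) :
    Measurable[M.history (n + 1)] fun ω => (M.path ω).X (n + 1) :=
  (comap_measurable _).mono (le_iSup₂ (f := fun i (_ : i ∈ Finset.Icc 1 (n + 1)) =>
    MeasurableSpace.comap (fun ω => (M.path ω).X i) inferInstance) (n + 1) (by simp)) le_rfl

lemma measurable_uncurry_q (hn : 1 ≤ n) : Measurable[(M.history n).prod inferInstance]
    (Function.uncurry fun ω => (M.path ω).q n) :=
  measurable_uncurry_of_continuous (fun ω => (M.path ω).continuous_q hn)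
    (M.measurable_q n)

lemma ae_q_nonneg (hn : 1 ≤ n) : ∀ᵐ ω ∂μ, ∀ y, 0 ≤ (M.path ω).q n y := by
  let bump (c : EuclideanSpace ℝ (Fin d)) (j : ℕ) :
      BoundedContinuousFunction (EuclideanSpace ℝ (Fin d)) ℝ :=
    .ofNormedAddCommGroup (fun y => max 0 (1 / ((j : ℝ) + 1) - dist y c)) (by fun_prop)
      (1 / ((j : ℝ) + 1)) fun y => by
        rw [Real.norm_of_nonneg (le_max_left _ _)]
        exact max_le (by positivity) (sub_le_self _ dist_nonneg)
  obtain ⟨D, hD, hDdense⟩ :=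
    TopologicalSpace.exists_countable_dense (EuclideanSpace ℝ (Fin d))
  have hbump : ∀ᵐ ω ∂μ, ∀ c ∈ D, ∀ j, 0 ≤ ∫ y, bump c j y * (M.path ω).q n y := by
    refine (ae_ball_iff hD).2 fun c _ => ae_all_iff.2 fun j => ?_
    have hnonneg : 0 ≤ᵐ[μ] μ[fun ω => bump c j ((M.path ω).X (n + 1)) | M.history n] :=
      condExp_nonneg (.of_forall fun ω => le_max_left _ _)
    filter_upwards [M.condExp_eq n (bump c j), hnonneg] with ω hω hω0
    exact hω0.trans_eq hω
  filter_upwards [hbump] with ω hω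
  exact nonneg_of_forall_integral_bump_mul_nonneg ((M.path ω).continuous_q hn) hDdense hω

variable [IsProbabilityMeasure μ]

lemma ae_integral_q_eq_one (n : ℕ) : ∀ᵐ ω ∂μ, ∫ y, (M.path ω).q n y = 1 := by
  have hconst : μ[fun _ => (1 : ℝ) | M.history n] = fun _ => 1 := condExp_const (M.history.le n) 1
  filter_upwards [M.condExp_eq n (.const _ 1)] with ω hω
  simpa only [BoundedContinuousFunction.const_apply, one_mul] using
    hω.symm.trans (congrFun hconst ω)

lemma hasCondDensity (hn : 1 ≤ n) : HasCondDensity (M.history n)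
    (fun ω => (M.path ω).X (n + 1)) (fun ω => (M.path ω).q n) volume μ where
  measurable := M.measurable_uncurry_q hn
  ae_nonneg := M.ae_q_nonneg hn
  ae_integral_eq_one := M.ae_integral_q_eq_one n
  condExp_eq := M.condExp_eq n

lemma ae_isDensity : ∀ᵐ ω ∂μ, (M.path ω).IsDensity := by
  filter_upwards [ae_all_iff.2 fun n => M.ae_q_nonneg (Nat.succ_pos n),
    ae_all_iff.2 M.ae_integral_q_eq_one] with ω hnonneg hone
  refine ⟨fun n hn => ?_, hone⟩
  obtain ⟨m, rfl⟩ := Nat.exists_eq_add_of_le' hn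
  exact hnonneg m

/-! ### Concentration -/

lemma measure_lt_noisyAvg_sub_meanAvg_le (hκ : P.IsTestKernel κ) {s ε : ℝ}
    (hs : s = 1 ∨ s = -1) (hε0 : 0 ≤ ε) (hε : ε ≤ 1) (hn : P.n₀ ≤ n) (τ : ℝ) :
    μ {ω | τ < s * (M.path ω).noisyAvg κ n - (s + ε) * (M.path ω).meanAvg κ n}
      ≤ ENNReal.ofReal (Real.exp (-(ε / (P.γ n * P.weightBound n) * τ))) := by
  have hpos {k : ℕ} (hk : P.n₀ ≤ k) : 1 ≤ k := P.n₀_pos.trans_le hk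
  have htail := measure_lt_expAvg_sub_expAvg_le (ℱ := M.history) (μ := μ) (ν := volume)
    (Y := fun k ω => (M.path ω).X k) (p := fun k ω => (M.path ω).q k) (B := P.weightBound)
    (u := fun k ω y => truncPow P.η (P.level k) (P.f y / (M.path ω).q k y) * κ k y)
    (fun k _ => M.measurable_X_history k) (fun k hk => M.hasCondDensity (hpos hk))
    (fun k hk => ((measurable_truncPow _ _).comp ((P.continuous_f.measurable.comp
      measurable_snd).div (M.measurable_uncurry_q (hpos hk)))).mul
        ((hκ.measurable k).comp measurable_snd))
    (fun k hk => by
      filter_upwards [M.ae_q_nonneg (hpos hk)] with ω hq y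
      have hratio := div_nonneg (P.f_nonneg y) (hq y)
      exact ⟨mul_nonneg (truncPow_nonneg (P.level_pos k).le hratio) (hκ.nonneg k y),
        hκ.truncPow_mul_le hk hratio y⟩)
    P.γ_pos (fun n hn => (P.γ_lt_one n hn).le) P.weightBound_pos (fun n hn => by
      have hB := P.weightBound_pos n
      have hγ := P.γ_nonneg (n + 1)
      calc (1 - P.γ (n + 1)) * (P.γ n * P.weightBound n)
          = P.γ n * (1 - P.γ (n + 1)) * P.weightBound n := by ring
        _ ≤ P.γ (n + 1) * P.weightBound (n + 1) := by
            gcongr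
            · exact P.γ_mul_le n hn
            · exact P.monotone_weightBound n.le_succ)
    hs hε0 hε hn τ
  simp only [MidasPath.noisyAvg, MidasPath.meanAvg, temperedDensity, mul_right_comm _ _ (κ _ _)]
  exact htail

lemma measure_not_concentratesAt_le (hκ : P.IsTestKernel κ) {ε : ℝ} (hε0 : 0 ≤ ε) (hε : ε ≤ 1)
    (hn : P.n₀ ≤ n) : μ {ω | ¬ (M.path ω).ConcentratesAt κ ε n}
      ≤ 2 * ENNReal.ofReal (Real.exp
        (-(ε ^ 2 * P.lam n ^ (1 - P.η) / (P.γ n * P.weightBound n)))) := by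
  set tail : ℝ → Set Ω := fun s => {ω | ε * P.lam n ^ (1 - P.η)
    < s * (M.path ω).noisyAvg κ n - (s + ε) * (M.path ω).meanAvg κ n}
  have htail {s : ℝ} (hs : s = 1 ∨ s = -1) : μ (tail s) ≤ ENNReal.ofReal (Real.exp
      (-(ε ^ 2 * P.lam n ^ (1 - P.η) / (P.γ n * P.weightBound n)))) := by
    convert M.measure_lt_noisyAvg_sub_meanAvg_le hκ hs hε0 hε hn (ε * P.lam n ^ (1 - P.η))
      using 4
    ring
  have hsubset : {ω | ¬ (M.path ω).ConcentratesAt κ ε n} ⊆ tail 1 ∪ tail (-1) := by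
    intro ω hω
    rcases lt_abs.1 (not_le.1 hω) with h | h
    · exact Or.inl (by simp only [tail, Set.mem_ofPred_eq]; linarith)
    · exact Or.inr (by simp only [tail, Set.mem_ofPred_eq]; linarith)
  calc _ ≤ μ (tail 1) + μ (tail (-1)) := (measure_mono hsubset).trans (measure_union_le _ _)
    _ ≤ _ := (add_le_add (htail (.inl rfl)) (htail (.inr rfl))).trans_eq (two_mul _).symm

end MidasAlgorithm

lemma ae_eventually_of_measure_not_le {Ω : Type*} {_ : MeasurableSpace Ω} {μ : Measure Ω}
    {p : ℕ → Ω → Prop} {a : ℕ → ℝ} (ha : Summable a)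
    (h : ∀ᶠ n in atTop, μ {ω | ¬ p n ω} ≤ ENNReal.ofReal (a n)) :
    ∀ᵐ ω ∂μ, ∀ᶠ n in atTop, p n ω := by
  obtain ⟨N, hN⟩ := eventually_atTop.1 h
  have hsum : ∑' n, μ {ω | ¬ p (n + N) ω} ≠ ∞ :=
    ne_top_of_le_ne_top ((summable_nat_add_iff N).2 ha).tsum_ofReal_ne_top
      (ENNReal.tsum_le_tsum fun n => hN _ (Nat.le_add_left N n))
  filter_upwards [ae_eventually_notMem hsum] with ω hω
  rw [← map_add_atTop_eq_nat N]
  exact hω.mono fun n hn => not_not.1 hn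

lemma ae_forall_pos_of_forall_ae {Ω : Type*} {_ : MeasurableSpace Ω} {μ : Measure Ω}
    {p : ℝ → Ω → Prop} (hmono : ∀ ω ⦃ε ε'⦄, ε ≤ ε' → p ε ω → p ε' ω)
    (h : ∀ ε, 0 < ε → ε ≤ 1 → ∀ᵐ ω ∂μ, p ε ω) : ∀ᵐ ω ∂μ, ∀ ε, 0 < ε → p ε ω := by
  have hcountable : ∀ᵐ ω ∂μ, ∀ j : ℕ, p (1 / ((j : ℝ) + 1)) ω :=
    ae_all_iff.2 fun j => h _ (by positivity) (by
      rw [div_le_one (by positivity)]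
      linarith [(j.cast_nonneg : (0 : ℝ) ≤ j)])
  filter_upwards [hcountable] with ω hω ε hε
  obtain ⟨j, hj⟩ := exists_nat_one_div_lt hε
  exact hmono ω hj.le (hω j)

namespace MidasAlgorithm

variable {Ω : Type*} [MeasurableSpace Ω] {μ : Measure Ω} [IsProbabilityMeasure μ] {d : ℕ}
  {P : MidasParams d} (M : MidasAlgorithm μ P)

lemma ae_eventually_forall_concentratesAt {ι : Type*}
    {κ : ι → ℕ → EuclideanSpace ℝ (Fin d) → ℝ} (hκ : ∀ i, P.IsTestKernel (κ i))
    {G : ℕ → Finset ι} {m : ℕ} (hG : ∀ᶠ n in atTop, (G n).card ≤ n ^ m) {ε : ℝ} (hε0 : 0 < ε)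
    (hε : ε ≤ 1) :
    ∀ᵐ ω ∂μ, ∀ᶠ n in atTop, ∀ i ∈ G n, (M.path ω).ConcentratesAt (κ i) ε n := by
  refine ae_eventually_of_measure_not_le
    ((Real.summable_nat_pow_inv.2 one_lt_two).mul_left (2 : ℝ)) ?_
  filter_upwards [P.eventually_exp_le (m + 2) (pow_pos hε0 2), eventually_ge_atTop P.n₀,
    eventually_ge_atTop 1, hG] with n hexp hn hn1 hcard
  have : (0 : ℝ) < n := by exact_mod_cast hn1
  have hunion : {ω | ¬ ∀ i ∈ G n, (M.path ω).ConcentratesAt (κ i) ε n}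
      = ⋃ i ∈ G n, {ω | ¬ (M.path ω).ConcentratesAt (κ i) ε n} := by
    ext ω
    simp only [not_forall, Set.mem_ofPred_eq, Set.mem_iUnion]
  calc _ ≤ ∑ i ∈ G n, μ {ω | ¬ (M.path ω).ConcentratesAt (κ i) ε n} :=
        hunion ▸ measure_biUnion_finset_le _ _
    _ ≤ ∑ _i ∈ G n, ENNReal.ofReal (2 * ((n : ℝ) ^ (m + 2))⁻¹) :=
        Finset.sum_le_sum fun i _ => by
          refine (M.measure_not_concentratesAt_le (hκ i) hε0.le hε hn).trans ?_
          rw [ENNReal.ofReal_mul zero_le_two, ENNReal.ofReal_ofNat]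
          gcongr
    _ = ENNReal.ofReal ((G n).card * (2 * ((n : ℝ) ^ (m + 2))⁻¹)) := by
        rw [Finset.sum_const, nsmul_eq_mul, ENNReal.ofReal_mul (Nat.cast_nonneg _),
          ENNReal.ofReal_natCast]
    _ ≤ ENNReal.ofReal (n ^ m * (2 * ((n : ℝ) ^ (m + 2))⁻¹)) := by
        gcongr
        exact_mod_cast hcard
    _ = ENNReal.ofReal (2 * ((n : ℝ) ^ 2)⁻¹) := by
        rw [pow_add]
        congr 1
        field_simp

lemma ae_eventually_concentratesAt_one : ∀ᵐ ω ∂μ, ∀ ε, 0 < ε →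
    (M.path ω).IsDensity → ∀ᶠ n in atTop, (M.path ω).ConcentratesAt (fun _ _ => 1) ε n := by
  refine ae_forall_pos_of_forall_ae
    (fun ω ε ε' hεε' h hdens => (h hdens).mono fun n =>
      hdens.concentratesAt_mono P.isTestKernel_one hεε') fun ε hε0 hε => ?_
  have hcard : ∀ᶠ n : ℕ in atTop, ({()} : Finset Unit).card ≤ n ^ 0 := .of_forall fun _ => le_rfl
  filter_upwards [M.ae_eventually_forall_concentratesAt (fun _ => P.isTestKernel_one) hcard
    hε0 hε] with ω hω _
  exact hω.mono fun n hn => hn () (Finset.mem_singleton_self _)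

lemma ae_eventually_concentratesAt_kernelAt : ∀ᵐ ω ∂μ, ∀ ε, 0 < ε → (M.path ω).IsDensity →
    ∀ᶠ n : ℕ in atTop, ∀ x : EuclideanSpace ℝ (Fin d), ‖x‖ ≤ n →
      (M.path ω).ConcentratesAt (P.kernelAt x) ε n := by
  refine ae_forall_pos_of_forall_ae
    (fun ω ε ε' hεε' h hdens => (h hdens).mono fun n hn x hx =>
      hdens.concentratesAt_mono (P.isTestKernel_kernelAt x) hεε' (hn x hx)) fun ε hε0 hε => ?_
  choose! G hGcard hGnet using fun n (hn : 1 ≤ n) =>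
    exists_finset_forall_norm_sub_le d (n ^ 5) n (pow_pos hn 5)
  have hcard : ∀ᶠ n : ℕ in atTop, (G n).card ≤ n ^ (7 * d) := by
    filter_upwards [eventually_ge_atTop 3] with n hn
    refine (hGcard n (by omega)).trans ?_
    rw [pow_mul]
    refine Nat.pow_le_pow_left ?_ d
    have : 1 ≤ n ^ 6 := Nat.one_le_pow _ _ (by omega)
    calc 2 * (n ^ 5 * n) + 1 = 2 * n ^ 6 + 1 := by ring
      _ ≤ 3 * n ^ 6 := by omega
      _ ≤ n * n ^ 6 := by gcongr
      _ = n ^ 7 := by ring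
  filter_upwards [M.ae_eventually_forall_concentratesAt P.isTestKernel_kernelAt hcard
    (ε := ε / 4) (by positivity) (by linarith)] with ω hω hdens
  filter_upwards [hω, P.eventually_lipBound_mul_le (show 0 < ε / 4 by positivity),
    eventually_ge_atTop 1] with n hconc hlip hn x hx
  obtain ⟨y, hy, hxy⟩ := hGnet n hn x hx
  push_cast at hxy
  have hclose := hdens.concentratesAt_of_close (by positivity) (by linarith) (hconc y hy)
    ((mul_le_mul_of_nonneg_left hxy (P.lipBound_nonneg n)).trans hlip)
  rwa [mul_div_cancel₀ _ four_ne_zero] at hclose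

end MidasAlgorithm

/-! ### The estimate puts mass on the support of the target -/

lemma measurableSet_exists_mem_lt {Ω E : Type*} {_ : MeasurableSpace Ω} [TopologicalSpace E]
    [SecondCountableTopology E] {u : Ω → E → ℝ} (hc : ∀ ω, Continuous (u ω))
    (hm : ∀ y, Measurable fun ω => u ω y) {U : Set E} (hU : IsOpen U) (a : ℝ) :
    MeasurableSet {ω | ∃ y ∈ U, a < u ω y} := by
  obtain ⟨D, hD, hDdense⟩ := TopologicalSpace.exists_countable_dense E
  have heq : {ω | ∃ y ∈ U, a < u ω y} = ⋃ y ∈ D ∩ U, {ω | a < u ω y} := by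
    ext ω
    simp only [Set.mem_ofPred_eq, Set.mem_iUnion, exists_prop]
    refine ⟨fun ⟨y, hy, hlt⟩ => ?_, fun ⟨y, hy, hlt⟩ => ⟨y, hy.2, hlt⟩⟩
    obtain ⟨z, hz, hzD⟩ := hDdense.inter_open_nonempty _
      (hU.inter (isOpen_lt continuous_const (hc ω))) ⟨y, hy, hlt⟩
    exact ⟨z, ⟨hzD, hz.1⟩, hz.2⟩
  rw [heq]
  exact .biUnion (hD.mono Set.inter_subset_left) fun y _ => measurableSet_lt measurable_const (hm y)

lemma HasCondDensity.measure_inter_preimage_le {Ω E : Type*} {m mΩ : MeasurableSpace Ω}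
    [TopologicalSpace E] [MeasurableSpace E] [BorelSpace E] [HasOuterApproxClosed E]
    {Y : Ω → E} {p : Ω → E → ℝ} {ν : Measure E} {μ : Measure Ω} [IsFiniteMeasure μ] [SFinite ν]
    (h : HasCondDensity m Y p ν μ) (hm : m ≤ mΩ) (hY : Measurable Y) {S : Set Ω}
    (hS : MeasurableSet[m] S) {C : Set E} (hC : MeasurableSet C) {c : ℝ≥0∞}
    (hc : ∀ ω ∈ S, ∫⁻ y in C, ENNReal.ofReal (p ω y) ∂ν ≤ c) : μ (S ∩ Y ⁻¹' C) ≤ c * μ S := by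
  have hS' : MeasurableSet S := hm S hS
  rw [h.measure_inter_preimage_eq_joint hm hY hS hC, joint, withDensity_apply _ (hS'.prod hC),
    ← Measure.prod_restrict, lintegral_prod _
      (h.measurable_uncurry hm).ennreal_ofReal.aemeasurable, ← setLIntegral_const]
  exact setLIntegral_mono' hS' hc

namespace MidasPath

variable {d : ℕ} {P : MidasParams d} (p : MidasPath P) {n : ℕ}

lemma estimate_succ_of_weight_eq_zero (hn : P.n₀ ≤ n) (hw : p.weight n = 0) :
    p.estimate (n + 1) = p.estimate n := by
  have hγ : 1 - P.γ (n + 1) ≠ 0 := (sub_pos.2 (P.γ_lt_one (n + 1) (by omega))).ne'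
  funext x
  simp only [estimate, mass_succ, g_succ_eq, hw, Real.zero_rpow P.η_pos.ne', zero_mul, mul_zero,
    add_zero, mul_div_mul_left _ _ hγ]

/-- The normalized estimate is not positive anywhere the target is. -/
def IsOffSupport (n : ℕ) : Prop := ∀ x, 0 < P.f x → p.estimate n x ≤ 0

lemma lintegral_q_le_of_isOffSupport (hn : P.n₀ ≤ n) (hoff : p.IsOffSupport n) :
    ∫⁻ y in {y | 0 < P.f y}, ENNReal.ofReal (p.q n y) ≤ ENNReal.ofReal (P.lam n) := by
  have hlam := P.lam_le_half n hn
  calc _ ≤ ∫⁻ y in {y | 0 < P.f y}, ENNReal.ofReal (P.lam n * P.q₀ y) := by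
        refine setLIntegral_mono' (measurableSet_lt measurable_const
          P.continuous_f.measurable) fun y hy => ENNReal.ofReal_le_ofReal ?_
        rw [p.q_eq (P.n₀_pos.trans_le hn)]
        nlinarith [hoff y hy]
    _ ≤ ∫⁻ y, ENNReal.ofReal (P.lam n * P.q₀ y) := setLIntegral_le_lintegral _ _
    _ = ENNReal.ofReal (P.lam n) := by
        rw [← ofReal_integral_eq_lintegral_ofReal
          ((integrable_of_integral_eq_one P.integral_q₀).const_mul _)
          (.of_forall fun y => mul_nonneg (P.lam_pos n).le (P.q₀_nonneg y)),
          integral_const_mul, P.integral_q₀, mul_one]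

end MidasPath

namespace MidasAlgorithm

variable {Ω : Type*} [MeasurableSpace Ω] {μ : Measure Ω} {d : ℕ} {P : MidasParams d}
  (M : MidasAlgorithm μ P) {n : ℕ}

lemma measurable_estimate (hn : P.n₀ ≤ n) (x : EuclideanSpace ℝ (Fin d)) :
    Measurable[M.history n] fun ω => (M.path ω).estimate n x := by
  have hlam : 1 - P.lam n ≠ 0 := by linarith [P.lam_le_half n hn]
  have heq : (fun ω => (M.path ω).estimate n x)
      = fun ω => ((M.path ω).q n x - P.lam n * P.q₀ x) / (1 - P.lam n) := by
    funext ω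
    rw [(M.path ω).q_eq (P.n₀_pos.trans_le hn), add_sub_cancel_right, mul_div_cancel_left₀ _ hlam]
  rw [heq]
  exact ((M.measurable_q n x).sub_const _).div_const _

lemma measurableSet_isOffSupport_inter (hn : P.n₀ ≤ n) (β : ℝ) : MeasurableSet[M.history n]
    {ω | (M.path ω).IsOffSupport n ∧ ∃ x, (M.path ω).estimate n x < -β * P.q₀ x} := by
  have hpos : MeasurableSet[M.history n]
      {ω | ∃ x ∈ {x | 0 < P.f x}, 0 < (M.path ω).estimate n x} := measurableSet_exists_mem_lt
    (fun ω => (M.path ω).continuous_estimate n) (M.measurable_estimate hn)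
    (isOpen_lt continuous_const P.continuous_f) 0
  have hneg : MeasurableSet[M.history n]
      {ω | ∃ x ∈ Set.univ, 0 < -(M.path ω).estimate n x - β * P.q₀ x} :=
    measurableSet_exists_mem_lt (u := fun ω x => -((M.path ω).estimate n x) - β * P.q₀ x)
    (fun ω => ((M.path ω).continuous_estimate n).neg.sub (P.continuous_q₀.const_mul β))
    (fun x => (M.measurable_estimate hn x).neg.sub_const _) isOpen_univ 0
  convert hpos.compl.inter hneg using 1
  ext ω
  simp only [MidasPath.IsOffSupport, Set.mem_inter_iff, Set.mem_compl_iff, Set.mem_ofPred_eq,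
    not_exists, not_and, not_lt, Set.mem_univ, true_and]
  refine and_congr_right fun _ => exists_congr fun x => ?_
  rw [sub_pos, lt_neg, neg_mul]

variable [IsProbabilityMeasure μ]

/-- Off the support of the target the policy samples the target with probability at most `lam n`,
and as long as it does not the estimate stays the same; so a lower bound for the estimate at
time `n + 1` transfers to time `n`. -/
lemma ae_neg_mul_le_estimate_of_succ (hn : P.n₀ ≤ n) {β : ℝ}
    (hsucc : ∀ᵐ ω ∂μ, (M.path ω).IsOffSupport (n + 1) →
      ∀ x, -β * P.q₀ x ≤ (M.path ω).estimate (n + 1) x) :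
    ∀ᵐ ω ∂μ, (M.path ω).IsOffSupport n → ∀ x, -β * P.q₀ x ≤ (M.path ω).estimate n x := by
  set bad : Set Ω := {ω | (M.path ω).IsOffSupport n ∧
    ∃ x, (M.path ω).estimate n x < -β * P.q₀ x}
  set hit : Set Ω := (fun ω => (M.path ω).X (n + 1)) ⁻¹' {y | 0 < P.f y}
  have hbad_hit : bad ≤ᵐ[μ] (bad ∩ hit : Set Ω) := by
    filter_upwards [hsucc] with ω hω hbad
    refine ⟨hbad, by_contra fun hmiss => ?_⟩
    obtain ⟨hoff, x, hx⟩ := hbad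
    have hf : P.f ((M.path ω).X (n + 1)) = 0 := le_antisymm (not_lt.1 hmiss) (P.f_nonneg _)
    have heq := (M.path ω).estimate_succ_of_weight_eq_zero hn (by
      rw [MidasPath.weight, hf, zero_div])
    rw [MidasPath.IsOffSupport, heq] at hω
    exact hx.not_ge (hω hoff x)
  have hhalf : μ bad ≤ ENNReal.ofReal (P.lam n) * μ bad :=
    (measure_mono_ae hbad_hit).trans <|
      (M.hasCondDensity (P.n₀_pos.trans_le hn)).measure_inter_preimage_le (M.history.le n)
        (M.measurable_X (n + 1)) (M.measurableSet_isOffSupport_inter hn β)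
        (measurableSet_lt measurable_const P.continuous_f.measurable)
        fun ω hω => (M.path ω).lintegral_q_le_of_isOffSupport hn hω.1
  have hnull : μ bad = 0 := by
    by_contra hne
    have hlt : ENNReal.ofReal (P.lam n) * μ bad < 1 * μ bad :=
      (ENNReal.mul_lt_mul_iff_left hne (measure_ne_top μ _)).2
        (ENNReal.ofReal_lt_one.2 (by linarith [P.lam_le_half n hn]))
    exact (hhalf.trans_lt hlt).ne (one_mul _).symm
  filter_upwards [measure_eq_zero_iff_ae_notMem.1 hnull] with ω hω hoff x
  exact not_lt.1 fun hlt => hω ⟨hoff, x, hlt⟩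

lemma ae_neg_mul_le_estimate (m n : ℕ) (hn : P.n₀ ≤ n) :
    ∀ᵐ ω ∂μ, (M.path ω).IsOffSupport n →
      ∀ x, -(P.lam (n + m) / (1 - P.lam (n + m))) * P.q₀ x ≤ (M.path ω).estimate n x := by
  induction m generalizing n with
  | zero =>
    filter_upwards [M.ae_q_nonneg (P.n₀_pos.trans_le hn)] with ω hq _ x
    have hlam : 0 < 1 - P.lam n := by linarith [P.lam_le_half n hn]
    have hqx := hq x
    rw [(M.path ω).q_eq (P.n₀_pos.trans_le hn)] at hqx
    rw [add_zero, ← neg_div, div_mul_eq_mul_div, div_le_iff₀ hlam]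
    linarith
  | succ m ih =>
    have := ih (n + 1) (by omega)
    rw [add_right_comm, add_assoc] at this
    exact M.ae_neg_mul_le_estimate_of_succ hn this

lemma ae_estimate_nonneg_of_isOffSupport (hn : P.n₀ ≤ n) :
    ∀ᵐ ω ∂μ, (M.path ω).IsOffSupport n → ∀ x, 0 ≤ (M.path ω).estimate n x := by
  filter_upwards [ae_all_iff.2 fun m => M.ae_neg_mul_le_estimate m n hn] with ω hω hoff x
  have hlim : Tendsto (fun m => -(P.lam (n + m) / (1 - P.lam (n + m))) * P.q₀ x) atTop (𝓝 0) := by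
    have hlam : Tendsto (fun m => P.lam (n + m)) atTop (𝓝 0) := by
      simpa only [add_comm n] using (tendsto_add_atTop_iff_nat n).2 P.tendsto_lam
    simpa using (hlam.div (hlam.const_sub 1) (by norm_num)).neg.mul_const (P.q₀ x)
  exact le_of_tendsto' hlim fun m => hω m hoff x

end MidasAlgorithm

namespace MidasPath

variable {d : ℕ} {P : MidasParams d}

/-- The almost sure properties of trajectories on which the deterministic part of the proof
rests. -/
structure IsRegular (p : MidasPath P) : Prop extends p.IsDensity where
  concentratesAt_one : ∀ ε, 0 < ε → ∀ᶠ n in atTop, p.ConcentratesAt (fun _ _ => 1) ε n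
  concentratesAt_kernelAt : ∀ ε, 0 < ε → ∀ᶠ n : ℕ in atTop,
    ∀ x : EuclideanSpace ℝ (Fin d), ‖x‖ ≤ n → p.ConcentratesAt (P.kernelAt x) ε n
  estimate_nonneg : ∀ n, P.n₀ ≤ n → p.IsOffSupport n → ∀ x, 0 ≤ p.estimate n x

end MidasPath

lemma MidasAlgorithm.ae_isRegular {Ω : Type*} [MeasurableSpace Ω] {μ : Measure Ω}
    [IsProbabilityMeasure μ] {d : ℕ} {P : MidasParams d} (M : MidasAlgorithm μ P) :
    ∀ᵐ ω ∂μ, (M.path ω).IsRegular := by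
  filter_upwards [M.ae_isDensity, M.ae_eventually_concentratesAt_one,
    M.ae_eventually_concentratesAt_kernelAt, ae_all_iff.2 fun n => eventually_imp_distrib_left.2
      fun hn : P.n₀ ≤ n => M.ae_estimate_nonneg_of_isOffSupport hn] with ω hdens hone hker hoff
  exact ⟨hdens, fun ε hε => hone ε hε hdens, fun ε hε => hker ε hε hdens, hoff⟩

/-! ### The mass becomes positive -/

namespace MidasParams

variable {d : ℕ} (P : MidasParams d) {n : ℕ} {q : EuclideanSpace ℝ (Fin d) → ℝ}
  {y : EuclideanSpace ℝ (Fin d)}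

lemma exists_f_pos : ∃ x, 0 < P.f x := by
  by_contra! h
  have hzero : ∀ x, P.f x = 0 := fun x => le_antisymm (h x) (P.f_nonneg x)
  simpa [hzero] using P.integral_f

lemma temperedDensity_level_eq (hq : P.lam n / 2 * P.q₀ y ≤ q y) :
    temperedDensity P.η (P.level n) P.f q y = P.f y ^ P.η * q y ^ (1 - P.η) :=
  temperedDensity_eq_of_le P.η_lt_one (P.f_nonneg y)
    ((mul_nonneg (half_pos (P.lam_pos n)).le (P.q₀_nonneg y)).trans hq) (P.div_le_level n hq)

lemma mul_f_le_temperedDensity_level (hq : P.lam n / 2 * P.q₀ y ≤ q y) :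
    (P.c / 2) ^ (1 - P.η) * P.lam n ^ (1 - P.η) * P.f y
      ≤ temperedDensity P.η (P.level n) P.f q y := by
  have hlam := P.lam_pos n
  have hc := P.c_pos
  have hf := P.f_nonneg y
  have hη := P.one_sub_η_pos
  have hle : P.c / 2 * P.lam n * P.f y ≤ q y :=
    calc _ = P.lam n / 2 * (P.c * P.f y) := by ring
      _ ≤ P.lam n / 2 * P.q₀ y := by
          gcongr
          exact P.c_mul_f_le y
      _ ≤ q y := hq
  rw [P.temperedDensity_level_eq hq]
  calc (P.c / 2) ^ (1 - P.η) * P.lam n ^ (1 - P.η) * P.f y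
      = P.f y ^ P.η * (P.c / 2 * P.lam n * P.f y) ^ (1 - P.η) := by
        rw [Real.mul_rpow (by positivity) hf, Real.mul_rpow (by positivity) hlam.le, mul_left_comm,
          ← Real.rpow_add_of_nonneg hf P.η_pos.le hη.le, add_sub_cancel, Real.rpow_one]
    _ ≤ P.f y ^ P.η * q y ^ (1 - P.η) := by gcongr

lemma decay_pos (n : ℕ) : 0 < decay P.γ P.n₀ n :=
  _root_.decay_pos P.γ_lt_one n

lemma decay_pos' {m : ℕ} (hm : P.n₀ ≤ m) (n : ℕ) : 0 < decay P.γ m n :=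
  _root_.decay_pos (fun k hk => P.γ_lt_one k (hm.trans hk)) n

lemma decay_le_one {m : ℕ} (hm : P.n₀ ≤ m) (n : ℕ) : decay P.γ m n ≤ 1 :=
  _root_.decay_le_one P.γ_nonneg (fun k hk => P.γ_lt_one k (hm.trans hk)) n

lemma decay_le_decay {m n : ℕ} (hm : P.n₀ ≤ m) (hmn : m ≤ n) :
    decay P.γ P.n₀ n ≤ decay P.γ P.n₀ m := by
  rw [← decay_mul_decay hm hmn]
  exact mul_le_of_le_one_right (P.decay_pos m).le (P.decay_le_one hm n)

lemma one_sub_γ_pos (hn : P.n₀ ≤ n) : 0 < 1 - P.γ (n + 1) := by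
  linarith [P.γ_lt_one (n + 1) (by omega)]

end MidasParams

namespace MidasPath

variable {d : ℕ} {P : MidasParams d} {p : MidasPath P} {m n : ℕ}
  {κ : ℕ → EuclideanSpace ℝ (Fin d) → ℝ} {x : EuclideanSpace ℝ (Fin d)}

lemma noisyAvg_succ (hn : P.n₀ ≤ n) : p.noisyAvg κ (n + 1) = (1 - P.γ (n + 1)) * p.noisyAvg κ n
    + P.γ (n + 1) * (truncPow P.η (P.level n) (p.weight n) * κ n (p.X (n + 1))) :=
  expAvg_succ hn

lemma meanAvg_succ (hn : P.n₀ ≤ n) : p.meanAvg κ (n + 1)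
    = (1 - P.γ (n + 1)) * p.meanAvg κ n + P.γ (n + 1) * ∫ y, p.tempered n y * κ n y :=
  expAvg_succ hn

lemma exists_forall_abs_g_le (p : MidasPath P) (n : ℕ) : ∃ D, ∀ x, |p.g n x| ≤ D := by
  induction n with
  | zero => exact ⟨0, fun x => by simp [p.g_zero]⟩
  | succ n ih =>
    obtain ⟨D, hD⟩ := ih
    refine ⟨|1 - P.γ (n + 1)| * D
      + P.γ (n + 1) * (|p.weight n ^ P.η| * (P.Km / P.b (n + 1) ^ d)), fun x => ?_⟩
    have := P.γ_nonneg (n + 1)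
    rw [p.g_succ_eq]
    refine (abs_add_le _ _).trans ?_
    rw [abs_mul, abs_mul, abs_mul, abs_of_nonneg (P.γ_nonneg _),
      abs_of_nonneg (P.kernelAt_nonneg _ _ _)]
    gcongr
    · exact hD x
    · exact kb_le P.K_le (P.b_pos _).le _

namespace IsDensity

variable (h : p.IsDensity)
include h

lemma mass_ne_zero (hn : P.n₀ ≤ n) : p.mass n ≠ 0 := fun hmass => by
  have hint := h.integral_q n
  simp only [p.q_eq (P.n₀_pos.trans_le hn), estimate, hmass, div_zero, mul_zero, zero_add] at hint
  rw [integral_const_mul, P.integral_q₀] at hint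
  linarith [P.lam_le_half n hn]

lemma weight_rpow_nonneg (hn : P.n₀ ≤ n) : 0 ≤ p.weight n ^ P.η :=
  Real.rpow_nonneg (h.weight_nonneg hn) _

lemma decay_mul_g_le (hm : P.n₀ ≤ m) (hmn : m ≤ n) (x : EuclideanSpace ℝ (Fin d)) :
    decay P.γ m n * p.g m x ≤ p.g n x := by
  refine decay_mul_le (u := fun k => p.g k x) (fun k hk => P.γ_lt_one k (hm.trans hk))
    (fun k hk => ?_) hmn
  rw [p.g_succ_eq]
  exact le_add_of_nonneg_right (mul_nonneg (P.γ_nonneg _)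
    (mul_nonneg (h.weight_rpow_nonneg (hm.trans hk)) (P.kernelAt_nonneg _ _ _)))

lemma decay_mul_mass_le (hm : P.n₀ ≤ m) (hmn : m ≤ n) :
    decay P.γ m n * p.mass m ≤ p.mass n := by
  refine decay_mul_le (fun k hk => P.γ_lt_one k (hm.trans hk)) (fun k hk => ?_) hmn
  rw [p.mass_succ]
  exact le_add_of_nonneg_right
    (mul_nonneg (P.γ_nonneg _) (h.weight_rpow_nonneg (hm.trans hk)))

lemma mass_pos_of_le (hm : P.n₀ ≤ m) (hpos : 0 < p.mass m) (hmn : m ≤ n) : 0 < p.mass n :=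
  (h.decay_mul_mass_le hm hmn).trans_lt' (mul_pos (P.decay_pos' hm n) hpos)

lemma noisyAvg_add_decay_mul_le_g (hn : P.n₀ ≤ n) (x : EuclideanSpace ℝ (Fin d)) :
    p.noisyAvg (P.kernelAt x) n + decay P.γ P.n₀ n * p.g P.n₀ x ≤ p.g n x := by
  have hle := decay_mul_le (u := fun k => p.g k x - p.noisyAvg (P.kernelAt x) k) P.γ_lt_one
    (fun k hk => ?_) hn
  · simp only [noisyAvg, expAvg_self, sub_zero] at hle
    exact le_sub_iff_add_le'.1 hle
  · rw [p.g_succ_eq, noisyAvg_succ hk, mul_sub, add_sub_add_comm]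
    refine le_add_of_nonneg_right (sub_nonneg.2 ?_)
    have := P.γ_nonneg (k + 1)
    have := P.kernelAt_nonneg x (p.X (k + 1)) k
    gcongr
    exact truncPow_le_rpow P.η_pos.le (P.level_pos k).le (h.weight_nonneg hk)

lemma noisyAvg_one_add_decay_mul_le_mass (hn : P.n₀ ≤ n) :
    p.noisyAvg (fun _ _ => 1) n + decay P.γ P.n₀ n * p.mass P.n₀ ≤ p.mass n := by
  have hle := decay_mul_le (u := fun k => p.mass k - p.noisyAvg (fun _ _ => 1) k) P.γ_lt_one
    (fun k hk => ?_) hn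
  · simp only [noisyAvg, expAvg_self, sub_zero] at hle
    exact le_sub_iff_add_le'.1 hle
  · rw [p.mass_succ, noisyAvg_succ hk, mul_sub, add_sub_add_comm, mul_one]
    refine le_add_of_nonneg_right (sub_nonneg.2 ?_)
    have := P.γ_nonneg (k + 1)
    gcongr
    exact truncPow_le_rpow P.η_pos.le (P.level_pos k).le (h.weight_nonneg hk)

lemma neg_mul_le_estimate (hn : P.n₀ ≤ n) (x : EuclideanSpace ℝ (Fin d)) :
    -(2 * P.lam n * P.q₀ x) ≤ p.estimate n x := by
  have hq := h.q_nonneg' hn x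
  rw [p.q_eq (P.n₀_pos.trans_le hn)] at hq
  by_contra! hlt
  nlinarith [P.lam_le_half n hn, mul_nonneg (P.lam_pos n).le (P.q₀_nonneg x)]

/-- If the mass stayed negative, the values of the estimate at positive points of `g` would be
bounded below by `-2 * lam n * q₀`, and `g` would decay faster than `decay`, which it cannot. -/
lemma g_nonpos_of_mass_neg (hneg : ∀ n, P.n₀ ≤ n → p.mass n < 0) (hn : P.n₀ ≤ n)
    (x : EuclideanSpace ℝ (Fin d)) : p.g n x ≤ 0 := by
  have hlim : Tendsto (fun m => 2 * P.lam m * P.q₀ x * -p.mass n) atTop (𝓝 0) := by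
    simpa using ((P.tendsto_lam.const_mul 2).mul_const (P.q₀ x)).mul_const (-p.mass n)
  refine ge_of_tendsto hlim ((eventually_ge_atTop n).mono fun m hnm => ?_)
  have hdecay := P.decay_pos' hn m
  have hlam := P.lam_pos m
  have hq₀ := P.q₀_nonneg x
  have hest := h.neg_mul_le_estimate (hn.trans hnm) x
  rw [estimate, le_div_iff_of_neg (hneg m (hn.trans hnm))] at hest
  refine le_of_mul_le_mul_left ?_ hdecay
  calc decay P.γ n m * p.g n x ≤ p.g m x := h.decay_mul_g_le hn hnm x
    _ ≤ 2 * P.lam m * P.q₀ x * -p.mass m := by linarith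
    _ ≤ 2 * P.lam m * P.q₀ x * -(decay P.γ n m * p.mass n) := by
        gcongr
        exact h.decay_mul_mass_le hn hnm
    _ = decay P.γ n m * (2 * P.lam m * P.q₀ x * -p.mass n) := by ring

lemma mul_le_meanAvg_one (hq : ∀ n, P.n₀ ≤ n → ∀ x, P.lam n / 2 * P.q₀ x ≤ p.q n x)
    (hn : P.n₀ ≤ n) : (P.c / 2) ^ (1 - P.η) * P.lam n ^ (1 - P.η) * (1 - decay P.γ P.n₀ n)
      ≤ p.meanAvg (fun _ _ => 1) n := by
  have hc := P.c_pos
  refine mul_one_sub_decay_le (ζ := fun k => (P.c / 2) ^ (1 - P.η) * P.lam k ^ (1 - P.η))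
    P.γ_nonneg P.γ_lt_one (fun j k hjk => ?_) (h.meanAvg_nonneg P.isTestKernel_one _)
    (fun k hk => ?_) hn
  · have := (P.lam_pos k).le
    have := P.one_sub_η_pos.le
    dsimp only
    gcongr
    exact P.antitone_lam hjk
  · rw [meanAvg_succ hk]
    have := P.γ_nonneg (k + 1)
    gcongr
    simp only [mul_one]
    calc _ = ∫ y, (P.c / 2) ^ (1 - P.η) * P.lam k ^ (1 - P.η) * P.f y := by
          rw [integral_const_mul, P.integral_f, mul_one]
      _ ≤ _ := integral_mono ((integrable_of_integral_eq_one P.integral_f).const_mul _)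
          (h.integrable_tempered hk) fun y => P.mul_f_le_temperedDensity_level (hq k hk y)

end IsDensity

lemma mul_q₀_le_q_of_estimate_nonneg (hn : P.n₀ ≤ n) (hx : 0 ≤ p.estimate n x) :
    P.lam n / 2 * P.q₀ x ≤ p.q n x := by
  rw [p.q_eq (P.n₀_pos.trans_le hn)]
  nlinarith [mul_nonneg (P.lam_pos n).le (P.q₀_nonneg x),
    mul_nonneg (by linarith [P.lam_le_half n hn] : 0 ≤ 1 - P.lam n) hx]

lemma IsRegular.exists_mass_pos (h : p.IsRegular) : ∃ n, P.n₀ ≤ n ∧ 0 < p.mass n := by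
  by_contra! hcon
  have hneg n (hn : P.n₀ ≤ n) : p.mass n < 0 :=
    lt_of_le_of_ne (hcon n hn) (h.mass_ne_zero hn)
  have hq n (hn : P.n₀ ≤ n) x : P.lam n / 2 * P.q₀ x ≤ p.q n x :=
    mul_q₀_le_q_of_estimate_nonneg hn
      (div_nonneg_of_nonpos (h.g_nonpos_of_mass_neg hneg hn x) (hneg n hn).le)
  set a := (P.c / 2) ^ (1 - P.η)
  have ha : 0 < a := Real.rpow_pos_of_pos (half_pos P.c_pos) _
  obtain ⟨n, hconc, hinit, hdecay, hn⟩ := ((h.concentratesAt_one (min (1 / 2) (a / 8))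
    (by positivity)).and ((P.eventually_mul_decay_le_mul_lam_rpow (-p.mass P.n₀) (e := a / 16)
    (by positivity)).and ((P.eventually_mul_decay_le 1 one_half_pos).and
    (eventually_ge_atTop P.n₀)))).exists
  set l := P.lam n ^ (1 - P.η)
  have hl : 0 < l := P.lam_rpow_pos n
  have hmean : a * l / 2 ≤ p.meanAvg (fun _ _ => 1) n := by
    nlinarith [h.mul_le_meanAvg_one hq hn, mul_pos ha hl]
  have hmean_err : min (1 / 2) (a / 8) * p.meanAvg (fun _ _ => 1) n
      ≤ 1 / 2 * p.meanAvg (fun _ _ => 1) n :=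
    mul_le_mul_of_nonneg_right (min_le_left _ _) (h.meanAvg_nonneg P.isTestKernel_one n)
  have hlam_err : min (1 / 2) (a / 8) * l ≤ a / 8 * l :=
    mul_le_mul_of_nonneg_right (min_le_right _ _) hl.le
  linarith [(abs_le.1 hconc).1, h.noisyAvg_one_add_decay_mul_le_mass hn, hneg n hn, mul_pos ha hl]

end MidasPath

/-! ### A growth estimate for `y ↦ (1 - γ) y + γ κ y ^ (1 - η)` -/

lemma one_sub_two_mul_le_one_sub_rpow {s γ : ℝ} (hs : 0 ≤ s) (hγ : 0 ≤ γ) (hγ2 : γ ≤ 1 / 2) :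
    1 - 2 * s * γ ≤ (1 - γ) ^ s := by
  have hpos : 0 < 1 - γ := by linarith
  have hinv : (1 - γ)⁻¹ ≤ 1 + 2 * γ := by
    rw [inv_le_iff_one_le_mul₀ hpos]
    nlinarith
  have hlog := Real.one_sub_inv_le_log_of_pos hpos
  rw [Real.rpow_def_of_pos hpos]
  nlinarith [Real.add_one_le_exp (Real.log (1 - γ) * s)]

lemma one_add_mul_le_one_add_rpow {η t : ℝ} (hη : 0 ≤ η) (hη1 : η ≤ 1) (ht : 0 ≤ t)
    (ht1 : t ≤ 1) : 1 + (2 ^ η - 1) * t ≤ (1 + t) ^ η := by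
  have hconc := (Real.concaveOn_rpow hη hη1).2 (x := 1) (y := 2) (Set.mem_Ici.2 zero_le_one)
    (Set.mem_Ici.2 zero_le_two) (sub_nonneg.2 ht1) ht (by ring)
  simp only [smul_eq_mul, Real.one_rpow] at hconc
  calc 1 + (2 ^ η - 1) * t = (1 - t) * 1 + t * 2 ^ η := by ring
    _ ≤ ((1 - t) * 1 + t * 2) ^ η := hconc
    _ = (1 + t) ^ η := by ring_nf

section Growth

variable {η γ κ y u : ℝ}

lemma min_le_growth_rpow (hη : 0 < η) (hη1 : η < 1) (hγ : 0 ≤ γ) (hγ1 : γ < 1) (hy : 0 < y)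
    (hκ : 0 < κ) (hγκ : γ * κ ≤ y ^ η) :
    min κ (y ^ η + (2 ^ η - 1) * γ * (κ - y ^ η)) ≤ ((1 - γ) * y + γ * κ * y ^ (1 - η)) ^ η := by
  have hU : 0 < y ^ η := Real.rpow_pos_of_pos hy η
  set U := y ^ η
  have hκU : 0 < κ / U := div_pos hκ hU
  have hUκ : U * (κ / U) = κ := mul_div_cancel₀ κ hU.ne'
  have hpos : 0 < 1 + γ * (κ / U - 1) := by nlinarith
  have hfactor : (1 - γ) * y + γ * κ * y ^ (1 - η) = y * (1 + γ * (κ / U - 1)) := by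
    rw [Real.rpow_sub hy, Real.rpow_one]
    ring
  rw [hfactor, Real.mul_rpow hy.le hpos.le]
  rcases le_total U κ with hle | hle
  · have hone : 1 ≤ κ / U := (one_le_div hU).2 hle
    have hγκU : γ * (κ / U) ≤ 1 := by rwa [← mul_div_assoc, div_le_one hU]
    calc _ ≤ U + (2 ^ η - 1) * γ * (κ - U) := min_le_right _ _
      _ = U * (1 + (2 ^ η - 1) * (γ * (κ / U - 1))) := by
          linear_combination (1 - 2 ^ η) * γ * hUκ
      _ ≤ U * (1 + γ * (κ / U - 1)) ^ η := by
          gcongr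
          exact one_add_mul_le_one_add_rpow hη.le hη1.le
            (mul_nonneg hγ (sub_nonneg.2 hone)) (by linarith)
  · have hone : κ / U ≤ 1 := (div_le_one hU).2 hle
    have hrpow := Real.rpow_le_rpow_of_exponent_ge hpos
      (by linarith [mul_nonneg hγ (sub_nonneg.2 hone)]) hη1.le
    rw [Real.rpow_one] at hrpow
    calc _ ≤ κ := min_le_left _ _
      _ ≤ U + γ * (κ - U) := by nlinarith
      _ = U * (1 + γ * (κ / U - 1)) := by linear_combination -γ * hUκ
      _ ≤ U * (1 + γ * (κ / U - 1)) ^ η := by gcongr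

lemma sub_mul_rpow_le_growth_rpow (hη : 0 < η) (hη1 : η < 1) (hγ : 0 ≤ γ) (hγ2 : γ ≤ 1 / 2)
    (hy : 0 < y) (hκ : 0 < κ) (hγκ : γ * κ ≤ y ^ η) (huy : u ≤ y ^ η) (huκ : u ≤ κ) :
    κ - (κ - u) * (1 - γ) ^ (((2 : ℝ) ^ η - 1) / 2)
      ≤ ((1 - γ) * y + γ * κ * y ^ (1 - η)) ^ η := by
  have h1 : (1 : ℝ) < 2 ^ η := Real.one_lt_rpow one_lt_two hη
  have h2 : (2 : ℝ) ^ η ≤ 2 := by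
    simpa only [Real.rpow_one] using Real.rpow_le_rpow_of_exponent_le one_le_two hη1.le
  have hκu := sub_nonneg.2 huκ
  refine le_trans (le_min ?_ ?_) (min_le_growth_rpow hη hη1 hγ (by linarith) hy hκ hγκ)
  · exact sub_le_self _ (mul_nonneg hκu (Real.rpow_nonneg (by linarith) _))
  · have hγ1 : (2 ^ η - 1) * γ ≤ 1 := by nlinarith
    have hrpow := one_sub_two_mul_le_one_sub_rpow
      (s := ((2 : ℝ) ^ η - 1) / 2) (by linarith) hγ hγ2
    nlinarith [mul_le_mul_of_nonneg_left hrpow hκu,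
      mul_nonneg (sub_nonneg.2 huy) (sub_nonneg.2 hγ1)]

end Growth

/-! ### Positivity from some time on -/

namespace MidasPath

variable {d : ℕ} {P : MidasParams d} {p : MidasPath P} {N n : ℕ} {M R δ : ℝ}
  {x x₀ : EuclideanSpace ℝ (Fin d)}

/-- From time `N` on, the mass is positive and the estimate is bounded below by a decaying multiple
of `q₀`. -/
structure IsStarted (p : MidasPath P) (N : ℕ) (M : ℝ) : Prop where
  n₀_le : P.n₀ ≤ N
  pos : 0 < M
  mass_pos : ∀ n, N ≤ n → 0 < p.mass n
  neg_le_g : ∀ n, N ≤ n → ∀ x, -(M * decay P.γ P.n₀ n * P.q₀ x) ≤ p.g n x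

/-- From time `N` on, the policy explores a ball on which the target is at least `δ`. -/
structure ExploresBall (p : MidasPath P) (N : ℕ) (x₀ : EuclideanSpace ℝ (Fin d)) (R δ : ℝ) :
    Prop where
  n₀_le : P.n₀ ≤ N
  R_pos : 0 < R
  δ_pos : 0 < δ
  le_f : ∀ x ∈ closedBall x₀ R, δ ≤ P.f x
  le_q : ∀ n, N ≤ n → ∀ x ∈ closedBall x₀ R, P.lam n / 2 * P.q₀ x ≤ p.q n x

lemma IsRegular.isStarted_of_mass_pos (h : p.IsRegular) (hN : P.n₀ ≤ N) (hpos : 0 < p.mass N) :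
    p.IsStarted N (2 * P.lam N * p.mass N / decay P.γ P.n₀ N) where
  n₀_le := hN
  pos := by
    have := P.lam_pos N
    have := P.decay_pos N
    positivity
  mass_pos _ hn := h.mass_pos_of_le hN hpos hn
  neg_le_g n hn x := by
    have hest := h.neg_mul_le_estimate hN x
    rw [estimate, le_div_iff₀ hpos] at hest
    have := P.decay_pos' hN n
    calc _ = decay P.γ N n * (-(2 * P.lam N * P.q₀ x) * p.mass N) := by
          have := (P.decay_pos N).ne'
          rw [← decay_mul_decay hN hn]
          field_simp
      _ ≤ decay P.γ N n * p.g N x := by gcongr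
      _ ≤ p.g n x := h.decay_mul_g_le hN hn x

lemma IsRegular.exists_pos_and_ball_nonneg (h : p.IsRegular) (hN : P.n₀ ≤ N)
    (hpos : 0 < p.mass N) : ∃ x₀, 0 < P.f x₀ ∧ ∀ᶠ x in 𝓝 x₀, 0 ≤ p.g N x := by
  by_cases hoff : p.IsOffSupport N
  · obtain ⟨x₀, hx₀⟩ := P.exists_f_pos
    refine ⟨x₀, hx₀, .of_forall fun x => ?_⟩
    simpa only [estimate, le_div_iff₀ hpos, zero_mul] using h.estimate_nonneg N hN hoff x
  · simp only [IsOffSupport, not_forall, not_le, estimate, div_pos_iff_of_pos_right hpos] at hoff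
    obtain ⟨x₀, hf, hg⟩ := hoff
    exact ⟨x₀, hf, ((p.continuous_g N).continuousAt.eventually (lt_mem_nhds hg)).mono
      fun x => le_of_lt⟩

lemma IsStarted.exploresBall_of_nonneg (hs : p.IsStarted N M) (h : p.IsDensity) (hR : 0 < R)
    (hδ : 0 < δ) (hf : ∀ x ∈ closedBall x₀ R, δ ≤ P.f x)
    (hg : ∀ x ∈ closedBall x₀ R, 0 ≤ p.g N x) : p.ExploresBall N x₀ R δ where
  n₀_le := hs.n₀_le
  R_pos := hR
  δ_pos := hδ
  le_f := hf
  le_q n hn x hx := mul_q₀_le_q_of_estimate_nonneg (hs.n₀_le.trans hn) (div_nonneg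
    ((mul_nonneg (P.decay_pos' hs.n₀_le n).le (hg x hx)).trans (h.decay_mul_g_le hs.n₀_le hn x))
    (hs.mass_pos n hn).le)

lemma IsRegular.exists_isStarted (h : p.IsRegular) :
    ∃ N M, p.IsStarted N M ∧ ∃ x₀ R δ, p.ExploresBall N x₀ R δ := by
  obtain ⟨N, hN, hpos⟩ := h.exists_mass_pos
  have hs := h.isStarted_of_mass_pos hN hpos
  obtain ⟨x₀, hf, hg⟩ := h.exists_pos_and_ball_nonneg hN hpos
  have hf' : ∀ᶠ x in 𝓝 x₀, P.f x₀ / 2 ≤ P.f x :=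
    (P.continuous_f.continuousAt.eventually (lt_mem_nhds (half_lt_self hf))).mono fun x => le_of_lt
  obtain ⟨R, hR, hball⟩ := nhds_basis_closedBall.eventually_iff.1 (hf'.and hg)
  exact ⟨N, _, hs, x₀, R, P.f x₀ / 2, hs.exploresBall_of_nonneg h.toIsDensity hR (half_pos hf)
    (fun x hx => (hball hx).1) fun x hx => (hball hx).2⟩

/-! ### Lower bounds for the mean average -/

lemma IsRegular.eventually_one_sub_mul_meanAvg_sub_le (h : p.IsRegular) {ε : ℝ} (hε : 0 < ε)
    (R : ℝ) : ∀ᶠ n in atTop, ∀ x, ‖x‖ ≤ R →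
      (1 - ε) * p.meanAvg (P.kernelAt x) n - ε * P.lam n ^ (1 - P.η) ≤ p.g n x := by
  obtain ⟨D, hD⟩ := p.exists_forall_abs_g_le P.n₀
  filter_upwards [h.concentratesAt_kernelAt (ε / 2) (half_pos hε),
    P.eventually_mul_decay_le_mul_lam_rpow D (half_pos hε), eventually_ge_atTop P.n₀,
    tendsto_natCast_atTop_atTop.eventually_ge_atTop R] with n hconc hinit hn hR x hx
  have hdecay := P.decay_pos n
  have hT := h.meanAvg_nonneg (P.isTestKernel_kernelAt x) n
  nlinarith [(abs_le.1 (hconc x (hx.trans hR))).1, h.noisyAvg_add_decay_mul_le_g hn x,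
    mul_le_mul_of_nonneg_left (abs_le.1 (hD x)).1 hdecay.le, mul_nonneg hε.le hT]

lemma IsDensity.le_integral_tempered_mul_kernelAt (h : p.IsDensity) (hn : P.n₀ ≤ n)
    {A : Set (EuclideanSpace ℝ (Fin d))} (hA : MeasurableSet A) {v κ : ℝ} (hv : 0 ≤ v)
    (hle : ∀ y ∈ A, v ≤ p.tempered n y) (hκ : κ ≤ ∫ y in A, P.kernelAt x n y) :
    v * κ ≤ ∫ y, p.tempered n y * P.kernelAt x n y := by
  have hker := P.kernelAt_nonneg x (k := n)
  have hint : Integrable fun y => p.tempered n y * P.kernelAt x n y :=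
    h.integrable_tempered_mul (P.isTestKernel_kernelAt x) hn
  have hker_int : Integrable (P.kernelAt x n) :=
    P.integrable_kernelAt x _
  calc v * κ ≤ v * ∫ y in A, P.kernelAt x n y := by gcongr
    _ = ∫ y in A, v * P.kernelAt x n y := (integral_const_mul _ _).symm
    _ ≤ ∫ y in A, p.tempered n y * P.kernelAt x n y :=
        setIntegral_mono_on (hker_int.const_mul _).integrableOn hint.integrableOn hA
          fun y hy => mul_le_mul_of_nonneg_right (hle y hy) (hker y)
    _ ≤ _ := setIntegral_le_integral hint
        (.of_forall fun y => mul_nonneg (h.tempered_nonneg hn y) (hker y))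

end MidasPath

lemma MidasParams.eventually_b {d : ℕ} (P : MidasParams d) {s : ℝ → Prop}
    (hs : ∀ᶠ b in 𝓝[>] 0, s b) : ∀ᶠ k in atTop, s (P.b (k + 1)) :=
  (tendsto_nhdsWithin_iff.2 ⟨(tendsto_add_atTop_iff_nat 1).2 P.tendsto_b,
    .of_forall fun k => P.b_pos (k + 1)⟩).eventually hs

namespace MidasPath

variable {d : ℕ} {P : MidasParams d} {p : MidasPath P} {N : ℕ} {R δ : ℝ}
  {x₀ : EuclideanSpace ℝ (Fin d)}

namespace ExploresBall

variable (he : p.ExploresBall N x₀ R δ)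
include he

lemma exists_mul_lam_rpow_le_meanAvg (h : p.IsDensity) : ∃ a > 0, ∀ᶠ n in atTop,
    ∀ x ∈ closedBall x₀ R, a * P.lam n ^ (1 - P.η) ≤ p.meanAvg (P.kernelAt x) n := by
  have hc := P.c_pos
  have hδ := he.δ_pos
  obtain ⟨κ, hκ, hball⟩ := exists_forall_eventually_le_setIntegral_closedBall_kb P.K_nonneg
    P.integrable_K P.lipschitz_K.continuous.continuousAt P.K_zero_pos
  obtain ⟨m, hm⟩ := eventually_atTop.1 (P.eventually_b (hball R he.R_pos))
  set k₀ := max N m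
  have hk₀ : P.n₀ ≤ k₀ := he.n₀_le.trans (le_max_left _ _)
  set a := (P.c / 2) ^ (1 - P.η) * δ * κ
  have hgrow n (hn : k₀ ≤ n) x (hx : x ∈ closedBall x₀ R) :
      a * P.lam n ^ (1 - P.η) * (1 - decay P.γ k₀ n) ≤ p.meanAvg (P.kernelAt x) n := by
    refine mul_one_sub_decay_le (ζ := fun k => a * P.lam k ^ (1 - P.η)) P.γ_nonneg
      (fun k hk => P.γ_lt_one k (hk₀.trans hk)) (fun j k hjk => ?_)
      (h.meanAvg_nonneg (P.isTestKernel_kernelAt x) _) (fun k hk => ?_) hn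
    · have := (P.lam_pos k).le
      have := P.one_sub_η_pos.le
      dsimp only
      gcongr
      exact P.antitone_lam hjk
    · rw [meanAvg_succ (hk₀.trans hk)]
      have := P.γ_nonneg (k + 1)
      have := P.lam_rpow_pos k
      gcongr
      calc a * P.lam k ^ (1 - P.η) = (P.c / 2) ^ (1 - P.η) * P.lam k ^ (1 - P.η) * δ * κ := by ring
        _ ≤ _ := h.le_integral_tempered_mul_kernelAt (hk₀.trans hk) measurableSet_closedBall
          (by positivity) (fun y hy => le_trans (by gcongr; exact he.le_f y hy)
            (P.mul_f_le_temperedDensity_level (he.le_q k ((le_max_left _ _).trans hk) y hy)))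
          (hm k ((le_max_right _ _).trans hk) x₀ x hx)
  refine ⟨a / 2, by positivity, ?_⟩
  filter_upwards [eventually_ge_atTop k₀, P.eventually_mul_decay_le 1
    (half_pos (P.decay_pos k₀))] with n hn hdecay x hx
  refine (hgrow n hn x hx).trans' ?_
  rw [← decay_mul_decay hk₀ hn] at hdecay
  have hhalf : decay P.γ k₀ n ≤ 1 / 2 := by nlinarith [P.decay_pos k₀]
  have : 0 < a * P.lam n ^ (1 - P.η) := mul_pos (by positivity) (P.lam_rpow_pos n)
  nlinarith

lemma exists_mul_lam_rpow_le_meanAvg_and_half_le_g (h : p.IsRegular) : ∃ a > 0, ∀ᶠ n in atTop,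
    ∀ x ∈ closedBall x₀ R, a * P.lam n ^ (1 - P.η) ≤ p.meanAvg (P.kernelAt x) n ∧
      p.meanAvg (P.kernelAt x) n / 2 ≤ p.g n x := by
  obtain ⟨a, ha, hmean⟩ := he.exists_mul_lam_rpow_le_meanAvg h.toIsDensity
  refine ⟨a, ha, ?_⟩
  set ε := min (1 / 4) (a / 4)
  filter_upwards [hmean, h.eventually_one_sub_mul_meanAvg_sub_le (ε := ε) (by positivity)
    (‖x₀‖ + R)] with n hmean hg x hx
  have hT := hmean x hx
  have hlam := P.lam_rpow_pos n
  have hnorm : ‖x‖ ≤ ‖x₀‖ + R := by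
    linarith [norm_le_norm_add_norm_sub' x x₀, mem_closedBall_iff_norm.1 hx]
  have hε : ε * p.meanAvg (P.kernelAt x) n ≤ 1 / 4 * p.meanAvg (P.kernelAt x) n :=
    mul_le_mul_of_nonneg_right (min_le_left _ _)
      (h.meanAvg_nonneg (P.isTestKernel_kernelAt x) n)
  have hε' : ε * P.lam n ^ (1 - P.η) ≤ a / 4 * P.lam n ^ (1 - P.η) :=
    mul_le_mul_of_nonneg_right (min_le_right _ _) hlam.le
  exact ⟨hT, by linarith [hg x hnorm]⟩

end ExploresBall

end MidasPath

namespace MidasParams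

variable {d : ℕ} (P : MidasParams d)

lemma eventually_γ_mul_le (C : ℝ) {a : ℝ} (ha : 0 < a) :
    ∀ᶠ n in atTop, P.γ (n + 1) * C ≤ (a * P.lam n ^ (1 - P.η)) ^ P.η := by
  have hlim : Tendsto (fun n => P.γ n / (P.lam n * P.b n ^ d) * C) atTop (𝓝 0) := by
    simpa only [zero_mul] using P.tendsto_γ_div.mul_const C
  have haη := Real.rpow_pos_of_pos ha P.η
  filter_upwards [((tendsto_add_atTop_iff_nat 1).2 hlim).eventually_le_const haη,
    eventually_ge_atTop P.n₀] with n hle hn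
  have hlam := P.lam_pos (n + 1)
  have hb := P.b_pos (n + 1)
  have hlb : P.lam (n + 1) * P.b (n + 1) ^ d ≤ P.lam (n + 1) :=
    mul_le_of_le_one_right hlam.le (pow_le_one₀ hb.le (P.b_le_one (n + 1) (by omega)))
  have hexp : (1 - P.η) * P.η ≤ 1 := by nlinarith [P.η_pos, P.η_lt_one]
  rw [div_mul_eq_mul_div, div_le_iff₀ (by positivity)] at hle
  calc P.γ (n + 1) * C ≤ a ^ P.η * (P.lam (n + 1) * P.b (n + 1) ^ d) := hle
    _ ≤ a ^ P.η * P.lam n ^ ((1 - P.η) * P.η) := by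
        gcongr
        exact hlb.trans ((P.antitone_lam n.le_succ).trans (P.lam_le_lam_rpow hexp hn))
    _ = (a * P.lam n ^ (1 - P.η)) ^ P.η := by
        rw [Real.mul_rpow ha.le (P.lam_rpow_pos n).le, Real.rpow_mul (P.lam_pos n).le]

end MidasParams

namespace MidasPath

variable {d : ℕ} {P : MidasParams d} {p : MidasPath P} {N m n : ℕ} {M R δ : ℝ}
  {x x₀ : EuclideanSpace ℝ (Fin d)}

/-! ### Escape from small values while the mass is bounded -/

section Escape

variable (h : p.IsDensity) (he : p.ExploresBall N x₀ R δ) {κ u v : ℝ}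
include h he

lemma ExploresBall.mul_le_meanAvg_succ (hn : N ≤ n) (hpos : 0 < p.mass n) (hmass : p.mass n ≤ 2)
    (hg : ∀ y ∈ closedBall x₀ R, p.meanAvg (P.kernelAt y) n / 2 ≤ p.g n y)
    (hker : κ ≤ ∫ y in closedBall x₀ R, P.kernelAt x n y) (hx : x ∈ closedBall x₀ R) (hv : 0 < v)
    (hvT : ∀ y ∈ closedBall x₀ R, v ≤ p.meanAvg (P.kernelAt y) n) :
    (1 - P.γ (n + 1)) * v + P.γ (n + 1) * (δ ^ P.η * (1 / 8) ^ (1 - P.η) * κ) * v ^ (1 - P.η)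
      ≤ p.meanAvg (P.kernelAt x) (n + 1) := by
  have hn₀ := he.n₀_le.trans hn
  have hδ := he.δ_pos
  have hη := P.η_pos.le
  have hη' := P.one_sub_η_pos.le
  have hq y (hy : y ∈ closedBall x₀ R) : v / 8 ≤ p.q n y := by
    have hest : v / 4 ≤ p.estimate n y := by
      rw [estimate, le_div_iff₀ hpos]
      nlinarith [hg y hy, hvT y hy]
    rw [p.q_eq (P.n₀_pos.trans_le hn₀)]
    nlinarith [P.lam_le_half n hn₀, mul_nonneg (P.lam_pos n).le (P.q₀_nonneg y)]
  have htempered y (hy : y ∈ closedBall x₀ R) :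
      δ ^ P.η * (v / 8) ^ (1 - P.η) ≤ p.tempered n y := by
    rw [tempered, P.temperedDensity_level_eq (he.le_q n hn y hy)]
    have := Real.rpow_nonneg (P.f_nonneg y) P.η
    gcongr
    exacts [he.le_f y hy, hq y hy]
  have hint := h.le_integral_tempered_mul_kernelAt hn₀ measurableSet_closedBall (by positivity)
    htempered hker
  rw [div_eq_mul_one_div v, Real.mul_rpow hv.le (by norm_num)] at hint
  rw [meanAvg_succ hn₀, mul_assoc (P.γ (n + 1))]
  have := P.one_sub_γ_pos hn₀
  have := P.γ_nonneg (n + 1)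
  gcongr
  · exact hvT x hx
  · exact hint.trans' (le_of_eq (by ring))

lemma ExploresBall.sub_mul_rpow_le_meanAvg_succ_rpow (hn : N ≤ n) (hpos : 0 < p.mass n)
    (hmass : p.mass n ≤ 2)
    (hg : ∀ y ∈ closedBall x₀ R, p.meanAvg (P.kernelAt y) n / 2 ≤ p.g n y) (hκ : 0 < κ)
    (hker : κ / (δ ^ P.η * (1 / 8) ^ (1 - P.η)) ≤ ∫ y in closedBall x₀ R, P.kernelAt x n y)
    (hx : x ∈ closedBall x₀ R)
    (hγT : ∀ y ∈ closedBall x₀ R, P.γ (n + 1) * κ ≤ p.meanAvg (P.kernelAt y) n ^ P.η)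
    (huκ : u ≤ κ) (huT : ∀ y ∈ closedBall x₀ R, u ≤ p.meanAvg (P.kernelAt y) n ^ P.η) :
    κ - (κ - u) * (1 - P.γ (n + 1)) ^ (((2 : ℝ) ^ P.η - 1) / 2)
      ≤ p.meanAvg (P.kernelAt x) (n + 1) ^ P.η := by
  have hn₀ := he.n₀_le.trans hn
  have hη := P.η_pos
  have hδ : 0 < δ ^ P.η * (1 / 8) ^ (1 - P.η) := by
    have := he.δ_pos
    positivity
  have hγ := P.γ_pos (n + 1)
  set v := max u (P.γ (n + 1) * κ) ^ P.η⁻¹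
  have hmax : 0 < max u (P.γ (n + 1) * κ) := lt_max_of_lt_right (mul_pos hγ hκ)
  have hv : 0 < v := Real.rpow_pos_of_pos hmax _
  have hvη : v ^ P.η = max u (P.γ (n + 1) * κ) := Real.rpow_inv_rpow hmax.le hη.ne'
  have hvT y (hy : y ∈ closedBall x₀ R) : v ≤ p.meanAvg (P.kernelAt y) n :=
    (Real.rpow_le_rpow_iff hv.le (h.meanAvg_nonneg (P.isTestKernel_kernelAt y) n) hη).1
      (hvη.trans_le (max_le (huT y hy) (hγT y hy)))
  have hstep := he.mul_le_meanAvg_succ h hn hpos hmass hg hker hx hv hvT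
  rw [mul_div_cancel₀ _ hδ.ne'] at hstep
  have := P.one_sub_γ_pos hn₀
  exact (sub_mul_rpow_le_growth_rpow hη P.η_lt_one hγ.le (P.γ_le_half (n + 1) (by omega)) hv hκ
    (hvη ▸ le_max_right _ _) (hvη ▸ le_max_left _ _) huκ).trans
    (Real.rpow_le_rpow (by positivity) hstep hη.le)

end Escape

lemma ExploresBall.exists_mul_one_sub_decay_rpow_le_meanAvg_rpow
    (he : p.ExploresBall N x₀ R δ) (h : p.IsRegular)
    (hpos : ∀ n, N ≤ n → 0 < p.mass n) : ∃ κ > 0, ∃ s > (0 : ℝ), ∃ k₁, N ≤ k₁ ∧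
      (∀ n, k₁ ≤ n → ∀ x ∈ closedBall x₀ R, p.meanAvg (P.kernelAt x) n / 2 ≤ p.g n x) ∧
      ∀ m n, k₁ ≤ m → m ≤ n → (∀ k, m ≤ k → k < n → p.mass k ≤ 2) → ∀ x ∈ closedBall x₀ R,
        κ * (1 - decay P.γ m n ^ s) ≤ p.meanAvg (P.kernelAt x) n ^ P.η := by
  obtain ⟨κ, hκ, hball⟩ := exists_forall_eventually_le_setIntegral_closedBall_kb P.K_nonneg
    P.integrable_K P.lipschitz_K.continuous.continuousAt P.K_zero_pos
  obtain ⟨a, ha, hmean⟩ := he.exists_mul_lam_rpow_le_meanAvg_and_half_le_g h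
  have hη := P.η_pos
  have hδ : 0 < δ ^ P.η * (1 / 8) ^ (1 - P.η) := by
    have := he.δ_pos
    positivity
  set κ' := δ ^ P.η * (1 / 8) ^ (1 - P.η) * κ
  have hκ' : 0 < κ' := mul_pos hδ hκ
  obtain ⟨k₁, hk₁⟩ := eventually_atTop.1 ((P.eventually_b (hball R he.R_pos)).and
    (hmean.and ((P.eventually_γ_mul_le κ' ha).and (eventually_ge_atTop N))))
  have hs : 0 < ((2 : ℝ) ^ P.η - 1) / 2 := by linarith [Real.one_lt_rpow one_lt_two hη]
  refine ⟨κ', hκ', _, hs, k₁, (hk₁ k₁ le_rfl).2.2.2,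
    fun n hn x hx => ((hk₁ n hn).2.1 x hx).2, fun m n hm hmn => ?_⟩
  induction n, hmn using Nat.le_induction with
  | base =>
    intro _ x _
    rw [decay_self, Real.one_rpow, sub_self, mul_zero]
    exact Real.rpow_nonneg (h.meanAvg_nonneg (P.isTestKernel_kernelAt x) m) _
  | succ n hmn ih =>
    intro hmass x hx
    obtain ⟨hker, hmean, hγ, hn⟩ := hk₁ n (hm.trans hmn)
    have hm₀ := he.n₀_le.trans (hk₁ m hm).2.2.2
    have hdecay := (P.decay_pos' hm₀ n).le
    have hlam := P.lam_rpow_pos n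
    have hstep := he.sub_mul_rpow_le_meanAvg_succ_rpow h.toIsDensity hn (hpos n hn)
      (hmass n hmn n.lt_succ_self) (fun y hy => (hmean y hy).2) hκ'
      ((mul_div_cancel_left₀ κ hδ.ne').trans_le (hker x₀ x hx)) hx
      (fun y hy => hγ.trans (Real.rpow_le_rpow (by positivity) (hmean y hy).1 hη.le))
      (mul_le_of_le_one_right hκ'.le (sub_le_self _ (Real.rpow_nonneg hdecay _)))
      (ih fun k hk hkn => hmass k hk (hkn.trans n.lt_succ_self))
    rw [decay_succ hmn, Real.mul_rpow (P.one_sub_γ_pos (he.n₀_le.trans hn)).le hdecay]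
    exact hstep.trans' (le_of_eq (by ring))

/-- While the mass stays bounded, the mean average on an explored ball rises above a positive level
`v` as soon as the starting time `m` is forgotten up to a factor `θ`. -/
lemma ExploresBall.exists_escape (he : p.ExploresBall N x₀ R δ) (h : p.IsRegular)
    (hpos : ∀ n, N ≤ n → 0 < p.mass n) : ∃ v > 0, ∃ θ > 0, ∃ k₁, N ≤ k₁ ∧
      (∀ n, k₁ ≤ n → ∀ x ∈ closedBall x₀ R, p.meanAvg (P.kernelAt x) n / 2 ≤ p.g n x) ∧
      ∀ m n, k₁ ≤ m → m ≤ n → (∀ k, m ≤ k → k < n → p.mass k ≤ 2) → decay P.γ m n ≤ θ →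
        ∀ x ∈ closedBall x₀ R, v ≤ p.meanAvg (P.kernelAt x) n := by
  obtain ⟨κ, hκ, s, hs, k₁, hNk₁, hg, hescape⟩ :=
    he.exists_mul_one_sub_decay_rpow_le_meanAvg_rpow h hpos
  refine ⟨(κ / 2) ^ P.η⁻¹, by positivity, (1 / 2) ^ s⁻¹, by positivity, k₁, hNk₁, hg,
    fun m n hm hmn hmass hdecay x hx => ?_⟩
  have hdecay_rpow : decay P.γ m n ^ s ≤ 1 / 2 :=
    (Real.rpow_le_rpow (P.decay_pos' (he.n₀_le.trans (hNk₁.trans hm)) n).le hdecay hs.le).trans_eq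
      (Real.rpow_inv_rpow (by norm_num) hs.ne')
  exact (Real.rpow_inv_le_iff_of_pos (by positivity)
    (h.meanAvg_nonneg (P.isTestKernel_kernelAt x) n) P.η_pos).2
      (by nlinarith [hescape m n hm hmn hmass x hx])

end MidasPath

lemma MidasParams.eventually_exists_decay_le {d : ℕ} (P : MidasParams d) {M θ : ℝ} {N : ℕ}
    (hN : P.n₀ ≤ N) (hM : 0 < M) (hθ : 0 < θ) : ∀ᶠ n in atTop, ∃ k, N ≤ k ∧ k ≤ n ∧
      M * decay P.γ P.n₀ k ≤ P.lam n ∧ decay P.γ k n ≤ θ := by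
  classical
  filter_upwards [eventually_ge_atTop N, P.eventually_mul_decay_le_mul_lam M one_pos,
    P.eventually_mul_decay_le_mul_lam (2 * M) hθ,
    P.eventually_mul_decay_le 1 (mul_pos hθ (P.decay_pos N))] with n hn hdecay hdecay' hdecayN
  have hex : ∃ k, N ≤ k ∧ M * decay P.γ P.n₀ k ≤ P.lam n := ⟨n, hn, by linarith⟩
  obtain ⟨hNk, hk⟩ := Nat.find_spec hex
  have hkn : Nat.find hex ≤ n := Nat.find_min' hex ⟨hn, by linarith⟩
  refine ⟨Nat.find hex, hNk, hkn, hk, ?_⟩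
  have hpos := P.decay_pos (Nat.find hex)
  rw [← decay_mul_decay (hN.trans hNk) hkn] at hdecay' hdecayN
  rcases hNk.eq_or_lt with heq | hlt
  · rw [← heq] at hdecayN hpos ⊢
    nlinarith
  · obtain ⟨j, hj⟩ := Nat.exists_eq_add_of_lt hlt
    have hmin := Nat.find_min hex (m := N + j) (by omega)
    have hlam : P.lam n < M * decay P.γ P.n₀ (N + j) := by
      by_contra! hle
      exact hmin ⟨by omega, hle⟩
    have hγ := P.γ_le_half (N + j + 1) (by omega)
    have hdecay_pos := P.decay_pos (N + j)
    have hsucc : P.lam n ≤ 2 * M * decay P.γ P.n₀ (Nat.find hex) := by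
      rw [hj, decay_succ (by omega)]
      nlinarith [mul_pos hM hdecay_pos]
    refine le_of_mul_le_mul_left ?_ (mul_pos (mul_pos two_pos hM) hpos)
    calc _ = 2 * M * (decay P.γ P.n₀ (Nat.find hex) * decay P.γ (Nat.find hex) n) := by ring
      _ ≤ θ * P.lam n := hdecay'
      _ ≤ θ * (2 * M * decay P.γ P.n₀ (Nat.find hex)) := by gcongr
      _ = _ := by ring

namespace MidasPath

variable {d : ℕ} {P : MidasParams d} {p : MidasPath P} {N m n : ℕ} {M R δ : ℝ}
  {x x₀ : EuclideanSpace ℝ (Fin d)}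

/-! ### The policy eventually explores the whole space -/

lemma integrable_g_add (p : MidasPath P) (n : ℕ) (C : ℝ) :
    Integrable fun x => p.g n x + C * P.q₀ x :=
  (p.integrable_g n).add ((integrable_of_integral_eq_one P.integral_q₀).const_mul C)

lemma integral_g_add (p : MidasPath P) (n : ℕ) (C : ℝ) :
    ∫ x, (p.g n x + C * P.q₀ x) = p.mass n + C := by
  rw [integral_add (p.integrable_g n) ((integrable_of_integral_eq_one P.integral_q₀).const_mul C),
    integral_const_mul, P.integral_q₀, mul_one, mass]

/-- From time `N` on, the policy dominates a multiple of `q₀`, which makes the truncation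
inactive. -/
structure Explores (p : MidasPath P) (N : ℕ) (M : ℝ) : Prop extends p.IsStarted N M where
  le_q : ∀ n, N ≤ n → ∀ x, P.lam n / 2 * P.q₀ x ≤ p.q n x

namespace IsStarted

variable (hs : p.IsStarted N M)
include hs

lemma mass_le_two (h : p.IsDensity) (hm : N ≤ m) (hlam : M * decay P.γ P.n₀ m ≤ P.lam n)
    (hmass : P.lam n * p.mass n ≤ 2 * M * decay P.γ P.n₀ n) {k : ℕ} (hmk : m ≤ k) (hkn : k ≤ n) :
    p.mass k ≤ 2 := by
  have hM := hs.pos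
  have hm₀ := hs.n₀_le.trans hm
  have hk := P.decay_pos' (hm₀.trans hmk) n
  have hlam_pos := P.lam_pos n
  refine le_of_mul_le_mul_left ?_ (mul_pos hlam_pos hk)
  calc P.lam n * decay P.γ k n * p.mass k = P.lam n * (decay P.γ k n * p.mass k) := by ring
    _ ≤ P.lam n * p.mass n := by
        gcongr
        exact h.decay_mul_mass_le (hm₀.trans hmk) hkn
    _ ≤ 2 * (M * decay P.γ P.n₀ k) * decay P.γ k n := by
        rw [← decay_mul_decay (hm₀.trans hmk) hkn] at hmass
        linarith
    _ ≤ 2 * P.lam n * decay P.γ k n := by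
        gcongr
        exact hlam.trans' (mul_le_mul_of_nonneg_left (P.decay_le_decay hm₀ hmk) hM.le)
    _ = P.lam n * decay P.γ k n * 2 := by ring

lemma setIntegral_g_add_le (hn : N ≤ n) (A : Set (EuclideanSpace ℝ (Fin d))) :
    ∫ x in A, (p.g n x + M * decay P.γ P.n₀ n * P.q₀ x) ≤ p.mass n + M * decay P.γ P.n₀ n := by
  rw [← p.integral_g_add]
  exact setIntegral_le_integral (p.integrable_g_add n _)
    (.of_forall fun x => neg_le_iff_add_nonneg.1 (hs.neg_le_g n hn x))

lemma mul_volume_le_mass {v : ℝ} (hn : N ≤ n) (hg : ∀ x ∈ closedBall x₀ R, v ≤ p.g n x) :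
    v * volume.real (closedBall x₀ R) ≤ p.mass n + M * decay P.γ P.n₀ n := by
  refine (hs.setIntegral_g_add_le hn (closedBall x₀ R)).trans' ?_
  rw [mul_comm, ← smul_eq_mul, ← setIntegral_const]
  refine setIntegral_mono_on (integrableOn_const measure_closedBall_lt_top.ne)
    (p.integrable_g_add n _).integrableOn measurableSet_closedBall fun x hx => ?_
  have := hs.pos
  have := P.decay_pos n
  exact le_add_of_le_of_nonneg (hg x hx) (mul_nonneg (by positivity) (P.q₀_nonneg x))

lemma le_q_of_le_mass (hn : N ≤ n) (hmass : 2 * M * decay P.γ P.n₀ n ≤ P.lam n * p.mass n)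
    (x : EuclideanSpace ℝ (Fin d)) : P.lam n / 2 * P.q₀ x ≤ p.q n x := by
  have hn₀ := hs.n₀_le.trans hn
  have hest : -(P.lam n / 2 * P.q₀ x) ≤ p.estimate n x := by
    rw [estimate, le_div_iff₀ (hs.mass_pos n hn)]
    nlinarith [hs.neg_le_g n hn x, mul_le_mul_of_nonneg_right hmass (P.q₀_nonneg x)]
  rw [p.q_eq (P.n₀_pos.trans_le hn₀)]
  nlinarith [mul_nonneg (P.lam_pos n).le (P.q₀_nonneg x), P.lam_le_half n hn₀, P.lam_pos n]

/-- If the mass were small at time `n`, it would have been bounded on a time window long enough for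
the estimate to grow on the explored ball, and the mass would not be small. -/
lemma eventually_mul_decay_le_lam_mul_mass (h : p.IsRegular) (he : p.ExploresBall N x₀ R δ) :
    ∀ᶠ n in atTop, 2 * M * decay P.γ P.n₀ n ≤ P.lam n * p.mass n := by
  obtain ⟨v, hv, θ, hθ, k₁, hNk₁, hg, hescape⟩ := he.exists_escape h hs.mass_pos
  set V := v / 2 * volume.real (closedBall x₀ R)
  have hV : 0 < V := mul_pos (by positivity)
    (ENNReal.toReal_pos (measure_closedBall_pos volume x₀ he.R_pos).ne'
      measure_closedBall_lt_top.ne)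
  filter_upwards [eventually_ge_atTop k₁, P.eventually_mul_decay_le M (e := V / 4) (by positivity),
    P.eventually_mul_decay_le_mul_lam (2 * M) (half_pos hV),
    P.eventually_exists_decay_le (hs.n₀_le.trans hNk₁) hs.pos hθ]
    with n hn hdecay hdecay_lam ⟨k, hk₁, hkn, hk, hkn_decay⟩
  by_contra! hlt
  have hT := hescape k n hk₁ hkn (fun j hkj hjn =>
    hs.mass_le_two h.toIsDensity (hNk₁.trans hk₁) hk hlt.le hkj hjn.le) hkn_decay
  have hmass := hs.mul_volume_le_mass (v := v / 2) (hNk₁.trans hn)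
    fun x hx => (div_le_div_of_nonneg_right (hT x hx) zero_le_two).trans (hg n hn x hx)
  have hlam := P.lam_pos n
  have : p.mass n < V / 2 := lt_of_mul_lt_mul_left (by linarith) hlam.le
  linarith [show V = v / 2 * volume.real (closedBall x₀ R) from rfl]

end IsStarted

lemma IsRegular.exists_explores (h : p.IsRegular) : ∃ N M, p.Explores N M := by
  obtain ⟨N, M, hs, x₀, R, δ, he⟩ := h.exists_isStarted
  obtain ⟨k, hk⟩ := eventually_atTop.1
    ((hs.eventually_mul_decay_le_lam_mul_mass h he).and (eventually_ge_atTop N))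
  have hNk := (hk k le_rfl).2
  exact ⟨k, M, ⟨hs.n₀_le.trans hNk, hs.pos, fun n hn => hs.mass_pos n (hNk.trans hn),
    fun n hn => hs.neg_le_g n (hNk.trans hn)⟩, fun n hn =>
      hs.le_q_of_le_mass (hNk.trans hn) (hk n hn).1⟩

end MidasPath

/-! ### Bootstrapping with geometric means -/

section GeometricMean

variable {η a x : ℝ} {s : ℝ → Prop}

/-- The fixed point of `v ↦ a ^ η * v ^ (1 - η)` is `a`, so the supremum of the lower bounds cannot
be less than `a`. -/
lemma of_lt_of_forall_lt_rpow_mul_rpow (hη : 0 < η) (hex : ∃ v, 0 < v ∧ s v) (hs : Antitone s)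
    (hstep : ∀ v C, 0 < v → s v → C < a ^ η * v ^ (1 - η) → s C) (hx : x < a) : s x := by
  by_contra hsx
  obtain ⟨v₀, hv₀, hsv₀⟩ := hex
  have hlt v (hv : s v) : v < x := by
    by_contra! hxv
    exact hsx (hs hxv hv)
  have hbdd : BddAbove {v | 0 < v ∧ s v} := ⟨x, fun v hv => (hlt v hv.2).le⟩
  have hne : {v | 0 < v ∧ s v}.Nonempty := ⟨v₀, hv₀, hsv₀⟩
  set V := sSup {v | 0 < v ∧ s v}
  have hV : 0 < V := hv₀.trans_le (le_csSup hbdd ⟨hv₀, hsv₀⟩)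
  have hVa : V < a := (csSup_le hne fun v hv => (hlt v hv.2).le).trans_lt hx
  have hgrow : V < a ^ η * V ^ (1 - η) :=
    calc V = V ^ η * V ^ (1 - η) := by rw [← Real.rpow_add hV, add_sub_cancel, Real.rpow_one]
      _ < a ^ η * V ^ (1 - η) := by gcongr
  have hcont : ContinuousAt (fun v => a ^ η * v ^ (1 - η)) V :=
    continuousAt_const.mul (Real.continuousAt_rpow_const _ _ (.inl hV.ne'))
  obtain ⟨w, hwV, hw⟩ := exists_Ioc_subset_of_mem_nhds (hcont.eventually (lt_mem_nhds hgrow))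
    ⟨V - 1, sub_one_lt V⟩
  obtain ⟨v, hv, hwv⟩ := exists_lt_of_lt_csSup hne hwV
  obtain ⟨C, hVC, hC⟩ := exists_between (show V < a ^ η * v ^ (1 - η) from
    hw ⟨hwv, le_csSup hbdd hv⟩)
  exact (le_csSup hbdd ⟨hV.trans hVC, hstep v C hv.1 hv.2 hC⟩).not_gt hVC

lemma of_gt_of_forall_rpow_mul_rpow_lt (hη : 0 < η) (ha : 0 < a) (hex : ∃ v, 0 < v ∧ s v)
    (hs : Monotone s) (hstep : ∀ v C, 0 < v → s v → a ^ η * v ^ (1 - η) < C → s C)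
    (hx : a < x) : s x := by
  rw [← inv_inv x]
  obtain ⟨v₀, hv₀, hsv₀⟩ := hex
  refine of_lt_of_forall_lt_rpow_mul_rpow (a := a⁻¹) (s := fun u => 0 < u → s u⁻¹) hη
    ⟨v₀⁻¹, inv_pos.2 hv₀, fun _ => by rwa [inv_inv]⟩
    (fun u u' huu' hu hpos => hs (inv_anti₀ hpos huu') (hu (hpos.trans_le huu')))
    (fun u C hu hsu hC hCpos => hstep u⁻¹ C⁻¹ (inv_pos.2 hu) (hsu hu) ?_)
    (inv_strictAnti₀ ha hx) (inv_pos.2 (ha.trans hx))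
  rw [Real.inv_rpow hu.le, lt_inv_comm₀ (by positivity) hCpos, mul_inv, inv_inv,
    ← Real.inv_rpow ha.le]
  exact hC

lemma rpow_mul_rpow_le_add {b ε : ℝ} (hη : 0 < η) (hη1 : η < 1) (ha : 0 ≤ a) (hb : 0 ≤ b)
    (hε : 0 < ε) : a ^ η * b ^ (1 - η) ≤ ε ^ (-(1 - η) / η) * a + ε * b := by
  have hpow := Real.rpow_pos_of_pos hε (-(1 - η) / η)
  calc a ^ η * b ^ (1 - η) = (ε ^ (-(1 - η) / η) * a) ^ η * (ε * b) ^ (1 - η) := by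
        rw [Real.mul_rpow hpow.le ha, Real.mul_rpow hε.le hb, ← Real.rpow_mul hε.le,
          div_mul_cancel₀ _ hη.ne', Real.rpow_neg hε.le]
        have := (Real.rpow_pos_of_pos hε (1 - η)).ne'
        field_simp
    _ ≤ η * (ε ^ (-(1 - η) / η) * a) + (1 - η) * (ε * b) :=
        Real.geom_mean_le_arith_mean2_weighted hη.le (sub_pos.2 hη1).le (by positivity)
          (by positivity) (by ring)
    _ ≤ _ := add_le_add (mul_le_of_le_one_left (by positivity) hη1.le)
        (mul_le_of_le_one_left (by positivity) (by linarith))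

end GeometricMean

/-! ### Joint limits in time and space -/

lemma eventually_atTop_prod_nhds {α : Type*} [PseudoMetricSpace α] {x₀ : α} {s : ℕ × α → Prop} :
    (∀ᶠ z in atTop ×ˢ 𝓝 x₀, s z) ↔ ∃ N, ∃ r > 0, ∀ n, N ≤ n → ∀ x ∈ ball x₀ r, s (n, x) := by
  rw [(atTop_basis.prod nhds_basis_ball).eventually_iff]
  constructor
  · rintro ⟨⟨N, r⟩, ⟨-, hr⟩, h⟩
    exact ⟨N, r, hr, fun n hn x hx => @h (n, x) ⟨hn, hx⟩⟩
  · rintro ⟨N, r, hr, h⟩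
    exact ⟨(N, r), ⟨trivial, hr⟩, fun z hz => h z.1 hz.1 z.2 hz.2⟩

lemma eventually_atTop_prod_nhds_of_norm_le {E : Type*} [SeminormedAddCommGroup E] {x₀ : E}
    {s : ℕ → E → Prop} (h : ∀ R, ∀ᶠ n in atTop, ∀ x, ‖x‖ ≤ R → s n x) :
    ∀ᶠ z in atTop ×ˢ 𝓝 x₀, s z.1 z.2 :=
  ((h (‖x₀‖ + 1)).prod_mk
    (continuous_norm.continuousAt.eventually (ge_mem_nhds (lt_add_one ‖x₀‖)))).mono
      fun z hz => hz.1 z.2 hz.2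

lemma tendstoUniformlyOn_of_forall_tendsto_prod {ι α β : Type*} [TopologicalSpace α]
    [UniformSpace β] {F : ι → α → β} {f : α → β} {l : Filter ι} {A : Set α} (hA : IsCompact A)
    (hf : Continuous f)
    (h : ∀ x, Tendsto (fun z : ι × α => F z.1 z.2) (l ×ˢ 𝓝 x) (𝓝 (f x))) :
    TendstoUniformlyOn F f l A := by
  rw [← tendstoLocallyUniformlyOn_iff_tendstoUniformlyOn_of_compact hA,
    tendstoLocallyUniformlyOn_iff_forall_tendsto]
  intro x _
  have hjoint := ((hf.tendsto x).comp (tendsto_snd (f := l))).prodMk_nhds (h x)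
  exact (hjoint.mono_left (prod_mono le_rfl nhdsWithin_le_nhds)).mono_right
    (nhds_le_uniformity (f x))

lemma eventually_lt_integral_of_forall_eventually_le {α : Type*} {_ : MeasurableSpace α}
    {μ : Measure α} {f : α → ℝ} {F : ℕ → α → ℝ} (hf : Integrable f μ) (hf0 : ∀ x, 0 ≤ f x)
    (hF : ∀ n, Integrable (F n) μ) (hF0 : ∀ᶠ n in atTop, ∀ x, 0 ≤ F n x)
    (hle : ∀ x, ∀ v < f x, ∀ᶠ n in atTop, v ≤ F n x) {v : ℝ} (hv : v < ∫ x, f x ∂μ) :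
    ∀ᶠ n in atTop, v < ∫ x, F n x ∂μ := by
  rcases lt_or_ge v 0 with hv0 | hv0
  · filter_upwards [hF0] with n hn
    exact hv0.trans_le (integral_nonneg hn)
  have hliminf x : ENNReal.ofReal (f x) ≤ liminf (fun n => ENNReal.ofReal (F n x)) atTop := by
    refine le_of_forall_lt fun c hc => ?_
    obtain ⟨u, hcu, hu⟩ := ENNReal.lt_iff_exists_nnreal_btwn.1 hc
    refine hcu.trans_le (le_liminf_of_le (by isBoundedDefault) ?_)
    filter_upwards [hle x u (ENNReal.lt_ofReal_iff_toReal_lt ENNReal.coe_ne_top |>.1 hu)] with n hn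
    rw [← ENNReal.ofReal_coe_nnreal]
    exact ENNReal.ofReal_le_ofReal hn
  have hlt : ENNReal.ofReal v < liminf (fun n => ∫⁻ x, ENNReal.ofReal (F n x) ∂μ) atTop :=
    calc ENNReal.ofReal v < ENNReal.ofReal (∫ x, f x ∂μ) :=
          (ENNReal.ofReal_lt_ofReal_iff (hv0.trans_lt hv)).2 hv
      _ = ∫⁻ x, ENNReal.ofReal (f x) ∂μ :=
          ofReal_integral_eq_lintegral_ofReal hf (.of_forall hf0)
      _ ≤ ∫⁻ x, liminf (fun n => ENNReal.ofReal (F n x)) atTop ∂μ := lintegral_mono hliminf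
      _ ≤ _ := lintegral_liminf_le' fun n => (hF n).1.aemeasurable.ennreal_ofReal
  filter_upwards [eventually_lt_of_lt_liminf hlt, hF0] with n hn hn0
  rw [← ofReal_integral_eq_lintegral_ofReal (hF n) (.of_forall hn0)] at hn
  exact (ENNReal.ofReal_lt_ofReal_iff_of_nonneg hv0).1 hn

/-! ### Comparison of the estimate with the mean average -/

namespace MidasParams

variable {d : ℕ} (P : MidasParams d)

lemma lam_rpow_le_one {n : ℕ} (hn : P.n₀ ≤ n) : P.lam n ^ (1 - P.η) ≤ 1 :=
  Real.rpow_le_one (P.lam_pos n).le (by linarith [P.lam_le_half n hn]) P.one_sub_η_pos.le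

lemma eventually_mul_decay_le' {m : ℕ} (hm : P.n₀ ≤ m) (D : ℝ) {e : ℝ} (he : 0 < e) :
    ∀ᶠ n in atTop, D * decay P.γ m n ≤ e := by
  have hpos := P.decay_pos m
  filter_upwards [P.eventually_mul_decay_le D (mul_pos he hpos), eventually_ge_atTop m]
    with n hle hn
  rw [← decay_mul_decay hm hn] at hle
  exact le_of_mul_le_mul_right (by linarith) hpos

end MidasParams

namespace MidasPath

variable {d : ℕ} {P : MidasParams d} {p : MidasPath P} {N n : ℕ} {M u v ε : ℝ}
  {x x₀ : EuclideanSpace ℝ (Fin d)}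

namespace Explores

variable (hE : p.Explores N M)
include hE

lemma tempered_eq (hn : N ≤ n) (y : EuclideanSpace ℝ (Fin d)) :
    p.tempered n y = P.f y ^ P.η * p.q n y ^ (1 - P.η) :=
  P.temperedDensity_level_eq (hE.le_q n hn y)

lemma truncPow_weight (hn : N ≤ n) : truncPow P.η (P.level n) (p.weight n) = p.weight n ^ P.η :=
  truncPow_of_le (P.div_le_level n (hE.le_q n hn _))

lemma g_sub_noisyAvg (hn : N ≤ n) (x : EuclideanSpace ℝ (Fin d)) :
    p.g n x - p.noisyAvg (P.kernelAt x) n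
      = decay P.γ N n * (p.g N x - p.noisyAvg (P.kernelAt x) N) :=
  eq_decay_mul (u := fun k => p.g k x - p.noisyAvg (P.kernelAt x) k) (fun k hk => by
    rw [p.g_succ_eq, noisyAvg_succ (hE.n₀_le.trans hk), hE.truncPow_weight hk]
    ring) hn

lemma mass_sub_noisyAvg (hn : N ≤ n) :
    p.mass n - p.noisyAvg (fun _ _ => 1) n
      = decay P.γ N n * (p.mass N - p.noisyAvg (fun _ _ => 1) N) :=
  eq_decay_mul (u := fun k => p.mass k - p.noisyAvg (fun _ _ => 1) k) (fun k hk => by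
    rw [p.mass_succ, noisyAvg_succ (hE.n₀_le.trans hk), hE.truncPow_weight hk]
    ring) hn

lemma eventually_mass_le (h : p.IsRegular) (hε : 0 < ε) : ∀ᶠ n in atTop, p.mass n ≤ 1 + ε := by
  filter_upwards [h.concentratesAt_one (ε / 4) (by positivity), eventually_ge_atTop N,
    P.eventually_mul_decay_le' hE.n₀_le (p.mass N - p.noisyAvg (fun _ _ => 1) N) (half_pos hε)]
    with n hconc hn hdecay
  have hle := (abs_le.1 hconc).2
  nlinarith [hE.mass_sub_noisyAvg hn, h.meanAvg_one_le_one n,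
    P.lam_rpow_le_one (hE.n₀_le.trans hn)]

lemma eventually_g_le (h : p.IsRegular) (hε : 0 < ε) (R : ℝ) : ∀ᶠ n in atTop, ∀ x, ‖x‖ ≤ R →
    p.g n x ≤ (1 + ε) * p.meanAvg (P.kernelAt x) n + ε := by
  obtain ⟨D, hD⟩ := p.exists_forall_abs_g_le N
  filter_upwards [h.concentratesAt_kernelAt (ε / 2) (half_pos hε), eventually_ge_atTop N,
    P.eventually_mul_decay_le' hE.n₀_le D (half_pos hε),
    tendsto_natCast_atTop_atTop.eventually_ge_atTop R] with n hconc hn hdecay hR x hx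
  have hle := (abs_le.1 (hconc x (hx.trans hR))).2
  have hT := h.meanAvg_nonneg (P.isTestKernel_kernelAt x) n
  have hnoisy := h.noisyAvg_nonneg (P.isTestKernel_kernelAt x) N
  nlinarith [hE.g_sub_noisyAvg hn x, P.lam_rpow_le_one (hE.n₀_le.trans hn),
    mul_le_mul_of_nonneg_left ((le_abs_self _).trans (hD x)) (P.decay_pos' hE.n₀_le n).le,
    mul_nonneg (P.decay_pos' hE.n₀_le n).le hnoisy, mul_nonneg hε.le hT]

end Explores

/-! ### The lower bound -/

lemma IsDensity.eventually_le_meanAvg (h : p.IsDensity) {A C : ℝ} (hA0 : 0 < A)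
    (hA : ∀ᶠ z in atTop ×ˢ 𝓝 x₀, A ≤ p.tempered z.1 z.2) (hC : C < A) :
    ∀ᶠ z in atTop ×ˢ 𝓝 x₀, C ≤ p.meanAvg (P.kernelAt z.2) z.1 := by
  obtain ⟨N, r, hr, hball⟩ := eventually_atTop_prod_nhds.1 hA
  obtain ⟨κ, hCκ, hκ⟩ := exists_between ((div_lt_one hA0).2 hC)
  rw [div_lt_iff₀' hA0] at hCκ
  obtain ⟨m, hm⟩ := eventually_atTop.1 (P.eventually_b (eventually_le_setIntegral_ball_kb
    P.integrable_K (half_pos hr) (P.integral_K ▸ hκ)))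
  set k₀ := max P.n₀ (max N m)
  obtain ⟨hk₀, hNk₀, hmk₀⟩ : P.n₀ ≤ k₀ ∧ N ≤ k₀ ∧ m ≤ k₀ := by omega
  obtain ⟨n₁, hn₁⟩ := eventually_atTop.1 ((eventually_ge_atTop k₀).and
    (P.eventually_mul_decay_le' hk₀ (A * κ) (sub_pos.2 hCκ)))
  refine eventually_atTop_prod_nhds.2 ⟨n₁, r / 2, half_pos hr, fun n hn x hx => ?_⟩
  have hgrow : A * κ + decay P.γ k₀ n * (p.meanAvg (P.kernelAt x) k₀ - A * κ)
      ≤ p.meanAvg (P.kernelAt x) n := by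
    refine add_decay_mul_le (fun k hk => P.γ_lt_one k (hk₀.trans hk)) (fun k hk => ?_) (hn₁ n hn).1
    rw [meanAvg_succ (hk₀.trans hk)]
    have := P.γ_nonneg (k + 1)
    gcongr
    refine h.le_integral_tempered_mul_kernelAt (hk₀.trans hk) measurableSet_ball hA0.le
      (fun y hy => hball k (hNk₀.trans hk) y ?_) (hm k (hmk₀.trans hk) x)
    exact ball_subset_ball' (by linarith [mem_ball.1 hx]) hy
  nlinarith [(hn₁ n hn).2, mul_nonneg (P.decay_pos' hk₀ n).le
    (h.meanAvg_nonneg (P.isTestKernel_kernelAt x) k₀)]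

lemma IsRegular.eventually_le_g (h : p.IsRegular)
    (hv : ∀ᶠ z in atTop ×ˢ 𝓝 x₀, v ≤ p.meanAvg (P.kernelAt z.2) z.1) (hu : u < v) :
    ∀ᶠ z in atTop ×ˢ 𝓝 x₀, u ≤ p.g z.1 z.2 := by
  have hlim : Tendsto (fun ε : ℝ => (1 - ε) * v - ε) (𝓝[>] 0) (𝓝 v) :=
    (Continuous.tendsto' (by fun_prop) _ _ (by simp)).mono_left nhdsWithin_le_nhds
  obtain ⟨ε, hεv, hε0, hε1⟩ :=
    ((hlim.eventually (lt_mem_nhds hu)).and (Ioo_mem_nhdsGT zero_lt_one)).exists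
  filter_upwards [hv, eventually_atTop_prod_nhds_of_norm_le
    (h.eventually_one_sub_mul_meanAvg_sub_le hε0),
    (eventually_ge_atTop P.n₀).prod_inl _] with z hT hg hn
  nlinarith [P.lam_rpow_le_one hn]

namespace Explores

variable (hE : p.Explores N M)
include hE

lemma eventually_le_q (h : p.IsRegular)
    (hv : ∀ᶠ z in atTop ×ˢ 𝓝 x₀, v ≤ p.meanAvg (P.kernelAt z.2) z.1) (hu : u < v) :
    ∀ᶠ z in atTop ×ˢ 𝓝 x₀, u ≤ p.q z.1 z.2 := by
  have hN := (eventually_ge_atTop N).prod_inl (𝓝 x₀)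
  rcases le_or_gt u 0 with hu0 | hu0
  · filter_upwards [hN] with z hn
    exact hu0.trans (h.q_nonneg' (hE.n₀_le.trans hn) z.2)
  obtain ⟨w, huw, hwv⟩ := exists_between hu
  have hlim : Tendsto (fun ε : ℝ => (1 - ε) * w - (1 + ε) * u) (𝓝[>] 0) (𝓝 (w - u)) :=
    (Continuous.tendsto' (by fun_prop) _ _ (by simp)).mono_left nhdsWithin_le_nhds
  obtain ⟨ε, hεv, hε0, hε1⟩ :=
    ((hlim.eventually (lt_mem_nhds (sub_pos.2 huw))).and (Ioo_mem_nhdsGT zero_lt_one)).exists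
  filter_upwards [hN, h.eventually_le_g hv hwv,
    (hE.eventually_mass_le h hε0).prod_inl _,
    (P.tendsto_lam.eventually_le_const hε0).prod_inl _] with z hn hg hmass hlam
  have hpos := hE.mass_pos z.1 hn
  have hlam0 := P.lam_pos z.1
  rw [p.q_eq (P.n₀_pos.trans_le (hE.n₀_le.trans hn)), estimate]
  calc u ≤ (1 - ε) * (w / p.mass z.1) := by
        rw [← mul_div_assoc, le_div_iff₀ hpos]
        nlinarith
    _ ≤ (1 - P.lam z.1) * (p.g z.1 z.2 / p.mass z.1) := by
        have := hu0.trans huw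
        gcongr
        linarith
    _ ≤ _ := le_add_of_nonneg_right (mul_nonneg hlam0.le (P.q₀_nonneg _))

lemma eventually_le_tempered (h : p.IsRegular)
    (hv : ∀ᶠ z in atTop ×ˢ 𝓝 x₀, v ≤ p.meanAvg (P.kernelAt z.2) z.1) (hv0 : 0 < v) {a A : ℝ}
    (ha : 0 < a) (haf : a < P.f x₀) (hA : A < a ^ P.η * v ^ (1 - P.η)) :
    ∀ᶠ z in atTop ×ˢ 𝓝 x₀, A ≤ p.tempered z.1 z.2 := by
  have hlim : Tendsto (fun u => a ^ P.η * u ^ (1 - P.η)) (𝓝[<] v)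
      (𝓝 (a ^ P.η * v ^ (1 - P.η))) :=
    (continuousAt_const.mul (Real.continuousAt_rpow_const _ _ (.inl hv0.ne'))).mono_left
      nhdsWithin_le_nhds
  obtain ⟨u, hAu, hu0, huv⟩ :=
    ((hlim.eventually (lt_mem_nhds hA)).and (Ioo_mem_nhdsLT hv0)).exists
  filter_upwards [hE.eventually_le_q h hv huv, (eventually_ge_atTop N).prod_inl _,
    (P.continuous_f.continuousAt.eventually (lt_mem_nhds haf)).prod_inr _]
    with z hq hn hf
  have := P.η_pos
  have := P.one_sub_η_pos
  have := P.f_nonneg z.2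
  rw [hE.tempered_eq hn]
  exact hAu.le.trans (by gcongr)

lemma exists_eventually_le_meanAvg (h : p.IsRegular) (hf : 0 < P.f x₀) :
    ∃ v, 0 < v ∧ ∀ᶠ z in atTop ×ˢ 𝓝 x₀, v ≤ p.meanAvg (P.kernelAt z.2) z.1 := by
  obtain ⟨R, hR, hball⟩ := nhds_basis_closedBall.eventually_iff.1
    (P.continuous_f.continuousAt.eventually (lt_mem_nhds (half_lt_self hf)))
  have he : p.ExploresBall N x₀ R (P.f x₀ / 2) :=
    ⟨hE.n₀_le, hR, half_pos hf, fun x hx => (hball hx).le, fun n hn x _ => hE.le_q n hn x⟩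
  obtain ⟨v, hv, θ, hθ, k₁, hNk₁, -, hescape⟩ := he.exists_escape h hE.mass_pos
  obtain ⟨k₂, hk₂⟩ := eventually_atTop.1 (hE.eventually_mass_le h one_pos)
  obtain ⟨hk₁, hk₂'⟩ : k₁ ≤ max k₁ k₂ ∧ k₂ ≤ max k₁ k₂ := by omega
  obtain ⟨n₁, hn₁⟩ := eventually_atTop.1 ((eventually_ge_atTop (max k₁ k₂)).and
    (P.eventually_mul_decay_le' (hE.n₀_le.trans (hNk₁.trans hk₁)) 1 hθ))
  refine ⟨v, hv, eventually_atTop_prod_nhds.2 ⟨n₁, R, hR, fun n hn x hx => ?_⟩⟩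
  exact hescape _ n hk₁ (hn₁ n hn).1 (fun k hk _ => (hk₂ k (hk₂'.trans hk)).trans (by norm_num))
    ((one_mul _).symm.trans_le (hn₁ n hn).2) x (ball_subset_closedBall hx)

lemma eventually_le_meanAvg_of_lt (h : p.IsRegular) (hv : v < P.f x₀) :
    ∀ᶠ z in atTop ×ˢ 𝓝 x₀, v ≤ p.meanAvg (P.kernelAt z.2) z.1 := by
  rcases lt_or_ge v 0 with hv0 | hv0
  · exact .of_forall fun z => hv0.le.trans (h.meanAvg_nonneg (P.isTestKernel_kernelAt z.2) z.1)
  obtain ⟨a, hva, haf⟩ := exists_between hv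
  have ha := hv0.trans_lt hva
  refine of_lt_of_forall_lt_rpow_mul_rpow (a := a) P.η_pos
    (hE.exists_eventually_le_meanAvg h (ha.trans haf))
    (fun u w huw hw => hw.mono fun z => huw.trans) (fun w C hw0 hw hC => ?_) hva
  obtain ⟨A, hCA, hA⟩ := exists_between (max_lt hC
    (mul_pos (Real.rpow_pos_of_pos ha P.η) (Real.rpow_pos_of_pos hw0 (1 - P.η))))
  obtain ⟨hCA, hA0⟩ := max_lt_iff.1 hCA
  exact h.toIsDensity.eventually_le_meanAvg hA0
    (hE.eventually_le_tempered h hw hw0 ha haf hA) hCA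

lemma eventually_lt_mass (h : p.IsRegular) (hv : v < 1) : ∀ᶠ n in atTop, v < p.mass n := by
  obtain ⟨w, hvw, hw⟩ := exists_between hv
  have hlt : ∀ᶠ n in atTop, w < ∫ x, (p.g n x + M * decay P.γ P.n₀ n * P.q₀ x) := by
    refine eventually_lt_integral_of_forall_eventually_le
      (integrable_of_integral_eq_one P.integral_f) P.f_nonneg (fun n => p.integrable_g_add n _)
      ((eventually_ge_atTop N).mono fun n hn x => neg_le_iff_add_nonneg.1 (hE.neg_le_g n hn x))
      (fun x v hv => ?_) (P.integral_f ▸ hw)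
    obtain ⟨w, hvw, hw⟩ := exists_between hv
    filter_upwards [(h.eventually_le_g (hE.eventually_le_meanAvg_of_lt h hw) hvw).curry]
      with n hn
    exact le_add_of_le_of_nonneg hn.self_of_nhds (mul_nonneg
      (mul_pos hE.pos (P.decay_pos n)).le (P.q₀_nonneg x))
  filter_upwards [hlt, P.eventually_mul_decay_le M (sub_pos.2 hvw)] with n hn hdecay
  rw [p.integral_g_add] at hn
  linarith

end Explores

end MidasPath

namespace MidasPath

variable {d : ℕ} {P : MidasParams d} {p : MidasPath P} {N n : ℕ} {M v ε : ℝ}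
  {x x₀ : EuclideanSpace ℝ (Fin d)}

/-! ### Local boundedness of the mean average -/

namespace IsDensity

variable (h : p.IsDensity)
include h

lemma integral_tempered_mul_kernelAt_le (hn : P.n₀ ≤ n) {δ : ℝ} (hδ : 0 < δ) (hv : 0 ≤ v)
    (hle : ∀ y ∈ ball x δ, p.tempered n y ≤ v) : ∫ y, p.tempered n y * P.kernelAt x n y
      ≤ v + P.CK * δ ^ (-((d : ℝ) + P.rK)) * P.b (n + 1) ^ P.rK := by
  have hCK := P.CK_pos
  have hb := P.b_pos (n + 1)
  set tail := P.CK * δ ^ (-((d : ℝ) + P.rK)) * P.b (n + 1) ^ P.rK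
  have htail : 0 ≤ tail := by positivity
  have hint : Integrable fun y => v * P.kernelAt x n y :=
    (P.integrable_kernelAt x n).const_mul v
  have hint_tail : Integrable fun y => tail * p.tempered n y :=
    (h.integrable_tempered hn).const_mul tail
  calc ∫ y, p.tempered n y * P.kernelAt x n y
      ≤ ∫ y, (v * P.kernelAt x n y + tail * p.tempered n y) := by
        refine integral_mono (h.integrable_tempered_mul (P.isTestKernel_kernelAt x) hn)
          (hint.add hint_tail) fun y => ?_
        have hψ := h.tempered_nonneg hn y
        have hker := P.kernelAt_nonneg x y n
        by_cases hy : y ∈ ball x δ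
        · nlinarith [hle y hy, mul_nonneg htail hψ]
        · have hfar : P.kernelAt x n y ≤ tail := kb_le_of_le_norm P.K_nonneg P.rK_pos P.K_tail hb hδ
            (by rwa [mem_ball', dist_eq_norm, not_lt] at hy)
          nlinarith [mul_nonneg hv hker]
    _ = v * (∫ y, P.kernelAt x n y) + tail * ∫ y, p.tempered n y := by
        rw [integral_add hint hint_tail, integral_const_mul, integral_const_mul]
    _ ≤ v + tail := by
        rw [P.integral_kernelAt, mul_one]
        linarith [mul_le_of_le_one_right htail (h.integral_tempered_le_one hn)]

/-- The weight vanishes at the boundary of the ball at the rate at which the kernel bound blows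
up there, so that smoothing preserves the bound although the kernel sees the outside. -/
lemma rpow_mul_integral_tempered_mul_kernelAt_le (hn : P.n₀ ≤ n) {r E : ℝ} (hE : 0 ≤ E)
    (hle : ∀ y ∈ ball x₀ r, (r - dist y x₀) ^ ((d : ℝ) + P.rK) * p.tempered n y ≤ E)
    (hx : x ∈ ball x₀ r) :
    (r - dist x x₀) ^ ((d : ℝ) + P.rK) * ∫ y, p.tempered n y * P.kernelAt x n y
      ≤ 2 ^ ((d : ℝ) + P.rK) * (E + P.CK) := by
  have hm : 0 < (d : ℝ) + P.rK := add_pos_of_nonneg_of_pos d.cast_nonneg P.rK_pos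
  set m := (d : ℝ) + P.rK
  obtain ⟨ρ, hρ⟩ : ∃ ρ, r - dist x x₀ = 2 * ρ := ⟨(r - dist x x₀) / 2, by ring⟩
  have hρ0 : 0 < ρ := by linarith [mem_ball.1 hx]
  have hρm : 0 < ρ ^ m := Real.rpow_pos_of_pos hρ0 m
  have hnear y (hy : y ∈ ball x ρ) : p.tempered n y ≤ E / ρ ^ m := by
    have hdist : ρ ≤ r - dist y x₀ := by linarith [dist_triangle y x x₀, mem_ball.1 hy]
    rw [le_div_iff₀' hρm]
    refine le_trans ?_ (hle y (by rw [mem_ball]; linarith))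
    have := h.tempered_nonneg hn y
    gcongr
  have hb : P.b (n + 1) ^ P.rK ≤ 1 :=
    Real.rpow_le_one (P.b_pos _).le (P.b_le_one (n + 1) (by omega)) P.rK_pos.le
  have hCK := P.CK_pos
  rw [hρ, Real.mul_rpow two_pos.le hρ0.le]
  calc 2 ^ m * ρ ^ m * ∫ y, p.tempered n y * P.kernelAt x n y
      ≤ 2 ^ m * ρ ^ m * (E / ρ ^ m + P.CK * ρ ^ (-m) * P.b (n + 1) ^ P.rK) := by
        gcongr
        exact h.integral_tempered_mul_kernelAt_le hn hρ0 (by positivity) hnear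
    _ = 2 ^ m * (E + P.CK * P.b (n + 1) ^ P.rK) := by
        rw [Real.rpow_neg hρ0.le]
        field_simp
    _ ≤ 2 ^ m * (E + P.CK) := by
        gcongr
        exact mul_le_of_le_one_right hCK.le hb

lemma meanAvg_kernelAt_le (n : ℕ) (x : EuclideanSpace ℝ (Fin d)) :
    p.meanAvg (P.kernelAt x) n ≤ P.Km / P.b n ^ d := by
  have hKm := P.Km_pos
  refine expAvg_le P.γ_nonneg P.γ_lt_one (div_pos hKm (pow_pos (P.b_pos n) d)).le
    fun k hk hkn => ?_
  have hb := P.b_pos n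
  have hbk := P.antitone_b (Nat.succ_le_of_lt hkn)
  calc ∫ y, p.tempered k y * P.kernelAt x k y
      ≤ ∫ y, p.tempered k y * (P.Km / P.b n ^ d) := by
        refine integral_mono (h.integrable_tempered_mul (P.isTestKernel_kernelAt x) hk)
          ((h.integrable_tempered hk).mul_const _) fun y =>
            mul_le_mul_of_nonneg_left ?_ (h.tempered_nonneg hk y)
        refine (kb_le P.K_le (P.b_pos _).le _).trans ?_
        gcongr
    _ ≤ P.Km / P.b n ^ d := by
        rw [integral_mul_const]
        exact mul_le_of_le_one_left (by positivity) (h.integral_tempered_le_one hk)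

lemma rpow_mul_meanAvg_succ_le {D E : ℝ} (hn : P.n₀ ≤ n) (hE : 0 ≤ E)
    (hle : ∀ y ∈ ball x₀ 2, (2 - dist y x₀) ^ ((d : ℝ) + P.rK) * p.tempered n y ≤ E)
    (hD : 2 ^ ((d : ℝ) + P.rK) * (E + P.CK) ≤ D) (hx : x ∈ ball x₀ 2)
    (hxD : (2 - dist x x₀) ^ ((d : ℝ) + P.rK) * p.meanAvg (P.kernelAt x) n ≤ D) :
    (2 - dist x x₀) ^ ((d : ℝ) + P.rK) * p.meanAvg (P.kernelAt x) (n + 1) ≤ D := by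
  rw [meanAvg_succ hn]
  nlinarith [(h.rpow_mul_integral_tempered_mul_kernelAt_le hn hE hle hx).trans hD,
    P.γ_nonneg (n + 1), P.one_sub_γ_pos hn]

lemma exists_meanAvg_le_of_tempered_le {k₀ : ℕ} (hk₀ : P.n₀ ≤ k₀) {C : ℝ} (hC : 0 ≤ C)
    (hle : ∀ n, k₀ ≤ n → ∀ y ∈ ball x₀ 2,
      p.tempered n y ≤ (2 * 2 ^ ((d : ℝ) + P.rK))⁻¹ * p.meanAvg (P.kernelAt y) n + C) :
    ∃ u > 0, ∀ n, k₀ ≤ n → ∀ x ∈ ball x₀ 1, p.meanAvg (P.kernelAt x) n ≤ u := by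
  have hm : 0 < (d : ℝ) + P.rK := add_pos_of_nonneg_of_pos d.cast_nonneg P.rK_pos
  have hCK := P.CK_pos
  set A := (2 : ℝ) ^ ((d : ℝ) + P.rK)
  have hA : 0 < A := by positivity
  have hweight y (hy : y ∈ ball x₀ 2) : 0 < (2 - dist y x₀) ^ ((d : ℝ) + P.rK) ∧
      (2 - dist y x₀) ^ ((d : ℝ) + P.rK) ≤ A := by
    have hpos : 0 < 2 - dist y x₀ := sub_pos.2 (mem_ball.1 hy)
    exact ⟨Real.rpow_pos_of_pos hpos _,
      Real.rpow_le_rpow hpos.le (sub_le_self _ dist_nonneg) hm.le⟩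
  have hstart := div_pos P.Km_pos (pow_pos (P.b_pos k₀) d)
  obtain ⟨D, hD⟩ : ∃ D, D = A * (P.Km / P.b k₀ ^ d) + 2 * (A * (A * C + P.CK)) := ⟨_, rfl⟩
  have hD0 : 0 < D := by rw [hD]; positivity
  have hbound n (hn : k₀ ≤ n) : ∀ x ∈ ball x₀ 2,
      (2 - dist x x₀) ^ ((d : ℝ) + P.rK) * p.meanAvg (P.kernelAt x) n ≤ D := by
    induction n, hn using Nat.le_induction with
    | base =>
      intro x hx
      calc _ ≤ A * (P.Km / P.b k₀ ^ d) := mul_le_mul (hweight x hx).2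
            (h.meanAvg_kernelAt_le k₀ x) (h.meanAvg_nonneg (P.isTestKernel_kernelAt x) k₀) hA.le
        _ ≤ D := hD.symm ▸ le_add_of_nonneg_right (by positivity)
    | succ n hn ih =>
      intro x hx
      refine h.rpow_mul_meanAvg_succ_le (E := (2 * A)⁻¹ * D + A * C) (hk₀.trans hn)
        (by positivity) (fun y hy => ?_) ?_ hx (ih x hx)
      · nlinarith [mul_le_mul_of_nonneg_left (hle n hn y hy) (hweight y hy).1.le,
          mul_le_mul_of_nonneg_left (ih y hy) (inv_nonneg.2 (mul_pos two_pos hA).le),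
          mul_le_mul_of_nonneg_right (hweight y hy).2 hC]
      · have : A * ((2 * A)⁻¹ * D) = D / 2 := by field_simp
        linarith [mul_pos hA hstart]
  refine ⟨D, hD0, fun n hn x hx => (hbound n hn x (ball_subset_ball one_le_two hx)).trans' ?_⟩
  exact le_mul_of_one_le_left (h.meanAvg_nonneg (P.isTestKernel_kernelAt x) n)
    (Real.one_le_rpow (by linarith [mem_ball.1 hx]) hm.le)

end IsDensity

namespace Explores

variable (hE : p.Explores N M)
include hE

lemma eventually_q_le (h : p.IsRegular) (hε0 : 0 < ε) (hε1 : ε < 1) (R : ℝ) :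
    ∀ᶠ n in atTop, ∀ x, ‖x‖ ≤ R →
      p.q n x ≤ ((1 + ε) * p.meanAvg (P.kernelAt x) n + ε) / (1 - ε) + ε * P.Q := by
  filter_upwards [hE.eventually_g_le h hε0 R, hE.eventually_lt_mass h (sub_lt_self 1 hε0),
    P.tendsto_lam.eventually_le_const hε0, eventually_ge_atTop N] with n hg hmass hlam hn x hx
  have hn₀ := hE.n₀_le.trans hn
  have hT := h.meanAvg_nonneg (P.isTestKernel_kernelAt x) n
  have hε := sub_pos.2 hε1
  have hest : p.estimate n x ≤ ((1 + ε) * p.meanAvg (P.kernelAt x) n + ε) / (1 - ε) :=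
    div_le_div₀ (by positivity) (hg x hx) hε hmass.le
  rw [p.q_eq (P.n₀_pos.trans_le hn₀)]
  refine add_le_add ?_ (mul_le_mul hlam (P.q₀_le x) (P.q₀_nonneg x) hε0.le)
  calc (1 - P.lam n) * p.estimate n x
      ≤ (1 - P.lam n) * (((1 + ε) * p.meanAvg (P.kernelAt x) n + ε) / (1 - ε)) :=
        mul_le_mul_of_nonneg_left hest (by linarith [P.lam_le_half n hn₀])
    _ ≤ _ := mul_le_of_le_one_left (by positivity) (by linarith [P.lam_pos n])

lemma exists_eventually_tempered_le (h : p.IsRegular) {θ : ℝ} (hθ : 0 < θ) (R : ℝ) :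
    ∃ C ≥ 0, ∀ᶠ n in atTop, ∀ x, ‖x‖ ≤ R →
      p.tempered n x ≤ θ * p.meanAvg (P.kernelAt x) n + C := by
  have hF := P.F_nonneg
  have hQ := P.Q_nonneg
  refine ⟨(θ / 2) ^ (-(1 - P.η) / P.η) * P.F + θ / 2 * (1 / 2 + 1 / 3 * P.Q), by positivity, ?_⟩
  filter_upwards [hE.eventually_q_le h (ε := 1 / 3) (by norm_num) (by norm_num) R,
    eventually_ge_atTop N] with n hq hn x hx
  have hq0 := h.q_nonneg' (hE.n₀_le.trans hn) x
  calc p.tempered n x = P.f x ^ P.η * p.q n x ^ (1 - P.η) := hE.tempered_eq hn x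
    _ ≤ (θ / 2) ^ (-(1 - P.η) / P.η) * P.f x + θ / 2 * p.q n x :=
        rpow_mul_rpow_le_add P.η_pos P.η_lt_one (P.f_nonneg x) hq0 (half_pos hθ)
    _ ≤ (θ / 2) ^ (-(1 - P.η) / P.η) * P.F + θ / 2 *
          (((1 + 1 / 3) * p.meanAvg (P.kernelAt x) n + 1 / 3) / (1 - 1 / 3) + 1 / 3 * P.Q) := by
        gcongr
        exacts [P.f_le x, hq x hx]
    _ = _ := by ring

lemma exists_eventually_meanAvg_le (h : p.IsRegular) (x₀ : EuclideanSpace ℝ (Fin d)) :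
    ∃ u, 0 < u ∧ ∀ᶠ z in atTop ×ˢ 𝓝 x₀, p.meanAvg (P.kernelAt z.2) z.1 ≤ u := by
  obtain ⟨C, hC, htempered⟩ := hE.exists_eventually_tempered_le h
    (θ := (2 * 2 ^ ((d : ℝ) + P.rK))⁻¹) (by positivity) (‖x₀‖ + 2)
  obtain ⟨k₀, hk₀⟩ := eventually_atTop.1 (htempered.and (eventually_ge_atTop P.n₀))
  obtain ⟨u, hu, hle⟩ := h.toIsDensity.exists_meanAvg_le_of_tempered_le (hk₀ k₀ le_rfl).2 hC
    fun n hn y hy => (hk₀ n hn).1 y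
      (by linarith [norm_le_norm_add_norm_sub' y x₀, mem_ball_iff_norm.1 hy])
  exact ⟨u, hu, eventually_atTop_prod_nhds.2 ⟨k₀, 1, one_pos, hle⟩⟩

end Explores

end MidasPath

namespace MidasPath

variable {d : ℕ} {P : MidasParams d} {p : MidasPath P} {N : ℕ} {M u v : ℝ}
  {x₀ : EuclideanSpace ℝ (Fin d)}

/-! ### The upper bound and convergence -/

lemma IsDensity.eventually_meanAvg_le (h : p.IsDensity) {A C : ℝ} (hA0 : 0 ≤ A)
    (hA : ∀ᶠ z in atTop ×ˢ 𝓝 x₀, p.tempered z.1 z.2 ≤ A) (hC : A < C) :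
    ∀ᶠ z in atTop ×ˢ 𝓝 x₀, p.meanAvg (P.kernelAt z.2) z.1 ≤ C := by
  obtain ⟨N, r, hr, hball⟩ := eventually_atTop_prod_nhds.1 hA
  obtain ⟨B, hAB, hBC⟩ := exists_between hC
  have htail : Tendsto
      (fun k => A + P.CK * (r / 2) ^ (-((d : ℝ) + P.rK)) * P.b (k + 1) ^ P.rK) atTop (𝓝 A) := by
    have hpow := (P.tendsto_b.comp (tendsto_add_atTop_nat 1)).rpow_const (.inr P.rK_pos.le)
    rw [Real.zero_rpow P.rK_pos.ne'] at hpow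
    simpa using (hpow.const_mul (P.CK * (r / 2) ^ (-((d : ℝ) + P.rK)))).const_add A
  obtain ⟨k₀, hk₀⟩ := eventually_atTop.1 ((htail.eventually_le_const hAB).and
    ((eventually_ge_atTop P.n₀).and (eventually_ge_atTop N)))
  have hn₀ := (hk₀ k₀ le_rfl).2.1
  obtain ⟨n₁, hn₁⟩ := eventually_atTop.1 ((eventually_ge_atTop k₀).and
    (P.eventually_mul_decay_le' hn₀ (P.Km / P.b k₀ ^ d) (sub_pos.2 hBC)))
  refine eventually_atTop_prod_nhds.2 ⟨n₁, r / 2, half_pos hr, fun n hn x hx => ?_⟩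
  have hgrow : p.meanAvg (P.kernelAt x) n
      ≤ B + decay P.γ k₀ n * (p.meanAvg (P.kernelAt x) k₀ - B) := by
    refine le_add_decay_mul (fun k hk => P.γ_lt_one k (hn₀.trans hk)) (fun k hk => ?_) (hn₁ n hn).1
    obtain ⟨hle, hkn₀, hkN⟩ := hk₀ k hk
    rw [meanAvg_succ hkn₀]
    have := P.γ_nonneg (k + 1)
    gcongr
    refine (h.integral_tempered_mul_kernelAt_le hkn₀ (half_pos hr) hA0 fun y hy =>
      hball k hkN y ?_).trans hle
    exact ball_subset_ball' (by linarith [mem_ball.1 hx]) hy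
  nlinarith [(hn₁ n hn).2, P.decay_pos' hn₀ n, hA0.trans hAB.le, mul_le_mul_of_nonneg_left
    (h.meanAvg_kernelAt_le k₀ x) (P.decay_pos' hn₀ n).le]

namespace Explores

variable (hE : p.Explores N M)
include hE

lemma eventually_prod_q_le (h : p.IsRegular)
    (hv : ∀ᶠ z in atTop ×ˢ 𝓝 x₀, p.meanAvg (P.kernelAt z.2) z.1 ≤ v) (hu : v < u) :
    ∀ᶠ z in atTop ×ˢ 𝓝 x₀, p.q z.1 z.2 ≤ u := by
  have hlim : Tendsto (fun ε : ℝ => ((1 + ε) * v + ε) / (1 - ε) + ε * P.Q) (𝓝[>] 0) (𝓝 v) := by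
    refine Tendsto.mono_left ?_ nhdsWithin_le_nhds
    have : ContinuousAt (fun ε : ℝ => ((1 + ε) * v + ε) / (1 - ε) + ε * P.Q) 0 := by
      fun_prop (disch := norm_num)
    simpa using this.tendsto
  obtain ⟨ε, hεu, hε0, hε1⟩ :=
    ((hlim.eventually (gt_mem_nhds hu)).and (Ioo_mem_nhdsGT zero_lt_one)).exists
  filter_upwards [hv, eventually_atTop_prod_nhds_of_norm_le (hE.eventually_q_le h hε0 hε1)]
    with z hT hq
  refine hq.trans (le_trans ?_ hεu.le)
  have := sub_pos.2 hε1
  gcongr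

lemma eventually_tempered_le (h : p.IsRegular)
    (hv : ∀ᶠ z in atTop ×ˢ 𝓝 x₀, p.meanAvg (P.kernelAt z.2) z.1 ≤ v) (hv0 : 0 < v) {a A : ℝ}
    (hfa : P.f x₀ < a) (hA : a ^ P.η * v ^ (1 - P.η) < A) :
    ∀ᶠ z in atTop ×ˢ 𝓝 x₀, p.tempered z.1 z.2 ≤ A := by
  have hlim : Tendsto (fun u => a ^ P.η * u ^ (1 - P.η)) (𝓝[>] v)
      (𝓝 (a ^ P.η * v ^ (1 - P.η))) :=
    (continuousAt_const.mul (Real.continuousAt_rpow_const _ _ (.inl hv0.ne'))).mono_left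
      nhdsWithin_le_nhds
  obtain ⟨u, huA, hvu⟩ := ((hlim.eventually (gt_mem_nhds hA)).and self_mem_nhdsWithin).exists
  filter_upwards [hE.eventually_prod_q_le h hv hvu, (eventually_ge_atTop N).prod_inl _,
    (P.continuous_f.continuousAt.eventually (gt_mem_nhds hfa)).prod_inr _]
    with z hq hn hf
  have := P.η_pos
  have := P.one_sub_η_pos
  have hf0 := P.f_nonneg z.2
  have := hf0.trans hf.le
  have := h.q_nonneg' (hE.n₀_le.trans hn) z.2
  rw [hE.tempered_eq hn]
  exact le_trans (by gcongr) huA.le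

lemma eventually_meanAvg_le_of_lt (h : p.IsRegular) (hv : P.f x₀ < v) :
    ∀ᶠ z in atTop ×ˢ 𝓝 x₀, p.meanAvg (P.kernelAt z.2) z.1 ≤ v := by
  obtain ⟨a, hfa, hav⟩ := exists_between hv
  have ha := (P.f_nonneg x₀).trans_lt hfa
  refine of_gt_of_forall_rpow_mul_rpow_lt (a := a) P.η_pos ha
    (hE.exists_eventually_meanAvg_le h x₀)
    (fun u w huw hu => hu.mono fun z hz => hz.trans huw) (fun w C hw0 hw hC => ?_) hav
  obtain ⟨A, hA, hAC⟩ := exists_between hC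
  exact h.toIsDensity.eventually_meanAvg_le (hA.le.trans' (by positivity))
    (hE.eventually_tempered_le h hw hw0 hfa hA) hAC

lemma tendsto_q (h : p.IsRegular) (x : EuclideanSpace ℝ (Fin d)) :
    Tendsto (fun z : ℕ × EuclideanSpace ℝ (Fin d) => p.q z.1 z.2) (atTop ×ˢ 𝓝 x)
      (𝓝 (P.f x)) := by
  refine tendsto_order.2 ⟨fun u hu => ?_, fun u hu => ?_⟩
  · obtain ⟨w, huw, hw⟩ := exists_between hu
    obtain ⟨v, hwv, hv⟩ := exists_between hw
    exact (hE.eventually_le_q h (hE.eventually_le_meanAvg_of_lt h hv) hwv).mono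
      fun z => huw.trans_le
  · obtain ⟨w, hw, hwu⟩ := exists_between hu
    obtain ⟨v, hv, hvw⟩ := exists_between hw
    exact (hE.eventually_prod_q_le h (hE.eventually_meanAvg_le_of_lt h hv) hvw).mono
      fun z hz => hz.trans_lt hwu

end Explores

theorem IsRegular.tendstoUniformlyOn_q (h : p.IsRegular) {A : Set (EuclideanSpace ℝ (Fin d))}
    (hA : IsCompact A) : TendstoUniformlyOn p.q P.f atTop A := by
  obtain ⟨N, M, hE⟩ := h.exists_explores
  exact tendstoUniformlyOn_of_forall_tendsto_prod hA P.continuous_f (hE.tendsto_q h)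

end MidasPath

theorem MidasAlgorithm.ae_tendstoUniformlyOn_q {Ω : Type*} [MeasurableSpace Ω] {μ : Measure Ω}
    [IsProbabilityMeasure μ] {d : ℕ} {P : MidasParams d} (M : MidasAlgorithm μ P) :
    ∀ᵐ ω ∂μ, ∀ A, IsCompact A → TendstoUniformlyOn (M.path ω).q P.f atTop A :=
  M.ae_isRegular.mono fun _ h _ => h.tendstoUniformlyOn_q

lemma mul_pow_le_rpow_mul_rpow {η x y : ℝ} (hη : η < 1 / 2) (hx0 : 0 < x) (hx1 : x ≤ 1)
    (hy0 : 0 < y) (hy1 : y ≤ 1) (d : ℕ) :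
    x ^ (2 * (1 - η)) * y ^ (2 * (d : ℝ) * (1 - η)) ≤ x * y ^ d := by
  have hx : x ^ (2 * (1 - η)) ≤ x ^ (1 : ℝ) :=
    Real.rpow_le_rpow_of_exponent_ge hx0 hx1 (by linarith)
  have hy : y ^ (2 * (d : ℝ) * (1 - η)) ≤ y ^ (d : ℝ) :=
    Real.rpow_le_rpow_of_exponent_ge hy0 hy1 (by nlinarith [d.cast_nonneg (α := ℝ)])
  rw [Real.rpow_one] at hx
  rw [Real.rpow_natCast] at hy
  gcongr

lemma tendsto_mul_log_div_of_tendsto {Cγ : ℝ} {γ D E : ℕ → ℝ} (hγ : ∀ n, 0 < γ n)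
    (hγinv : ∀ n : ℕ, 1 ≤ n → (n : ℝ)⁻¹ ≤ Cγ * γ n) (hD : ∀ n, 0 < D n)
    (hDE : ∀ᶠ n in atTop, D n ≤ E n)
    (hlim : Tendsto (fun n : ℕ => (n : ℝ) * γ n ^ 2 * Real.log n / D n) atTop (𝓝 0)) :
    Tendsto (fun n : ℕ => γ n * Real.log n / E n) atTop (𝓝 0) := by
  have hlim := hlim.const_mul Cγ
  rw [mul_zero] at hlim
  refine squeeze_zero' ?_ ?_ hlim
  · filter_upwards [hDE] with n hn
    exact div_nonneg (mul_nonneg (hγ n).le (Real.log_natCast_nonneg n)) ((hD n).le.trans hn)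
  filter_upwards [hDE, eventually_ge_atTop 1] with n hDEn hn
  have hlog : 0 ≤ γ n * Real.log n := mul_nonneg (hγ n).le (Real.log_natCast_nonneg n)
  have hγn : 1 ≤ Cγ * γ n * n := (inv_le_iff_one_le_mul₀ (by exact_mod_cast hn)).1 (hγinv n hn)
  have hDn := hD n
  calc γ n * Real.log n / E n ≤ γ n * Real.log n / D n := by gcongr
    _ ≤ Cγ * γ n * n * (γ n * Real.log n) / D n :=
        div_le_div_of_nonneg_right (le_mul_of_one_le_left hlog hγn) hDn.le
    _ = Cγ * ((n : ℝ) * γ n ^ 2 * Real.log n / D n) := by ring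

lemma tendsto_mul_log_div_mul_pow {d : ℕ} {η Cγ : ℝ} {γ b lam : ℕ → ℝ} (hγ : ∀ n, 0 < γ n)
    (hb : ∀ n, 0 < b n) (hlam : ∀ n, 0 < lam n) (hb0 : Tendsto b atTop (𝓝 0))
    (hlam0 : Tendsto lam atTop (𝓝 0)) (hγinv : ∀ n : ℕ, 1 ≤ n → (n : ℝ)⁻¹ ≤ Cγ * γ n)
    (hge : 1 / 2 ≤ η → Tendsto (fun n : ℕ => (n : ℝ) * γ n ^ 2 * Real.log n / (lam n * b n ^ d))
      atTop (𝓝 0))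
    (hlt : η < 1 / 2 → Tendsto (fun n : ℕ => (n : ℝ) * γ n ^ 2 * Real.log n
      / (lam n ^ (2 * (1 - η)) * b n ^ (2 * (d : ℝ) * (1 - η)))) atTop (𝓝 0)) :
    Tendsto (fun n : ℕ => γ n * Real.log n / (lam n * b n ^ d)) atTop (𝓝 0) := by
  rcases le_or_gt (1 / 2) η with hη | hη
  · exact tendsto_mul_log_div_of_tendsto hγ hγinv (fun n => mul_pos (hlam n) (pow_pos (hb n) d))
      (.of_forall fun n => le_rfl) (hge hη)
  · refine tendsto_mul_log_div_of_tendsto hγ hγinv (fun n => mul_pos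
      (Real.rpow_pos_of_pos (hlam n) _) (Real.rpow_pos_of_pos (hb n) _)) ?_ (hlt hη)
    filter_upwards [hlam0.eventually_le_const one_pos, hb0.eventually_le_const one_pos]
      with n hlam1 hb1
    exact mul_pow_le_rpow_mul_rpow hη (hlam n) hlam1 (hb n) hb1 d

theorem midas_uniform_convergence_general
    {Ω : Type*} [MeasurableSpace Ω] (μ : Measure Ω) [IsProbabilityMeasure μ]
    {d : ℕ} {η : ℝ} (hη : 0 < η) (hη1 : η < 1)
    (f q0 K : EuclideanSpace ℝ (Fin d) → ℝ)
    (γ b lam : ℕ → ℝ)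
    (X : ℕ → Ω → EuclideanSpace ℝ (Fin d))
    (w : ℕ → Ω → ℝ)
    (g q : ℕ → Ω → EuclideanSpace ℝ (Fin d) → ℝ)
    (hf0 : ∀ x, 0 ≤ f x) (hfint1 : (∫ x, f x) = 1)
    (hK0 : ∀ x, 0 ≤ K x) (hKint1 : (∫ x, K x) = 1)
    (hγpos : ∀ n, 0 < γ n) (hbpos : ∀ n, 0 < b n) (hlampos : ∀ n, 0 < lam n)
    (hX : ∀ n, Measurable (X n))
    (hg0 : ∀ (ω : Ω) x, g 0 ω x = 0)
    (hw : ∀ n (ω : Ω), w (n + 1) ω = f (X (n + 1) ω) / q n ω (X (n + 1) ω))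
    (hgrec : ∀ n (ω : Ω) x, g (n + 1) ω x = (1 - γ (n + 1)) * g n ω x
      + γ (n + 1) * w (n + 1) ω ^ η * kb K (b (n + 1)) (x - X (n + 1) ω))
    (hqrec : ∀ n (ω : Ω) x, q (n + 1) ω x
      = (1 - lam (n + 1)) * (g (n + 1) ω x / (∫ y, g (n + 1) ω y)) + lam (n + 1) * q0 x)
    (hpolicy : ∀ n (φ : EuclideanSpace ℝ (Fin d) → ℝ), Continuous φ →
      (∃ C, ∀ x, |φ x| ≤ C) →
      (μ[fun ω => φ (X (n + 1) ω) | natFilt X n]) =ᵐ[μ] (fun ω => ∫ y, φ y * q n ω y))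
    (hadapt : ∀ n x, Measurable[natFilt X n] fun ω => q n ω x)
    (hfbdd : ∃ C, ∀ x, f x ≤ C) (hfcont : Continuous f)
    (hq00 : ∀ x, 0 ≤ q0 x) (hq0bdd : ∃ C, ∀ x, q0 x ≤ C) (hq0cont : Continuous q0)
    (hq0int1 : (∫ x, q0 x) = 1)
    (hfq0 : ∃ c > (0 : ℝ), ∀ x, c * f x ≤ q0 x)
    (hKbdd : ∃ C, ∀ x, K x ≤ C) (hKlip : ∃ L : NNReal, LipschitzWith L K)
    (hKpos : 0 < K 0)
    (hKtail : ∃ rK > (0 : ℝ), ∃ CK, ∀ x, (1 + ‖x‖ ^ ((d : ℝ) + rK)) * K x ≤ CK)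
    (hγ0 : Tendsto γ atTop (𝓝 0))
    (hbanti : Antitone b) (hb0 : Tendsto b atTop (𝓝 0))
    (hlamanti : Antitone lam) (hlam0 : Tendsto lam atTop (𝓝 0))
    (hγinv : ∃ Cγ, ∀ n : ℕ, 1 ≤ n → (n : ℝ)⁻¹ ≤ Cγ * γ n)
    (hγsub : ∀ᶠ n in atTop, γ n - γ (n + 1) ≤ γ n * γ (n + 1))
    (hrate : Tendsto (fun n : ℕ => γ n * Real.log n / (lam n * b n ^ d)) atTop (𝓝 0)) :
    ∀ᵐ ω ∂μ, ∀ A, IsCompact A → TendstoUniformlyOn (fun n x => q n ω x) f atTop A := by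
  obtain ⟨F, hF⟩ := hfbdd
  obtain ⟨Q, hQ⟩ := hq0bdd
  obtain ⟨c, hc, hcf⟩ := hfq0
  obtain ⟨Km, hKm⟩ := hKbdd
  obtain ⟨L, hL⟩ := hKlip
  obtain ⟨rK, hrK, CK, hCK⟩ := hKtail
  obtain ⟨Cγ, hCγ⟩ := hγinv
  obtain ⟨n₀, hn₀⟩ := eventually_atTop.1 (hγsub.and ((eventually_ge_atTop 1).and
    ((hγ0.eventually_le_const one_half_pos).and
      ((hlam0.eventually_le_const one_half_pos).and (hb0.eventually_le_const one_pos)))))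
  simp only [imp_and, forall_and] at hn₀
  obtain ⟨hsub, hone, hγhalf, hlamhalf, hb1⟩ := hn₀
  let P : MidasParams d :=
    { η := η, f := f, q₀ := q0, K := K, γ := γ, b := b, lam := lam, n₀ := n₀, c := c, F := F
      Q := Q, Km := Km, L := L, rK := rK, CK := CK, Cγ := Cγ, η_pos := hη, η_lt_one := hη1
      f_nonneg := hf0, f_le := hF, continuous_f := hfcont, integral_f := hfint1
      q₀_nonneg := hq00, q₀_le := hQ, continuous_q₀ := hq0cont, integral_q₀ := hq0int1
      c_pos := hc, c_mul_f_le := hcf, K_nonneg := hK0, K_le := hKm, K_zero_pos := hKpos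
      lipschitz_K := hL, integral_K := hKint1, rK_pos := hrK, K_tail := hCK, γ_pos := hγpos
      b_pos := hbpos, lam_pos := hlampos, antitone_b := hbanti
      tendsto_b := hb0, antitone_lam := hlamanti, tendsto_lam := hlam0, inv_le_γ := hCγ
      tendsto_rate := hrate, n₀_pos := hone n₀ le_rfl, γ_le_half := hγhalf
      lam_le_half := hlamhalf, b_le_one := hb1
      γ_mul_le := fun n hn => by linarith [hsub n hn] }
  let M : MidasAlgorithm μ P :=
    { path := fun ω =>
        { X := fun n => X n ω, g := fun n => g n ω, q := fun n => q n ω, g_zero := hg0 ω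
          g_succ := fun n x => by rw [hgrec, hw, mul_assoc]; rfl
          q_succ := fun n => hqrec n ω }
      measurable_X := hX, measurable_q := hadapt
      condExp_eq := fun n φ => hpolicy n φ φ.continuous ⟨‖φ‖, φ.norm_coe_le_norm⟩ }
  exact M.ae_tendstoUniformlyOn_q

theorem midas_uniform_convergence
    {Ω : Type*} [MeasurableSpace Ω] (μ : Measure Ω) [IsProbabilityMeasure μ]
    {d : ℕ} (hd : 1 ≤ d) {η : ℝ} (hη : 0 < η) (hη1 : η < 1)
    (f q0 K : EuclideanSpace ℝ (Fin d) → ℝ)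
    (γ b lam : ℕ → ℝ)
    (X : ℕ → Ω → EuclideanSpace ℝ (Fin d))
    (w : ℕ → Ω → ℝ)
    (g q : ℕ → Ω → EuclideanSpace ℝ (Fin d) → ℝ)
    (hf0 : ∀ x, 0 ≤ f x) (hfint1 : (∫ x, f x) = 1)
    (hK0 : ∀ x, 0 ≤ K x) (hKint1 : (∫ x, K x) = 1)
    (hγpos : ∀ n, 0 < γ n) (hbpos : ∀ n, 0 < b n) (hlampos : ∀ n, 0 < lam n)
    (hX : ∀ n, Measurable (X n))
    (hqmeas : ∀ n, Measurable (Function.uncurry (q n)))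
    (hg0 : ∀ (ω : Ω) x, g 0 ω x = 0)
    (hw : ∀ n (ω : Ω), w (n+1) ω = f (X (n+1) ω) / q n ω (X (n+1) ω))
    (hgrec : ∀ n (ω : Ω) x, g (n+1) ω x
      = (1 - γ (n+1)) * g n ω x
        + γ (n+1) * w (n+1) ω ^ η * kb K (b (n+1)) (x - X (n+1) ω))
    (hqrec : ∀ n (ω : Ω) x, q (n+1) ω x
      = (1 - lam (n+1)) * (g (n+1) ω x / (∫ y, g (n+1) ω y)) + lam (n+1) * q0 x)
    (hpolicy : ∀ n (φ : EuclideanSpace ℝ (Fin d) → ℝ), Continuous φ →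
      (∃ C, ∀ x, |φ x| ≤ C) →
      (μ[fun ω => φ (X (n+1) ω) | natFilt X n]) =ᵐ[μ] (fun ω => ∫ y, φ y * q n ω y))
    (hadapt : ∀ n x, Measurable[natFilt X n] fun ω => q n ω x)
    (hfbdd : ∃ C, ∀ x, f x ≤ C) (hfcont : Continuous f)
    (hfInt : Integrable f)
    (hq00 : ∀ x, 0 ≤ q0 x) (hq0bdd : ∃ C, ∀ x, q0 x ≤ C) (hq0cont : Continuous q0)
    (hq0Int : Integrable q0) (hq0int1 : (∫ x, q0 x) = 1)
    (hftail : ∃ r > (0:ℝ), ∃ Cf > (0:ℝ), ∀ t : ℝ, 0 < t →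
      (∫ x in {x : EuclideanSpace ℝ (Fin d) | t < ‖x‖}, f x) ≤ Cf * t ^ (-r))
    (hfq0 : ∃ c > (0:ℝ), ∀ x, c * f x ≤ q0 x)
    (hKbdd : ∃ C, ∀ x, K x ≤ C) (hKlip : ∃ L : NNReal, LipschitzWith L K)
    (hKpos : 0 < K 0)
    (hKtail : ∃ rK > (0:ℝ), ∃ CK > (0:ℝ), ∀ x,
      (1 + ‖x‖ ^ ((d : ℝ) + rK)) * K x ≤ CK)
    (hγanti : Antitone γ) (hγ0 : Tendsto γ atTop (nhds 0))
    (hbanti : Antitone b) (hb0 : Tendsto b atTop (nhds 0))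
    (hlamanti : Antitone lam) (hlam0 : Tendsto lam atTop (nhds 0))
    (hγrate : ∃ Cγ > (0:ℝ), ∃ nγ : ℕ, 1 ≤ nγ ∧
      (∀ n : ℕ, 1 ≤ n → ((n : ℝ))⁻¹ ≤ Cγ * γ n) ∧
      (∀ n : ℕ, nγ ≤ n → γ n - γ (n+1) ≤ γ n * γ (n+1)))
    (hγsq : Summable fun n => γ n ^ 2)
    (hrate1 : 1/2 ≤ η → Tendsto
      (fun n : ℕ => (n : ℝ) * γ n ^ 2 * Real.log n / (lam n * b n ^ d))
      atTop (nhds 0))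
    (hrate2 : η < 1/2 → Tendsto
      (fun n : ℕ => (n : ℝ) * γ n ^ 2 * Real.log n
        / (lam n ^ (2 * (1 - η)) * b n ^ (2 * (d : ℝ) * (1 - η))))
      atTop (nhds 0))
    :
    ∀ A : Set (EuclideanSpace ℝ (Fin d)), IsCompact A →
      ∀ᵐ ω ∂μ, TendstoUniformlyOn (fun n x => q n ω x) f atTop A := by
  obtain ⟨rK, hrK, CK, -, hCK⟩ := hKtail
  obtain ⟨Cγ, -, nγ, -, hγinv, hγsub⟩ := hγrate
  exact fun A hA => (midas_uniform_convergence_general μ hη hη1 f q0 K γ b lam X w g q hf0 hfint1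
    hK0 hKint1 hγpos hbpos hlampos hX hg0 hw hgrec hqrec hpolicy hadapt hfbdd hfcont hq00 hq0bdd
    hq0cont hq0int1 hfq0 hKbdd hKlip hKpos ⟨rK, hrK, CK, hCK⟩ hγ0 hbanti hb0 hlamanti hlam0
    ⟨Cγ, hγinv⟩ (eventually_atTop.2 ⟨nγ, hγsub⟩) (tendsto_mul_log_div_mul_pow hγpos hbpos hlampos
      hb0 hlam0 hγinv hrate1 hrate2)).mono fun _ h => h A hA
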